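/- Let H²_β be the weighted Hardy space induced by a weight sequence w = (w_k)_{k≥1} with w_k → 1, and let φ_{z₀}(z) = (z₀ − z)/(1 − conj(z₀)z) for z₀ ∈ 𝔻. Then M_z is similar to M_{φ_{z₀}} on H²_β if and only if M_z is similar to M_{φ_{z₀}} on H²_{β⁻¹}. -/

import Mathlib

noncomputable section

open Complex Filter Topology

/-- The sequence-space (ℓ²) model of a weighted Hardy space `H²_β`.
An element `a : H2` represents the analytic function whose `k`-th Taylor
coefficient is `a k / β k` (so that `‖a‖` is exactly the `H²_β`-norm). -/
abbrev H2 : Type := lp (fun _ : ℕ => ℂ) 2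

/-- The direct sum (ℓ²-sense) of `m` copies of `H2`. -/
abbrev Hm (m : ℕ) : Type := PiLp 2 (fun _ : Fin m => H2)

/-- The open unit disk 𝔻 ⊆ ℂ. -/
def unitDisk : Set ℂ := Metric.ball 0 1

/-- `β_0 = 1` and `β_k = ∏_{j=1}^k w_j`. -/
def betaSeq (w : ℕ → ℝ) (k : ℕ) : ℝ := ∏ j ∈ Finset.Icc 1 k, w j

/-- The analytic function on 𝔻 represented by the vector `a` in the model of `H²_β`:
`f(z) = ∑_k (a k / β k) z^k`. -/
def repFun (β : ℕ → ℝ) (a : H2) (z : ℂ) : ℂ := ∑' k, (a k / (β k : ℂ)) * z ^ k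

/-- `T` is (the ℓ²-model of) the multiplication operator `M_g` on `H²_β`.
Existence of such a `T` says precisely that `M_g` is bounded on `H²_β`. -/
def RepMul (β : ℕ → ℝ) (g : ℂ → ℂ) (T : H2 →L[ℂ] H2) : Prop :=
  ∀ a : H2, ∀ z ∈ unitDisk, repFun β (T a) z = g z * repFun β a z

/-- `T` is (the ℓ²-model of) the composition operator `C_ψ` on `H²_β`.
Existence of such a `T` says precisely that `C_ψ` is bounded on `H²_β`. -/
def RepComp (β : ℕ → ℝ) (ψ : ℂ → ℂ) (T : H2 →L[ℂ] H2) : Prop :=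
  ∀ a : H2, ∀ z ∈ unitDisk, repFun β (T a) z = repFun β a (ψ z)

/-- The Möbius factor `φ_{z₀}(z) = (z₀ - z)/(1 - conj z₀ · z)`. -/
def mobius (z₀ z : ℂ) : ℂ := (z₀ - z) / (1 - (starRingEnd ℂ) z₀ * z)

/-- `φ` belongs to `Aut(𝔻)`, i.e. `φ(z) = e^{iθ}(z₀ - z)/(1 - conj z₀ · z)`. -/
def IsDiskAut (φ : ℂ → ℂ) : Prop :=
  ∃ (θ : ℝ) (z₀ : ℂ), z₀ ∈ unitDisk ∧
    ∀ z, φ z = Complex.exp (θ * Complex.I) * mobius z₀ z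

/-- `B` is a finite Blaschke product of order `m`. -/
def IsBlaschke (m : ℕ) (B : ℂ → ℂ) : Prop :=
  ∃ (θ : ℝ) (zs : Fin m → ℂ), (∀ j, zs j ∈ unitDisk) ∧
    ∀ z, B z = Complex.exp (θ * Complex.I) * ∏ j, mobius (zs j) z

/-- `w` is a positive weight sequence tending to `1` such that the weighted Hardy
space `H²_β` is of polynomial growth: `sup_k (k+1)|w_k - 1| < ∞`. -/
def PolyGrowth (w : ℕ → ℝ) : Prop :=
  (∀ k, 1 ≤ k → 0 < w k) ∧ Tendsto w atTop (nhds 1) ∧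
    ∃ M : ℝ, ∀ k : ℕ, 1 ≤ k → ((k : ℝ) + 1) * |w k - 1| ≤ M

/-- `f` is analytic on an open neighbourhood of the closed unit disk. -/
def AnalyticOnClosedDisk (f : ℂ → ℂ) : Prop :=
  ∃ U : Set ℂ, IsOpen U ∧ Metric.closedBall (0:ℂ) 1 ⊆ U ∧ AnalyticOnNhd ℂ f U

/-- `M_z` is similar to `M_φ` on the weighted Hardy space with weights `β`. -/
def MzSimMphi (β : ℕ → ℝ) (φ : ℂ → ℂ) : Prop :=
  ∃ Tz Tφ : H2 →L[ℂ] H2, RepMul β (fun z => z) Tz ∧ RepMul β φ Tφ ∧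
    ∃ X : H2 ≃L[ℂ] H2, ∀ a : H2, X (Tz a) = Tφ (X a)

/-!
An invertible operator intertwining `M_z` and `M_φ` is a weighted composition operator
`F ↦ G · (F ∘ φ)`; as `φ ∘ φ = id`, its inverse is `F ↦ (H · F) ∘ φ` with `G · H = 1`.
Testing on reproducing kernels bounds `|G(z)|² k(φ z)` by a multiple of `k(z)` and `|H(z)|² k(z)` by
a multiple of `k(φ z)`, where `k(z)` is the squared norm of the evaluation functional at `z`.
Averaging logarithms over circles, on which the harmonic function `log |G|` contributes a constant,
bounds the convexity defect of `log k` near the unit circle; hence `k` and `k ∘ φ` are comparable,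
and `G` and `H` are bounded functions.

The matrix of `F ↦ (F ∘ φ) / (1 - conj a · z)` is unitary up to a scalar on the unweighted space,
and its columns at indices `l` and `l'` with `|l - l'| ≤ δ l` have absolute values with a
non-negligible overlap. Boundedness of `G` and `H` transfers this to the intertwiner and forces
`β_l` and `β_l'` to be comparable, so that `β` is doubling.

The doubling condition is invariant under `β ↦ 1 / β`. Conversely, a doubling weight is comparable
to a sum of multiples of the weights `min (y ^ p) (y ^ (-p))` with `y = (k + 1) / 2 ^ i`. By
differentiation `C_φ` is bounded for the weights `(k + 1) ^ (± p)`, hence, by splitting series into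
two parts, for their minimum and for `β`; and `C_φ` intertwines `M_z` and `M_φ`.
-/

namespace WeightedHardy

open PowerSeries

variable {F G H : ℂ⟦X⟧} {z a : ℂ} {b β : ℕ → ℝ} {r x y K M N : ℝ}

lemma coeff_mul_mul_pow (F G : ℂ⟦X⟧) (z : ℂ) (n : ℕ) :
    coeff n (F * G) * z ^ n = ∑ kl ∈ Finset.HasAntidiagonal.antidiagonal n,
      coeff kl.1 F * z ^ kl.1 * (coeff kl.2 G * z ^ kl.2) := by
  rw [coeff_mul, Finset.sum_mul]
  refine Finset.sum_congr rfl fun kl h => ?_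
  rw [← Finset.HasAntidiagonal.mem_antidiagonal.1 h, pow_add]
  ring

/-- The algebra of power series converging on the open unit disk, i.e. of analytic functions
on `𝔻` encoded by their Taylor coefficients at `0`. -/
def diskSeries : Subalgebra ℂ ℂ⟦X⟧ where
  carrier := {F | ∀ r : ℝ, 0 ≤ r → r < 1 → Summable fun k => ‖coeff k F‖ * r ^ k}
  mul_mem' {F G} hF hG r hr₀ hr₁ := by
    have hF' : Summable fun k => ‖coeff k F * (r : ℂ) ^ k‖ := by
      simpa [abs_of_nonneg hr₀] using hF r hr₀ hr₁
    have hG' : Summable fun k => ‖coeff k G * (r : ℂ) ^ k‖ := by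
      simpa [abs_of_nonneg hr₀] using hG r hr₀ hr₁
    refine (summable_norm_sum_mul_antidiagonal_of_summable_norm hF' hG').congr fun n => ?_
    rw [← coeff_mul_mul_pow, norm_mul, norm_pow, Complex.norm_real, Real.norm_of_nonneg hr₀]
  add_mem' {F G} hF hG r hr₀ hr₁ := by
    refine Summable.of_nonneg_of_le (fun k => by positivity) (fun k => ?_)
      ((hF r hr₀ hr₁).add (hG r hr₀ hr₁))
    rw [map_add, ← add_mul]
    gcongr
    exact norm_add_le _ _
  algebraMap_mem' c r _ _ := summable_of_ne_finset_zero (s := {0}) fun k hk => by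
    simp [coeff_C, Finset.notMem_singleton.1 hk]

/-- The value at `z` of the analytic function with Taylor series `F`. Outside the disk of
convergence this is a junk value. -/
def diskEval (F : ℂ⟦X⟧) (z : ℂ) : ℂ := ∑' k, coeff k F * z ^ k

lemma C_mem_diskSeries (c : ℂ) : C c ∈ diskSeries := diskSeries.algebraMap_mem c

lemma X_mem_diskSeries : X ∈ diskSeries := fun _ _ _ =>
  summable_of_ne_finset_zero (s := {1}) fun k hk => by
    simp [coeff_X, Finset.notMem_singleton.1 hk]

lemma coe_mem_diskSeries (p : Polynomial ℂ) : (p : ℂ⟦X⟧) ∈ diskSeries := fun _ _ _ =>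
  summable_of_ne_finset_zero (s := p.support) fun k hk => by
    simp [Polynomial.notMem_support_iff.1 hk]

@[simp] lemma diskEval_C (c z : ℂ) : diskEval (C c) z = c := by
  rw [diskEval, tsum_eq_single 0 fun k hk => by simp [coeff_C, hk]]
  simp

@[simp] lemma diskEval_one (z : ℂ) : diskEval 1 z = 1 := diskEval_C 1 z

@[simp] lemma diskEval_X (z : ℂ) : diskEval X z = z := by
  rw [diskEval, tsum_eq_single 1 fun k hk => by simp [coeff_X, hk]]
  simp

lemma summable_norm_coeff_mul_pow (hF : F ∈ diskSeries) (hz : ‖z‖ < 1) :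
    Summable fun k => ‖coeff k F * z ^ k‖ := by
  simpa only [norm_mul, norm_pow] using hF ‖z‖ (norm_nonneg z) hz

lemma hasSum_diskEval (hF : F ∈ diskSeries) (hz : ‖z‖ < 1) :
    HasSum (fun k => coeff k F * z ^ k) (diskEval F z) :=
  (summable_norm_coeff_mul_pow hF hz).of_norm.hasSum

lemma diskEval_sub (hF : F ∈ diskSeries) (hG : G ∈ diskSeries) (hz : ‖z‖ < 1) :
    diskEval (F - G) z = diskEval F z - diskEval G z := by
  refine HasSum.tsum_eq (((hasSum_diskEval hF hz).sub (hasSum_diskEval hG hz)).congr_fun ?_)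
  simp [sub_mul]

lemma diskEval_mul (hF : F ∈ diskSeries) (hG : G ∈ diskSeries) (hz : ‖z‖ < 1) :
    diskEval (F * G) z = diskEval F z * diskEval G z := by
  rw [diskEval, diskEval, diskEval, tsum_mul_tsum_eq_tsum_sum_antidiagonal_of_summable_norm
    (summable_norm_coeff_mul_pow hF hz) (summable_norm_coeff_mul_pow hG hz)]
  exact tsum_congr fun n => coeff_mul_mul_pow F G z n

lemma diskEval_pow (hF : F ∈ diskSeries) (hz : ‖z‖ < 1) (n : ℕ) :
    diskEval (F ^ n) z = diskEval F z ^ n := by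
  induction n with
  | zero => simp
  | succ n ih => rw [pow_succ, pow_succ, diskEval_mul (pow_mem hF n) hF hz, ih]

lemma hasFPowerSeriesOnBall_diskEval (hF : F ∈ diskSeries) :
    HasFPowerSeriesOnBall (diskEval F)
      (FormalMultilinearSeries.ofScalars ℂ fun k => coeff k F) 0 1 := by
  refine ⟨?_, one_pos, fun {y} hy => ?_⟩
  · refine ENNReal.le_of_forall_nnreal_lt fun r hr => ?_
    refine FormalMultilinearSeries.le_radius_of_summable _ ?_
    simpa [FormalMultilinearSeries.ofScalars_norm] using hF r r.2 (by exact_mod_cast hr)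
  · have hy' : ‖y‖ < 1 := by
      rwa [Metric.mem_eball, edist_zero_right, ← ofReal_norm, ENNReal.ofReal_lt_one] at hy
    simpa [FormalMultilinearSeries.ofScalars_apply_eq, mul_comm] using hasSum_diskEval hF hy'

lemma differentiableOn_diskEval (hF : F ∈ diskSeries) :
    DifferentiableOn ℂ (diskEval F) (Metric.ball 0 1) := by
  rw [← Metric.eball_ofReal, ENNReal.ofReal_one]
  exact (hasFPowerSeriesOnBall_diskEval hF).differentiableOn

lemma eq_of_diskEval_eq (hF : F ∈ diskSeries) (hG : G ∈ diskSeries)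
    (h : ∀ z : ℂ, ‖z‖ < 1 → diskEval F z = diskEval G z) : F = G := by
  have hev : diskEval F =ᶠ[𝓝 0] diskEval G := by
    filter_upwards [Metric.ball_mem_nhds (0 : ℂ) one_pos] with z hz
    exact h z (by simpa using hz)
  have hseries := ((hasFPowerSeriesOnBall_diskEval hF).hasFPowerSeriesAt.congr
    hev).eq_formalMultilinearSeries (hasFPowerSeriesOnBall_diskEval hG).hasFPowerSeriesAt
  ext k
  simpa [FormalMultilinearSeries.coeff_ofScalars] using congrArg (fun p => p.coeff k) hseries

lemma sum_range_sq_norm_coeff_eq_circleAverage (F : ℂ⟦X⟧) (r : ℝ) (n : ℕ) :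
    ∑ k ∈ Finset.range n, ‖coeff k F‖ ^ 2 * (r ^ 2) ^ k =
      Real.circleAverage (fun z => ‖∑ k ∈ Finset.range n, coeff k F * z ^ k‖ ^ 2) 0 r := by
  have hcoeff (k : ℕ) : ‖(trunc n (rescale (r : ℂ) F)).coeff k‖ ^ 2 =
      if k < n then ‖coeff k F‖ ^ 2 * (r ^ 2) ^ k else 0 := by
    rw [coeff_trunc]
    split_ifs
    · rw [coeff_rescale, norm_mul, norm_pow, Complex.norm_real, mul_pow, pow_right_comm,
        Real.norm_eq_abs, sq_abs, mul_comm]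
    · simp
  rw [Real.circleAverage_eq_circleAverage_zero_one]
  have heval (z : ℂ) : ∑ k ∈ Finset.range n, coeff k F * (r * z + 0) ^ k =
      (trunc n (rescale (r : ℂ) F)).eval z := by
    rw [Polynomial.eval, eval₂_trunc_eq_sum_range]
    exact Finset.sum_congr rfl fun k _ => by rw [coeff_rescale, RingHom.id_apply, add_zero]; ring
  simp only [heval]
  rw [← Polynomial.sum_sq_norm_coeff_eq_circleAverage]
  have hsupp : (trunc n (rescale (r : ℂ) F)).support ⊆ Finset.range n := fun k hk => by
    rw [Finset.mem_range]
    by_contra hkn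
    exact Polynomial.mem_support_iff.1 hk (by rw [coeff_trunc, if_neg hkn])
  rw [Finset.sum_subset hsupp fun k _ hk => by simp [Polynomial.notMem_support_iff.1 hk]]
  exact Finset.sum_congr rfl fun k hk => by rw [hcoeff, if_pos (Finset.mem_range.1 hk)]

theorem hasSum_sq_norm_coeff_circleAverage (hF : F ∈ diskSeries) (hr₀ : 0 ≤ r) (hr₁ : r < 1) :
    HasSum (fun k => ‖coeff k F‖ ^ 2 * (r ^ 2) ^ k)
      (Real.circleAverage (fun z => ‖diskEval F z‖ ^ 2) 0 r) := by
  rw [hasSum_iff_tendsto_nat_of_nonneg fun k => by positivity]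
  simp only [sum_range_sq_norm_coeff_eq_circleAverage, Real.circleAverage_def]
  refine Tendsto.const_smul ?_ _
  have hnorm (θ : ℝ) : ‖circleMap 0 r θ‖ = r := by rw [norm_circleMap_zero, abs_of_nonneg hr₀]
  refine intervalIntegral.tendsto_integral_filter_of_dominated_convergence
    (fun _ => (∑' k, ‖coeff k F‖ * r ^ k) ^ 2) (.of_forall fun n => ?_)
    (.of_forall fun n => .of_forall fun θ _ => ?_) intervalIntegrable_const
    (.of_forall fun θ _ => ?_)
  · exact Continuous.aestronglyMeasurable (by fun_prop)
  · rw [norm_pow, norm_norm]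
    gcongr
    calc ‖∑ k ∈ Finset.range n, coeff k F * circleMap 0 r θ ^ k‖
        ≤ ∑ k ∈ Finset.range n, ‖coeff k F‖ * r ^ k :=
          norm_sum_le_of_le _ fun k _ => by rw [norm_mul, norm_pow, hnorm]
      _ ≤ ∑' k, ‖coeff k F‖ * r ^ k :=
          (hF r hr₀ hr₁).sum_le_tsum _ fun k _ => by positivity
  · exact ((hasSum_diskEval hF (by rwa [hnorm])).tendsto_sum_nat.norm).pow 2

lemma circleIntegrable_of_continuousOn_ball {f : ℂ → ℝ} (hf : ContinuousOn f (Metric.ball 0 1))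
    (hr₀ : 0 ≤ r) (hr₁ : r < 1) : CircleIntegrable f 0 r :=
  (hf.mono ((Metric.sphere_subset_closedBall).trans
    (Metric.closedBall_subset_ball hr₁))).circleIntegrable hr₀

lemma circleIntegrable_sq_norm_diskEval (hF : F ∈ diskSeries) (hr₀ : 0 ≤ r) (hr₁ : r < 1) :
    CircleIntegrable (fun z => ‖diskEval F z‖ ^ 2) 0 r :=
  circleIntegrable_of_continuousOn_ball
    ((differentiableOn_diskEval hF).continuousOn.norm.pow 2) hr₀ hr₁

theorem norm_coeff_mul_pow_le (hF : F ∈ diskSeries) (hr₀ : 0 ≤ r) (hr₁ : r < 1)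
    (hM : ∀ z : ℂ, ‖z‖ = r → ‖diskEval F z‖ ≤ M) (k : ℕ) : ‖coeff k F‖ * r ^ k ≤ M := by
  have hM₀ : 0 ≤ M := (norm_nonneg _).trans (hM r (by simp [abs_of_nonneg hr₀]))
  have hsq : (‖coeff k F‖ * r ^ k) ^ 2 ≤ M ^ 2 := by
    rw [mul_pow, pow_right_comm]
    refine (le_hasSum (hasSum_sq_norm_coeff_circleAverage hF hr₀ hr₁) k
      fun j _ => by positivity).trans ?_
    refine Real.circleAverage_mono_on_of_le_circle
      (circleIntegrable_sq_norm_diskEval hF hr₀ hr₁) fun z hz => ?_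
    gcongr
    exact hM z (by simpa [abs_of_nonneg hr₀] using hz)
  exact le_of_sq_le_sq hsq hM₀

/-- The weighted sum `∑ b k * |F̂(k)|²` is at most `M`. With `b k = β k ^ 2` this says
that `F` has norm at most `√M` in the weighted Hardy space `H²_β`. -/
def WeightedSqBound (b : ℕ → ℝ) (F : ℂ⟦X⟧) (M : ℝ) : Prop :=
  ∀ n, ∑ k ∈ Finset.range n, b k * ‖coeff k F‖ ^ 2 ≤ M

namespace WeightedSqBound

lemma nonneg (h : WeightedSqBound b F M) : 0 ≤ M := by simpa using h 0

lemma mono (h : WeightedSqBound b F M) (hMN : M ≤ N) : WeightedSqBound b F N :=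
  fun n => (h n).trans hMN

lemma anti {b' : ℕ → ℝ} (h : WeightedSqBound b F M) (hle : ∀ k, b' k ≤ b k) :
    WeightedSqBound b' F M :=
  fun n => (Finset.sum_le_sum fun k _ => by gcongr; exact hle k).trans (h n)

lemma add (hb : ∀ k, 0 ≤ b k) (hF : WeightedSqBound b F M) (hG : WeightedSqBound b G N) :
    WeightedSqBound b (F + G) (2 * M + 2 * N) := fun n => by
  have hsq (k : ℕ) : ‖coeff k (F + G)‖ ^ 2 ≤ 2 * ‖coeff k F‖ ^ 2 + 2 * ‖coeff k G‖ ^ 2 := by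
    rw [map_add]
    nlinarith [norm_add_le (coeff k F) (coeff k G), norm_nonneg (coeff k F + coeff k G),
      sq_nonneg (‖coeff k F‖ - ‖coeff k G‖)]
  calc ∑ k ∈ Finset.range n, b k * ‖coeff k (F + G)‖ ^ 2
      ≤ ∑ k ∈ Finset.range n, b k * (2 * ‖coeff k F‖ ^ 2 + 2 * ‖coeff k G‖ ^ 2) :=
        Finset.sum_le_sum fun k _ => mul_le_mul_of_nonneg_left (hsq k) (hb k)
    _ = 2 * ∑ k ∈ Finset.range n, b k * ‖coeff k F‖ ^ 2 +
        2 * ∑ k ∈ Finset.range n, b k * ‖coeff k G‖ ^ 2 := by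
        simp only [Finset.mul_sum, ← Finset.sum_add_distrib]
        exact Finset.sum_congr rfl fun k _ => by ring
    _ ≤ 2 * M + 2 * N := by linarith [hF n, hG n]

lemma C_mul (hF : WeightedSqBound b F M) (c : ℂ) :
    WeightedSqBound b (C c * F) (‖c‖ ^ 2 * M) := fun n => by
  refine le_of_eq_of_le ?_ (mul_le_mul_of_nonneg_left (hF n) (sq_nonneg ‖c‖))
  rw [Finset.mul_sum]
  exact Finset.sum_congr rfl fun k _ => by rw [coeff_C_mul, norm_mul]; ring

lemma X_mul (hb : ∀ k, b (k + 1) ≤ r * b k) (hF : WeightedSqBound b F M) (hr : 0 ≤ r) :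
    WeightedSqBound b (X * F) (r * M) := fun n => by
  cases n with
  | zero => simpa using mul_nonneg hr hF.nonneg
  | succ n =>
    refine le_trans ?_ (mul_le_mul_of_nonneg_left (hF n) hr)
    simp only [Finset.sum_range_succ', Finset.mul_sum, coeff_succ_X_mul, coeff_zero_X_mul,
      norm_zero, ne_eq, OfNat.ofNat_ne_zero, not_false_eq_true, zero_pow, mul_zero, add_zero]
    exact Finset.sum_le_sum fun k _ => by rw [← mul_assoc]; gcongr; exact hb k

end WeightedSqBound

lemma sum_range_sq_norm_coeff_mul_le (hH : H ∈ diskSeries)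
    (hM : ∀ z : ℂ, ‖z‖ < 1 → ‖diskEval H z‖ ≤ M) (hr₀ : 0 ≤ r) (hr₁ : r < 1) (n : ℕ) :
    ∑ k ∈ Finset.range n, ‖coeff k (H * F)‖ ^ 2 * (r ^ 2) ^ k ≤
      M ^ 2 * ∑ k ∈ Finset.range n, ‖coeff k F‖ ^ 2 * (r ^ 2) ^ k := by
  set T : ℂ⟦X⟧ := (trunc n F : ℂ⟦X⟧)
  have hT : T ∈ diskSeries := coe_mem_diskSeries _
  have hcoeff : ∀ k ∈ Finset.range n, coeff k (H * F) = coeff k (H * T) := fun k hk => by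
    simp only [coeff_mul]
    refine Finset.sum_congr rfl fun p hp => ?_
    have := Finset.HasAntidiagonal.mem_antidiagonal.1 hp
    have := Finset.mem_range.1 hk
    rw [Polynomial.coeff_coe, coeff_trunc, if_pos (by omega)]
  have hsum : HasSum (fun k => ‖coeff k T‖ ^ 2 * (r ^ 2) ^ k)
      (∑ k ∈ Finset.range n, ‖coeff k F‖ ^ 2 * (r ^ 2) ^ k) := by
    have hzero : ∀ k ∉ Finset.range n, ‖coeff k T‖ ^ 2 * (r ^ 2) ^ k = 0 := fun k hk => by
      rw [Polynomial.coeff_coe, coeff_trunc, if_neg (by simpa using hk)]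
      simp
    have hsum' : ∑ k ∈ Finset.range n, ‖coeff k F‖ ^ 2 * (r ^ 2) ^ k =
        ∑ k ∈ Finset.range n, ‖coeff k T‖ ^ 2 * (r ^ 2) ^ k :=
      Finset.sum_congr rfl fun k hk => by
        rw [Polynomial.coeff_coe, coeff_trunc, if_pos (Finset.mem_range.1 hk)]
    exact hsum' ▸ hasSum_sum_of_ne_finset_zero hzero
  rw [Finset.sum_congr rfl fun k hk => by rw [hcoeff k hk]]
  refine (sum_le_hasSum _ (fun k _ => by positivity)
    (hasSum_sq_norm_coeff_circleAverage (mul_mem hH hT) hr₀ hr₁)).trans ?_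
  rw [← (hasSum_sq_norm_coeff_circleAverage hT hr₀ hr₁).unique hsum,
    ← smul_eq_mul (M ^ 2), ← Real.circleAverage_fun_smul]
  refine Real.circleAverage_mono (circleIntegrable_sq_norm_diskEval (mul_mem hH hT) hr₀ hr₁)
    ((circleIntegrable_sq_norm_diskEval hT hr₀ hr₁).const_smul) fun z hz => ?_
  have hz₁ : ‖z‖ < 1 := by
    have : ‖z‖ = r := by simpa [abs_of_nonneg hr₀] using hz
    linarith
  rw [diskEval_mul hH hT hz₁, norm_mul, mul_pow, smul_eq_mul]
  gcongr
  exact hM z hz₁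

theorem WeightedSqBound.mul_of_norm_le (hH : H ∈ diskSeries)
    (hM : ∀ z : ℂ, ‖z‖ < 1 → ‖diskEval H z‖ ≤ M) (hF : WeightedSqBound 1 F N) :
    WeightedSqBound 1 (H * F) (M ^ 2 * N) := fun n => by
  have hlim : Tendsto (fun r : ℝ => ∑ k ∈ Finset.range n, ‖coeff k (H * F)‖ ^ 2 * (r ^ 2) ^ k)
      (𝓝[<] 1) (𝓝 (∑ k ∈ Finset.range n, ‖coeff k (H * F)‖ ^ 2 * (1 ^ 2) ^ k)) :=
    tendsto_nhdsWithin_of_tendsto_nhds (Continuous.tendsto (by fun_prop) 1)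
  simp only [one_pow, mul_one] at hlim
  simp only [Pi.one_apply, one_mul]
  refine le_of_tendsto hlim ?_
  filter_upwards [Ioo_mem_nhdsLT (zero_lt_one (α := ℝ))] with r hr
  refine (sum_range_sq_norm_coeff_mul_le hH hM hr.1.le hr.2 n).trans ?_
  gcongr
  refine le_trans (Finset.sum_le_sum fun k _ => ?_) (hF n)
  rw [Pi.one_apply, one_mul]
  exact mul_le_of_le_one_right (by positivity)
    (pow_le_one₀ (by positivity) (pow_le_one₀ hr.1.le hr.2.le))

lemma one_sub_conj_mul_ne_zero (h : ‖a‖ * ‖z‖ < 1) : 1 - starRingEnd ℂ a * z ≠ 0 := fun h₀ => by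
  have hnorm := congrArg norm (sub_eq_zero.1 h₀)
  rw [norm_mul, RCLike.norm_conj, norm_one] at hnorm
  linarith

lemma norm_mul_norm_lt_one (ha : ‖a‖ < 1) (hz : ‖z‖ < 1) : ‖a‖ * ‖z‖ < 1 :=
  mul_lt_one_of_nonneg_of_lt_one_left (norm_nonneg a) ha hz.le

lemma one_sub_sq_norm_mobius (ha : ‖a‖ < 1) (hz : ‖z‖ < 1) :
    1 - ‖mobius a z‖ ^ 2 =
      (1 - ‖a‖ ^ 2) * (1 - ‖z‖ ^ 2) / ‖1 - starRingEnd ℂ a * z‖ ^ 2 := by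
  have hne : ‖1 - starRingEnd ℂ a * z‖ ^ 2 ≠ 0 :=
    pow_ne_zero 2 (norm_ne_zero_iff.2 (one_sub_conj_mul_ne_zero (norm_mul_norm_lt_one ha hz)))
  have hid : ‖1 - starRingEnd ℂ a * z‖ ^ 2 - ‖a - z‖ ^ 2 = (1 - ‖a‖ ^ 2) * (1 - ‖z‖ ^ 2) := by
    simp only [Complex.sq_norm, Complex.normSq_apply, sub_re, one_re, mul_re, conj_re, conj_im,
      sub_im, one_im, mul_im]
    ring
  rw [mobius, norm_div, div_pow, eq_div_iff hne, sub_mul, div_mul_cancel₀ _ hne, one_mul, hid]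

lemma norm_mobius_lt_one (ha : ‖a‖ < 1) (hz : ‖z‖ < 1) : ‖mobius a z‖ < 1 := by
  have hne := norm_pos_iff.2 (one_sub_conj_mul_ne_zero (norm_mul_norm_lt_one ha hz))
  have ha₂ : 0 < 1 - ‖a‖ ^ 2 := by nlinarith [norm_nonneg a]
  have hz₂ : 0 < 1 - ‖z‖ ^ 2 := by nlinarith [norm_nonneg z]
  have hpos : 0 < 1 - ‖mobius a z‖ ^ 2 := by
    rw [one_sub_sq_norm_mobius ha hz]
    positivity
  exact lt_of_pow_lt_pow_left₀ 2 zero_le_one (by linarith)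

lemma mobius_mobius (ha : ‖a‖ < 1) (hz : ‖z‖ < 1) : mobius a (mobius a z) = z := by
  have hz' := one_sub_conj_mul_ne_zero (norm_mul_norm_lt_one ha hz)
  have ha' := one_sub_conj_mul_ne_zero (norm_mul_norm_lt_one ha ha)
  have hden : 1 - starRingEnd ℂ a * ((a - z) / (1 - starRingEnd ℂ a * z)) =
      (1 - starRingEnd ℂ a * a) / (1 - starRingEnd ℂ a * z) := by
    field_simp
    ring
  have hnum : a - (a - z) / (1 - starRingEnd ℂ a * z) =
      z * ((1 - starRingEnd ℂ a * a) / (1 - starRingEnd ℂ a * z)) := by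
    rw [← mul_div_assoc, eq_div_iff hz', sub_mul, div_mul_cancel₀ _ hz']
    ring
  rw [mobius, mobius, hden, hnum, mul_div_assoc, div_self (div_ne_zero ha' hz'), mul_one]

lemma differentiableOn_mobius (ha : ‖a‖ < 1) :
    DifferentiableOn ℂ (mobius a) (Metric.ball 0 1) := by
  unfold mobius
  refine DifferentiableOn.div (by fun_prop) (by fun_prop) fun z hz => ?_
  exact one_sub_conj_mul_ne_zero (norm_mul_norm_lt_one ha (by simpa using hz))

lemma exists_norm_mobius_le (ha : ‖a‖ < 1) (hr : r < 1) :
    ∃ q, 0 ≤ q ∧ q < 1 ∧ ∀ z : ℂ, ‖z‖ ≤ r → ‖mobius a z‖ ≤ q := by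
  have hsub : Metric.closedBall (0 : ℂ) r ⊆ Metric.ball 0 1 := Metric.closedBall_subset_ball hr
  rcases (Metric.closedBall (0 : ℂ) r).eq_empty_or_nonempty with hempty | hne
  · refine ⟨0, le_rfl, one_pos, fun z hz => ?_⟩
    exact absurd (mem_closedBall_zero_iff.2 hz) (hempty ▸ Set.notMem_empty z)
  · obtain ⟨w, hw, hmax⟩ := (isCompact_closedBall (0 : ℂ) r).exists_isMaxOn hne
      ((differentiableOn_mobius ha).continuousOn.norm.mono hsub)
    exact ⟨‖mobius a w‖, norm_nonneg _, norm_mobius_lt_one ha (by simpa using hsub hw),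
      fun z hz => hmax (mem_closedBall_zero_iff.2 hz)⟩

/-- The Taylor series `∑ conj(a)ᵏ zᵏ` of the Szegő kernel `1 / (1 - conj(a) z)`. -/
def szegoSeries (a : ℂ) : ℂ⟦X⟧ := PowerSeries.mk fun k => starRingEnd ℂ a ^ k

/-- The Taylor series of `mobius a`. -/
def mobiusSeries (a : ℂ) : ℂ⟦X⟧ := (C a - X) * szegoSeries a

/-- The Taylor series of `F ∘ mobius a`, obtained by collecting the powers of `z` in
`∑ F̂(k) (mobius a z)ᵏ`. The constant term `a` of `mobiusSeries a` is not nilpotent, so Mathlib's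
formal substitution `PowerSeries.subst` does not apply. -/
def mobiusComp (a : ℂ) (F : ℂ⟦X⟧) : ℂ⟦X⟧ :=
  PowerSeries.mk fun j => ∑' k, coeff k F * coeff j (mobiusSeries a ^ k)

lemma one_sub_mul_szegoSeries (a : ℂ) : (1 - C (starRingEnd ℂ a) * X) * szegoSeries a = 1 := by
  ext n
  rw [sub_mul, one_mul, mul_assoc, map_sub, coeff_C_mul]
  cases n with
  | zero => simp [szegoSeries]
  | succ n => simp [coeff_succ_X_mul, szegoSeries, coeff_one, pow_succ, mul_comm]

lemma szegoSeries_mem_diskSeries (ha : ‖a‖ < 1) : szegoSeries a ∈ diskSeries := fun r hr₀ hr₁ => by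
  refine (summable_geometric_of_lt_one (by positivity : 0 ≤ ‖a‖ * r)
    (mul_lt_one_of_nonneg_of_lt_one_left (norm_nonneg a) ha hr₁.le)).congr fun k => ?_
  rw [szegoSeries, coeff_mk, norm_pow, RCLike.norm_conj, mul_pow]

lemma mobiusSeries_mem_diskSeries (ha : ‖a‖ < 1) : mobiusSeries a ∈ diskSeries :=
  mul_mem (sub_mem (C_mem_diskSeries a) X_mem_diskSeries) (szegoSeries_mem_diskSeries ha)

lemma diskEval_szegoSeries (ha : ‖a‖ < 1) (hz : ‖z‖ < 1) :
    diskEval (szegoSeries a) z = (1 - starRingEnd ℂ a * z)⁻¹ := by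
  have hgeom : ‖starRingEnd ℂ a * z‖ < 1 := by
    rw [norm_mul, RCLike.norm_conj]
    exact norm_mul_norm_lt_one ha hz
  simpa only [diskEval, szegoSeries, coeff_mk, mul_pow] using tsum_geometric_of_norm_lt_one hgeom

lemma diskEval_mobiusSeries (ha : ‖a‖ < 1) (hz : ‖z‖ < 1) :
    diskEval (mobiusSeries a) z = mobius a z := by
  rw [mobiusSeries, diskEval_mul (sub_mem (C_mem_diskSeries a) X_mem_diskSeries)
    (szegoSeries_mem_diskSeries ha) hz, diskEval_sub (C_mem_diskSeries a) X_mem_diskSeries hz,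
    diskEval_C, diskEval_X, diskEval_szegoSeries ha hz, mobius, div_eq_mul_inv]

lemma exists_norm_coeff_mobiusSeries_pow_le (ha : ‖a‖ < 1) (hr₀ : 0 ≤ r) (hr₁ : r < 1) :
    ∃ q, 0 ≤ q ∧ q < 1 ∧ ∀ j k, ‖coeff j (mobiusSeries a ^ k)‖ * r ^ j ≤ q ^ k := by
  obtain ⟨q, hq₀, hq₁, hq⟩ := exists_norm_mobius_le ha hr₁
  have hφ := mobiusSeries_mem_diskSeries ha
  refine ⟨q, hq₀, hq₁, fun j k => norm_coeff_mul_pow_le (pow_mem hφ k) hr₀ hr₁ (fun z hz => ?_) j⟩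
  have hz₁ : ‖z‖ < 1 := hz.trans_lt hr₁
  rw [diskEval_pow hφ hz₁, norm_pow, diskEval_mobiusSeries ha hz₁]
  exact pow_le_pow_left₀ (norm_nonneg _) (hq z hz.le) k

lemma summable_mobiusComp (ha : ‖a‖ < 1) (hF : F ∈ diskSeries) (hr₀ : 0 ≤ r) (hr₁ : r < 1) :
    Summable fun p : ℕ × ℕ => ‖coeff p.2 F * coeff p.1 (mobiusSeries a ^ p.2)‖ * r ^ p.1 := by
  obtain ⟨s, hrs, hs₁⟩ := exists_between hr₁
  have hs₀ : 0 < s := hr₀.trans_lt hrs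
  obtain ⟨q, hq₀, hq₁, hq⟩ := exists_norm_coeff_mobiusSeries_pow_le ha hs₀.le hs₁
  have hgeom : Summable fun j : ℕ => (r / s) ^ j :=
    summable_geometric_of_lt_one (by positivity) ((div_lt_one hs₀).2 hrs)
  refine Summable.of_nonneg_of_le (fun p => by positivity) (fun p => ?_)
    (hgeom.mul_of_nonneg (hF q hq₀ hq₁) (fun j => by positivity) fun k => by positivity)
  have hcoeff : ‖coeff p.1 (mobiusSeries a ^ p.2)‖ * r ^ p.1 ≤ (r / s) ^ p.1 * q ^ p.2 := by
    refine le_of_eq_of_le ?_ (mul_le_mul_of_nonneg_left (hq p.1 p.2)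
      (by positivity : 0 ≤ (r / s) ^ p.1))
    rw [div_pow]
    field_simp
  calc ‖coeff p.2 F * coeff p.1 (mobiusSeries a ^ p.2)‖ * r ^ p.1
      = ‖coeff p.2 F‖ * (‖coeff p.1 (mobiusSeries a ^ p.2)‖ * r ^ p.1) := by
        rw [norm_mul, mul_assoc]
    _ ≤ ‖coeff p.2 F‖ * ((r / s) ^ p.1 * q ^ p.2) := by gcongr
    _ = (r / s) ^ p.1 * (‖coeff p.2 F‖ * q ^ p.2) := by ring

lemma summable_norm_coeff_mobiusComp (ha : ‖a‖ < 1) (hF : F ∈ diskSeries) (j : ℕ) :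
    Summable fun k => ‖coeff k F * coeff j (mobiusSeries a ^ k)‖ := by
  have hsum := (summable_mobiusComp ha hF (r := 1 / 2) (by norm_num) (by norm_num)).prod_factor j
  exact (summable_mul_right_iff (a := (1 / 2 : ℝ) ^ j) (by positivity)).1 hsum

lemma hasSum_coeff_mobiusComp (ha : ‖a‖ < 1) (hF : F ∈ diskSeries) (j : ℕ) :
    HasSum (fun k => coeff k F * coeff j (mobiusSeries a ^ k)) (coeff j (mobiusComp a F)) := by
  rw [mobiusComp, coeff_mk]
  exact (summable_norm_coeff_mobiusComp ha hF j).of_norm.hasSum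

lemma mobiusComp_mem_diskSeries (ha : ‖a‖ < 1) (hF : F ∈ diskSeries) :
    mobiusComp a F ∈ diskSeries := fun r hr₀ hr₁ => by
  refine Summable.of_nonneg_of_le (fun j => by positivity) (fun j => ?_)
    (summable_mobiusComp ha hF hr₀ hr₁).prod
  dsimp only
  rw [tsum_mul_right, mobiusComp, coeff_mk]
  gcongr
  exact norm_tsum_le_tsum_norm (summable_norm_coeff_mobiusComp ha hF j)

theorem diskEval_mobiusComp (ha : ‖a‖ < 1) (hF : F ∈ diskSeries) (hz : ‖z‖ < 1) :
    diskEval (mobiusComp a F) z = diskEval F (mobius a z) := by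
  have hφ := mobiusSeries_mem_diskSeries ha
  have hsum : Summable fun p : ℕ × ℕ =>
      coeff p.2 F * coeff p.1 (mobiusSeries a ^ p.2) * z ^ p.1 := by
    refine ((summable_mobiusComp ha hF (norm_nonneg z) hz).congr fun p => ?_).of_norm
    rw [norm_mul _ (z ^ p.1), norm_pow]
  calc diskEval (mobiusComp a F) z
      = ∑' j, ∑' k, coeff k F * coeff j (mobiusSeries a ^ k) * z ^ j := by
        simp only [diskEval, mobiusComp, coeff_mk, tsum_mul_right]
    _ = ∑' k, ∑' j, coeff k F * coeff j (mobiusSeries a ^ k) * z ^ j := (hsum.tsum_comm).symm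
    _ = diskEval F (mobius a z) := tsum_congr fun k => by
        simp only [mul_assoc, tsum_mul_left]
        rw [← diskEval_mobiusSeries ha hz, ← diskEval_pow hφ hz, ← diskEval]

lemma mobiusComp_mul (ha : ‖a‖ < 1) (hF : F ∈ diskSeries) (hG : G ∈ diskSeries) :
    mobiusComp a (F * G) = mobiusComp a F * mobiusComp a G := by
  have hF' := mobiusComp_mem_diskSeries ha hF
  have hG' := mobiusComp_mem_diskSeries ha hG
  refine eq_of_diskEval_eq (mobiusComp_mem_diskSeries ha (mul_mem hF hG)) (mul_mem hF' hG')
    fun z hz => ?_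
  rw [diskEval_mobiusComp ha (mul_mem hF hG) hz, diskEval_mul hF hG (norm_mobius_lt_one ha hz),
    diskEval_mul hF' hG' hz, diskEval_mobiusComp ha hF hz, diskEval_mobiusComp ha hG hz]

lemma mobiusComp_mobiusComp (ha : ‖a‖ < 1) (hF : F ∈ diskSeries) :
    mobiusComp a (mobiusComp a F) = F := by
  have hF' := mobiusComp_mem_diskSeries ha hF
  refine eq_of_diskEval_eq (mobiusComp_mem_diskSeries ha hF') hF fun z hz => ?_
  rw [diskEval_mobiusComp ha hF' hz, diskEval_mobiusComp ha hF (norm_mobius_lt_one ha hz),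
    mobius_mobius ha hz]

lemma WeightedSqBound.one_sub_C_mul_X_mul (hb₀ : ∀ k, 0 ≤ b k) (hb : ∀ k, b (k + 1) ≤ r * b k)
    (hr : 0 ≤ r) (hF : WeightedSqBound b F M) (c : ℂ) :
    WeightedSqBound b ((1 - C c * X) * F) ((2 + 2 * ‖c‖ ^ 2 * r) * M) := by
  have hsplit : (1 - C c * X) * F = F + C (-c) * (X * F) := by
    rw [map_neg]
    ring
  rw [hsplit]
  refine (hF.add hb₀ ((hF.X_mul hb hr).C_mul (-c))).mono (le_of_eq ?_)
  rw [norm_neg]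
  ring

lemma one_sub_sq_norm_pos (ha : ‖a‖ < 1) : 0 < 1 - ‖a‖ ^ 2 := by nlinarith [norm_nonneg a]

lemma mobiusComp_add (ha : ‖a‖ < 1) (hF : F ∈ diskSeries) (hG : G ∈ diskSeries) :
    mobiusComp a (F + G) = mobiusComp a F + mobiusComp a G := by
  ext j
  refine (hasSum_coeff_mobiusComp ha (add_mem hF hG) j).unique ?_
  rw [map_add]
  simpa only [map_add, add_mul] using
    (hasSum_coeff_mobiusComp ha hF j).add (hasSum_coeff_mobiusComp ha hG j)

lemma mobiusComp_C (ha : ‖a‖ < 1) (c : ℂ) : mobiusComp a (C c) = C c := by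
  refine eq_of_diskEval_eq (mobiusComp_mem_diskSeries ha (C_mem_diskSeries c))
    (C_mem_diskSeries c) fun z hz => ?_
  rw [diskEval_mobiusComp ha (C_mem_diskSeries c) hz, diskEval_C, diskEval_C]

lemma mobiusComp_one (ha : ‖a‖ < 1) : mobiusComp a 1 = 1 := mobiusComp_C ha 1

lemma mobiusComp_X (ha : ‖a‖ < 1) : mobiusComp a X = mobiusSeries a := by
  refine eq_of_diskEval_eq (mobiusComp_mem_diskSeries ha X_mem_diskSeries)
    (mobiusSeries_mem_diskSeries ha) fun z hz => ?_
  rw [diskEval_mobiusComp ha X_mem_diskSeries hz, diskEval_X, diskEval_mobiusSeries ha hz]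

lemma mobiusComp_mobiusSeries (ha : ‖a‖ < 1) : mobiusComp a (mobiusSeries a) = X := by
  rw [← mobiusComp_X ha, mobiusComp_mobiusComp ha X_mem_diskSeries]

lemma mobiusComp_pow (ha : ‖a‖ < 1) (hF : F ∈ diskSeries) (k : ℕ) :
    mobiusComp a (F ^ k) = mobiusComp a F ^ k := by
  induction k with
  | zero => rw [pow_zero, pow_zero, mobiusComp_one ha]
  | succ k ih => rw [pow_succ, mobiusComp_mul ha (pow_mem hF k) hF, ih, pow_succ]

lemma one_sub_C_mul_X_mem_diskSeries (c : ℂ) : 1 - C c * X ∈ diskSeries :=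
  sub_mem (one_mem _) (mul_mem (C_mem_diskSeries c) X_mem_diskSeries)

lemma ofReal_one_sub_sq_norm (a : ℂ) :
    ((1 - ‖a‖ ^ 2 : ℝ) : ℂ) = 1 - a * starRingEnd ℂ a := by
  rw [Complex.mul_conj, Complex.normSq_eq_norm_sq]
  push_cast
  rfl

lemma mobiusComp_one_sub_C_mul_X (ha : ‖a‖ < 1) :
    mobiusComp a (1 - C (starRingEnd ℂ a) * X) =
      C ((1 - ‖a‖ ^ 2 : ℝ) : ℂ) * szegoSeries a := by
  have hX := mul_mem (C_mem_diskSeries (starRingEnd ℂ a)) X_mem_diskSeries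
  have hadd := mobiusComp_add ha (one_sub_C_mul_X_mem_diskSeries (starRingEnd ℂ a)) hX
  rw [sub_add_cancel, mobiusComp_one ha, mobiusComp_mul ha (C_mem_diskSeries _) X_mem_diskSeries,
    mobiusComp_C ha, mobiusComp_X ha, mobiusSeries] at hadd
  rw [ofReal_one_sub_sq_norm, map_sub, map_mul, map_one]
  linear_combination -hadd - one_sub_mul_szegoSeries a

theorem szegoSeries_mul_mobiusComp_szegoSeries (ha : ‖a‖ < 1) :
    szegoSeries a * mobiusComp a (szegoSeries a) = C (((1 - ‖a‖ ^ 2)⁻¹ : ℝ) : ℂ) := by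
  have hprod := mobiusComp_mul ha (one_sub_C_mul_X_mem_diskSeries (starRingEnd ℂ a))
    (szegoSeries_mem_diskSeries ha)
  rw [one_sub_mul_szegoSeries, mobiusComp_one ha, mobiusComp_one_sub_C_mul_X ha] at hprod
  have hC : C (((1 - ‖a‖ ^ 2)⁻¹ : ℝ) : ℂ) * C ((1 - ‖a‖ ^ 2 : ℝ) : ℂ) = 1 := by
    rw [← map_mul, ← Complex.ofReal_mul, inv_mul_cancel₀ (one_sub_sq_norm_pos ha).ne',
      Complex.ofReal_one, map_one]
  linear_combination -C (((1 - ‖a‖ ^ 2)⁻¹ : ℝ) : ℂ) * hprod -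
    szegoSeries a * mobiusComp a (szegoSeries a) * hC

/-- The matrix, in the basis of monomials, of the weighted composition operator
`F ↦ F ∘ mobius a / (1 - conj(a) z)`, which is a scalar multiple of a self-adjoint unitary operator
on the unweighted Hardy space. -/
def compMatrix (a : ℂ) (m k : ℕ) : ℂ := coeff m (szegoSeries a * mobiusSeries a ^ k)

lemma compMatrix_zero_left (a : ℂ) (k : ℕ) : compMatrix a 0 k = a ^ k := by
  have hs : constantCoeff (szegoSeries a) = 1 := by
    rw [← coeff_zero_eq_constantCoeff_apply]
    simp [szegoSeries]
  have hφ : constantCoeff (mobiusSeries a) = a := by simp [mobiusSeries, hs]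
  rw [compMatrix, coeff_zero_eq_constantCoeff_apply, map_mul, map_pow, hφ, hs, one_mul]

lemma compMatrix_zero_right (a : ℂ) (m : ℕ) : compMatrix a m 0 = starRingEnd ℂ a ^ m := by
  simp [compMatrix, szegoSeries]

lemma compMatrix_succ_succ (a : ℂ) (m k : ℕ) : compMatrix a (m + 1) (k + 1) =
    starRingEnd ℂ a * compMatrix a m (k + 1) + a * compMatrix a (m + 1) k -
      compMatrix a m k := by
  have hrec : szegoSeries a * mobiusSeries a ^ (k + 1) =
      C (starRingEnd ℂ a) * (X * (szegoSeries a * mobiusSeries a ^ (k + 1))) +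
        C a * (szegoSeries a * mobiusSeries a ^ k) - X * (szegoSeries a * mobiusSeries a ^ k) := by
    rw [pow_succ]
    nth_rewrite 2 4 [mobiusSeries]
    linear_combination (C a - X) * szegoSeries a * mobiusSeries a ^ k * one_sub_mul_szegoSeries a
  conv_lhs => rw [compMatrix, hrec]
  simp only [map_add, map_sub, coeff_C_mul, coeff_succ_X_mul, compMatrix]

theorem conj_compMatrix (a : ℂ) (m k : ℕ) :
    starRingEnd ℂ (compMatrix a k m) = compMatrix a m k := by
  induction m generalizing k with
  | zero => simp [compMatrix_zero_left, compMatrix_zero_right]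
  | succ m ihm =>
    induction k with
    | zero => simp [compMatrix_zero_left, compMatrix_zero_right]
    | succ k ihk =>
      rw [compMatrix_succ_succ, compMatrix_succ_succ, map_sub, map_add, map_mul, map_mul,
        ihm (k + 1), ihk, ihm k, Complex.conj_conj]
      ring

lemma norm_compMatrix_comm (a : ℂ) (m k : ℕ) : ‖compMatrix a k m‖ = ‖compMatrix a m k‖ := by
  rw [← conj_compMatrix a m k, Complex.norm_conj]

lemma hasSum_coeff_mul_mobiusComp (ha : ‖a‖ < 1) (hF : F ∈ diskSeries) (G : ℂ⟦X⟧) (j : ℕ) :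
    HasSum (fun k => coeff k F * coeff j (G * mobiusSeries a ^ k))
      (coeff j (G * mobiusComp a F)) := by
  simp only [coeff_mul, Finset.mul_sum]
  refine hasSum_sum fun p _ => ?_
  simpa only [mul_left_comm] using
    (hasSum_coeff_mobiusComp ha hF p.2).mul_left (coeff p.1 G)

theorem hasSum_compMatrix_mul_conj (ha : ‖a‖ < 1) (j k : ℕ) :
    HasSum (fun m => compMatrix a m k * starRingEnd ℂ (compMatrix a m j))
      (if j = k then (((1 - ‖a‖ ^ 2)⁻¹ : ℝ) : ℂ) else 0) := by
  have hφ := mobiusSeries_mem_diskSeries ha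
  have hprod : szegoSeries a * mobiusComp a (szegoSeries a * mobiusSeries a ^ k) =
      C (((1 - ‖a‖ ^ 2)⁻¹ : ℝ) : ℂ) * X ^ k := by
    rw [mobiusComp_mul ha (szegoSeries_mem_diskSeries ha) (pow_mem hφ k), mobiusComp_pow ha hφ,
      mobiusComp_mobiusSeries ha, ← mul_assoc, szegoSeries_mul_mobiusComp_szegoSeries ha]
  have hsum := hasSum_coeff_mul_mobiusComp ha
    (mul_mem (szegoSeries_mem_diskSeries ha) (pow_mem hφ k)) (szegoSeries a) j
  rw [hprod, coeff_C_mul, coeff_X_pow, mul_ite, mul_one, mul_zero] at hsum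
  simp only [conj_compMatrix]
  exact hsum

theorem hasSum_sq_norm_sum_compMatrix (ha : ‖a‖ < 1) (s : Finset ℕ) (f : ℕ → ℂ) :
    HasSum (fun m => ‖∑ k ∈ s, f k * compMatrix a m k‖ ^ 2)
      ((1 - ‖a‖ ^ 2)⁻¹ * ∑ k ∈ s, ‖f k‖ ^ 2) := by
  have hexpand : HasSum (fun m => ∑ k ∈ s, ∑ j ∈ s, f k * starRingEnd ℂ (f j) *
      (compMatrix a m k * starRingEnd ℂ (compMatrix a m j)))
      (∑ k ∈ s, ∑ j ∈ s, f k * starRingEnd ℂ (f j) *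
        if j = k then (((1 - ‖a‖ ^ 2)⁻¹ : ℝ) : ℂ) else 0) :=
    hasSum_sum fun k _ => hasSum_sum fun j _ => (hasSum_compMatrix_mul_conj ha j k).mul_left _
  refine Complex.hasSum_ofReal.1 ?_
  convert hexpand using 1
  · ext m
    rw [← Complex.normSq_eq_norm_sq, ← Complex.mul_conj, map_sum, Finset.sum_mul_sum]
    refine Finset.sum_congr rfl fun k _ => Finset.sum_congr rfl fun j _ => ?_
    rw [map_mul]
    ring
  · simp only [mul_ite, mul_zero, Finset.sum_ite_eq', Complex.mul_conj, Complex.normSq_eq_norm_sq]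
    push_cast
    rw [Finset.mul_sum]
    exact Finset.sum_congr rfl fun k hk => by rw [if_pos hk]; ring

lemma hasSum_sq_norm_compMatrix (ha : ‖a‖ < 1) (k : ℕ) :
    HasSum (fun m => ‖compMatrix a m k‖ ^ 2) (1 - ‖a‖ ^ 2)⁻¹ := by
  simpa using hasSum_sq_norm_sum_compMatrix ha {k} 1

/-- Composition with `mobius a` multiplies the weighted square sums with weight `b` by a factor
of at most `K`. -/
def MobiusCompBound (a : ℂ) (b : ℕ → ℝ) (K : ℝ) : Prop :=
  ∀ F M, F ∈ diskSeries → WeightedSqBound b F M → WeightedSqBound b (mobiusComp a F) (K * M)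

lemma weightedSqBound_one_szegoSeries_mul_mobiusComp (ha : ‖a‖ < 1) (hF : F ∈ diskSeries)
    (hM : WeightedSqBound 1 F M) :
    WeightedSqBound 1 (szegoSeries a * mobiusComp a F) ((1 - ‖a‖ ^ 2)⁻¹ * M) := fun n => by
  have hA := one_sub_sq_norm_pos ha
  have hlim : Tendsto (fun N => ∑ m ∈ Finset.range n,
      ‖∑ k ∈ Finset.range N, coeff k F * compMatrix a m k‖ ^ 2) atTop
      (𝓝 (∑ m ∈ Finset.range n, ‖coeff m (szegoSeries a * mobiusComp a F)‖ ^ 2)) :=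
    tendsto_finsetSum _ fun m _ =>
      ((hasSum_coeff_mul_mobiusComp ha hF (szegoSeries a) m).tendsto_sum_nat.norm).pow 2
  simp only [Pi.one_apply, one_mul]
  refine le_of_tendsto hlim (.of_forall fun N => ?_)
  refine (sum_le_hasSum _ (fun m _ => sq_nonneg _)
    (hasSum_sq_norm_sum_compMatrix ha (Finset.range N) fun k => coeff k F)).trans ?_
  gcongr
  simpa only [Pi.one_apply, one_mul] using hM N

theorem exists_mobiusCompBound_one (ha : ‖a‖ < 1) : ∃ K, 0 < K ∧ MobiusCompBound a 1 K := by
  have hA := one_sub_sq_norm_pos ha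
  refine ⟨(2 + 2 * ‖a‖ ^ 2) * (1 - ‖a‖ ^ 2)⁻¹, by positivity, fun F M hF hM => ?_⟩
  have hfactor : mobiusComp a F =
      (1 - C (starRingEnd ℂ a) * X) * (szegoSeries a * mobiusComp a F) := by
    rw [← mul_assoc, one_sub_mul_szegoSeries, one_mul]
  rw [hfactor]
  refine ((weightedSqBound_one_szegoSeries_mul_mobiusComp ha hF hM).one_sub_C_mul_X_mul (r := 1)
    (fun _ => zero_le_one) (fun _ => by simp) zero_le_one (starRingEnd ℂ a)).mono (le_of_eq ?_)
  rw [RCLike.norm_conj]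
  ring

lemma WeightedSqBound.coeff_le (hb : ∀ k, 0 ≤ b k) (h : WeightedSqBound b F M) (k : ℕ) :
    b k * ‖coeff k F‖ ^ 2 ≤ M :=
  (Finset.single_le_sum (f := fun k => b k * ‖coeff k F‖ ^ 2)
    (fun j _ => mul_nonneg (hb j) (sq_nonneg _)) (Finset.self_mem_range_succ k)).trans (h (k + 1))

/-- A positive weight whose consecutive ratios tend to `1`; for the squares of the weights of a
weighted Hardy space this is the standing assumption `w_k → 1`. -/
structure IsRegularWeight (b : ℕ → ℝ) : Prop where
  pos : ∀ k, 0 < b k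
  tendsto_ratio : Tendsto (fun k => b (k + 1) / b k) atTop (𝓝 1)

namespace IsRegularWeight

lemma inv (hb : IsRegularWeight b) : IsRegularWeight fun k => (b k)⁻¹ where
  pos k := inv_pos.2 (hb.pos k)
  tendsto_ratio := by
    simpa only [inv_div, inv_div_inv, inv_one] using hb.tendsto_ratio.inv₀ one_ne_zero

lemma pow (hb : IsRegularWeight b) (n : ℕ) : IsRegularWeight fun k => b k ^ n where
  pos k := pow_pos (hb.pos k) n
  tendsto_ratio := by simpa only [div_pow, one_pow] using hb.tendsto_ratio.pow n

lemma exists_le_mul_pow (hb : IsRegularWeight b) {q : ℝ} (hq : 1 < q) :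
    ∃ K, 0 < K ∧ ∀ k, b k ≤ K * q ^ k := by
  have hq₀ : 0 < q := one_pos.trans hq
  have hpos (k : ℕ) : 0 < b k / q ^ k := div_pos (hb.pos k) (by positivity)
  have hsum : Summable fun k => b k / q ^ k := by
    refine summable_of_ratio_test_tendsto_lt_one (l := 1 / q) ((div_lt_one hq₀).2 hq)
      (.of_forall fun k => (hpos k).ne') ((hb.tendsto_ratio.div_const q).congr fun k => ?_)
    rw [Real.norm_of_nonneg (hpos _).le, Real.norm_of_nonneg (hpos _).le, pow_succ]
    have := (hb.pos k).ne'
    field_simp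
  refine ⟨∑' k, b k / q ^ k, hsum.tsum_pos (fun k => (hpos k).le) 0 (hpos 0), fun k => ?_⟩
  exact (div_le_iff₀ (by positivity)).1 (hsum.le_tsum k fun j _ => (hpos j).le)

lemma exists_succ_le (hb : IsRegularWeight b) : ∃ K, 0 < K ∧ ∀ k, b (k + 1) ≤ K * b k := by
  obtain ⟨K, hK⟩ := hb.tendsto_ratio.bddAbove_range
  have hle (k : ℕ) : b (k + 1) / b k ≤ K := hK ⟨k, rfl⟩
  exact ⟨K, (div_pos (hb.pos 1) (hb.pos 0)).trans_le (hle 0),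
    fun k => (div_le_iff₀ (hb.pos k)).1 (hle k)⟩

lemma mem_diskSeries_of_weightedSqBound (hb : IsRegularWeight b) (h : WeightedSqBound b F M) :
    F ∈ diskSeries := fun r hr₀ hr₁ => by
  obtain ⟨s, hrs, hs₁⟩ := exists_between hr₁
  have hs₀ : 0 < s := hr₀.trans_lt hrs
  obtain ⟨K, hK, hbK⟩ := hb.inv.exists_le_mul_pow ((one_lt_inv₀ hs₀).2 hs₁)
  refine Summable.of_nonneg_of_le (fun k => by positivity) (fun k => ?_)
    ((summable_geometric_of_lt_one (Real.sqrt_nonneg s)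
      ((Real.sqrt_lt' one_pos).2 (by simpa using hs₁))).mul_left (Real.sqrt (M * K)))
  have hsqrt : (√s ^ k) ^ 2 = s ^ k := by rw [pow_right_comm, Real.sq_sqrt hs₀.le]
  have hcoeff : ‖coeff k F‖ ^ 2 ≤ M * (K * s⁻¹ ^ k) := by
    calc ‖coeff k F‖ ^ 2 = b k * ‖coeff k F‖ ^ 2 * (b k)⁻¹ := by field_simp [(hb.pos k).ne']
      _ ≤ M * (K * s⁻¹ ^ k) := mul_le_mul (h.coeff_le (fun k => (hb.pos k).le) k) (hbK k)
        (inv_nonneg.2 (hb.pos k).le) h.nonneg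
  refine (mul_le_mul_of_nonneg_left (pow_le_pow_left₀ hr₀ hrs.le k) (norm_nonneg _)).trans
    (abs_le_of_sq_le_sq' ?_ (by positivity)).2
  calc (‖coeff k F‖ * s ^ k) ^ 2 = ‖coeff k F‖ ^ 2 * (s ^ k) ^ 2 := mul_pow _ _ 2
    _ ≤ M * (K * s⁻¹ ^ k) * (s ^ k) ^ 2 := by gcongr
    _ = (√(M * K) * √s ^ k) ^ 2 := by
      rw [mul_pow, Real.sq_sqrt (mul_nonneg h.nonneg hK.le), hsqrt, inv_pow]
      field_simp

end IsRegularWeight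

/-- The Taylor series of the function represented by a vector of the sequence model of `H²_β`. -/
def toSeries (β : ℕ → ℝ) (u : H2) : ℂ⟦X⟧ := PowerSeries.mk fun k => u k / (β k : ℂ)

lemma coeff_toSeries (β : ℕ → ℝ) (u : H2) (k : ℕ) : coeff k (toSeries β u) = u k / (β k : ℂ) :=
  coeff_mk _ _

lemma repFun_eq_diskEval (β : ℕ → ℝ) (u : H2) (z : ℂ) :
    repFun β u z = diskEval (toSeries β u) z := by
  simp only [repFun, diskEval, coeff_toSeries]

lemma toSeries_add (β : ℕ → ℝ) (u v : H2) :
    toSeries β (u + v) = toSeries β u + toSeries β v := by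
  ext k
  simp [coeff_toSeries, add_div]

lemma toSeries_smul (β : ℕ → ℝ) (c : ℂ) (u : H2) : toSeries β (c • u) = C c * toSeries β u := by
  ext k
  simp [coeff_toSeries, mul_div_assoc]

lemma toSeries_injective (hβ : ∀ k, 0 < β k) : Function.Injective (toSeries β) := fun u v h => by
  ext k
  have hk := congrArg (coeff k) h
  rw [coeff_toSeries, coeff_toSeries] at hk
  exact (div_left_inj' (Complex.ofReal_ne_zero.2 (hβ k).ne')).1 hk

lemma toSeries_single (hβ : ∀ k, 0 < β k) (k : ℕ) :
    toSeries β (lp.single 2 k (β k : ℂ)) = X ^ k := by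
  ext j
  rw [coeff_toSeries, coeff_X_pow, lp.single_apply]
  obtain rfl | hjk := eq_or_ne j k
  · simp [(hβ j).ne']
  · simp [hjk]

lemma weightedSqBound_toSeries (hβ : ∀ k, 0 < β k) (u : H2) :
    WeightedSqBound (fun k => β k ^ 2) (toSeries β u) (‖u‖ ^ 2) := fun n => by
  have h := lp.sum_rpow_le_norm_rpow (p := 2) (by norm_num) u (Finset.range n)
  simp only [ENNReal.toReal_ofNat, Real.rpow_ofNat] at h
  refine (Finset.sum_congr rfl fun k _ => ?_).trans_le h
  rw [coeff_toSeries, norm_div, Complex.norm_real, Real.norm_of_nonneg (hβ k).le]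
  have := (hβ k).ne'
  field_simp

lemma exists_toSeries_eq (hβ : ∀ k, 0 < β k) (h : WeightedSqBound (fun k => β k ^ 2) F M) :
    ∃ u : H2, toSeries β u = F ∧ ‖u‖ ^ 2 ≤ M := by
  have hsum (s : Finset ℕ) :
      ∑ i ∈ s, ‖(β i : ℂ) * coeff i F‖ ^ (2 : ENNReal).toReal ≤ M := by
    obtain ⟨n, hn⟩ := s.exists_nat_subset_range
    refine (Finset.sum_le_sum_of_subset_of_nonneg hn fun _ _ _ => by positivity).trans
      ((Finset.sum_congr rfl fun k _ => ?_).trans_le (h n))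
    rw [ENNReal.toReal_ofNat, Real.rpow_ofNat, norm_mul, mul_pow, Complex.norm_real,
      Real.norm_of_nonneg (hβ k).le]
  refine ⟨⟨_, memℓp_gen' hsum⟩, ?_, ?_⟩
  · ext k
    rw [coeff_toSeries]
    exact mul_div_cancel_left₀ _ (Complex.ofReal_ne_zero.2 (hβ k).ne')
  · refine (Real.le_sqrt (norm_nonneg _) h.nonneg).1
      (lp.norm_le_of_forall_sum_le (by norm_num) (Real.sqrt_nonneg M) fun s => ?_)
    refine (hsum s).trans_eq ?_
    rw [ENNReal.toReal_ofNat, Real.rpow_ofNat, Real.sq_sqrt h.nonneg]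

lemma toSeries_mem_diskSeries (hβ : IsRegularWeight β) (u : H2) : toSeries β u ∈ diskSeries :=
  (hβ.pow 2).mem_diskSeries_of_weightedSqBound (weightedSqBound_toSeries hβ.pos u)

lemma exists_continuousLinearMap_toSeries (hβ : ∀ k, 0 < β k) (T : ℂ⟦X⟧ → ℂ⟦X⟧)
    (hK : 0 ≤ K)
    (hadd : ∀ u v : H2, T (toSeries β u + toSeries β v) = T (toSeries β u) + T (toSeries β v))
    (hsmul : ∀ (c : ℂ) (u : H2), T (C c * toSeries β u) = C c * T (toSeries β u))
    (hbound : ∀ u : H2,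
      WeightedSqBound (fun k => β k ^ 2) (T (toSeries β u)) (K * ‖u‖ ^ 2)) :
    ∃ L : H2 →L[ℂ] H2, ∀ u, toSeries β (L u) = T (toSeries β u) := by
  choose f hf hnorm using fun u => exists_toSeries_eq hβ (hbound u)
  have hinj := toSeries_injective hβ
  let L : H2 →ₗ[ℂ] H2 :=
    { toFun := f
      map_add' := fun u v => hinj (by rw [hf, toSeries_add, toSeries_add, hadd, hf, hf])
      map_smul' := fun c u => hinj (by
        rw [hf, RingHom.id_apply, toSeries_smul, toSeries_smul, hsmul, hf]) }
  refine ⟨L.mkContinuous √K fun u => ?_, hf⟩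
  refine abs_le_of_sq_le_sq' ?_ (by positivity) |>.2
  rw [mul_pow, Real.sq_sqrt hK]
  exact hnorm u

lemma repMul_iff (hβ : IsRegularWeight β) (hG : G ∈ diskSeries) {g : ℂ → ℂ}
    (hg : ∀ z : ℂ, ‖z‖ < 1 → diskEval G z = g z) {T : H2 →L[ℂ] H2} :
    RepMul β g T ↔ ∀ u, toSeries β (T u) = G * toSeries β u := by
  have hmem := toSeries_mem_diskSeries hβ
  refine forall_congr' fun u => ⟨fun h => ?_, fun h z hz => ?_⟩
  · refine eq_of_diskEval_eq (hmem _) (mul_mem hG (hmem u)) fun z hz => ?_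
    rw [← repFun_eq_diskEval, h z (mem_ball_zero_iff.2 hz), diskEval_mul hG (hmem u) hz, hg z hz,
      repFun_eq_diskEval]
  · have hz' := mem_ball_zero_iff.1 hz
    rw [repFun_eq_diskEval, h, diskEval_mul hG (hmem u) hz', hg z hz', repFun_eq_diskEval]

theorem mzSimMphi_of_mobiusCompBound (hβ : IsRegularWeight β) (ha : ‖a‖ < 1) (hK : 0 ≤ K)
    (h : MobiusCompBound a (fun k => β k ^ 2) K) : MzSimMphi β (mobius a) := by
  have hmem := toSeries_mem_diskSeries hβ
  obtain ⟨Y, hY⟩ := exists_continuousLinearMap_toSeries hβ.pos (mobiusComp a) hK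
    (fun u v => mobiusComp_add ha (hmem u) (hmem v))
    (fun c u => by rw [mobiusComp_mul ha (C_mem_diskSeries c) (hmem u), mobiusComp_C ha])
    (fun u => h _ _ (hmem u) (weightedSqBound_toSeries hβ.pos u))
  obtain ⟨K', hK', hb⟩ := (hβ.pow 2).exists_succ_le
  obtain ⟨Tz, hTz⟩ := exists_continuousLinearMap_toSeries hβ.pos (X * ·) hK'.le
    (fun u v => mul_add _ _ _) (fun c u => mul_left_comm _ _ _)
    (fun u => (weightedSqBound_toSeries hβ.pos u).X_mul hb hK'.le)
  have hinv (u : H2) : Y (Y u) = u :=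
    toSeries_injective hβ.pos (by rw [hY, hY, mobiusComp_mobiusComp ha (hmem u)])
  refine ⟨Tz, Y ∘L Tz ∘L Y, (repMul_iff hβ X_mem_diskSeries (fun z _ => diskEval_X z)).2 hTz,
    (repMul_iff hβ (mobiusSeries_mem_diskSeries ha) fun z hz => diskEval_mobiusSeries ha hz).2
      fun u => ?_,
    ContinuousLinearEquiv.equivOfInverse Y Y hinv hinv, fun u => ?_⟩
  · rw [ContinuousLinearMap.comp_apply, ContinuousLinearMap.comp_apply, hY, hTz, hY,
      mobiusComp_mul ha X_mem_diskSeries (mobiusComp_mem_diskSeries ha (hmem u)),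
      mobiusComp_mobiusComp ha (hmem u), mobiusComp_X ha]
  · simp [hinv]

/-- Series `G` and `H = 1 / G` such that the weighted composition operator `F ↦ G * F ∘ mobius a`
and its inverse `F ↦ (H * F) ∘ mobius a` multiply the weighted square sums with weight `b` by a
factor of at most `K`. -/
structure IsMobiusIntertwiner (a : ℂ) (b : ℕ → ℝ) (K : ℝ) (G H : ℂ⟦X⟧) : Prop where
  left_mem : G ∈ diskSeries
  right_mem : H ∈ diskSeries
  mul_eq_one : G * H = 1
  const_pos : 0 < K
  mul_mobiusComp : ∀ F M, WeightedSqBound b F M → WeightedSqBound b (G * mobiusComp a F) (K * M)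
  mobiusComp_mul : ∀ F M, WeightedSqBound b F M → WeightedSqBound b (mobiusComp a (H * F)) (K * M)

lemma toSeries_intertwiner_apply (hβ : IsRegularWeight β) (ha : ‖a‖ < 1) {Tz Tφ Y : H2 →L[ℂ] H2}
    (hTz : RepMul β (fun z => z) Tz) (hTφ : RepMul β (mobius a) Tφ)
    (hY : ∀ u, Y (Tz u) = Tφ (Y u)) (u : H2) :
    toSeries β (Y u) =
      toSeries β (Y (lp.single 2 0 (β 0 : ℂ))) * mobiusComp a (toSeries β u) := by
  have hX := (repMul_iff hβ X_mem_diskSeries fun z _ => diskEval_X z).1 hTz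
  have hφ := (repMul_iff hβ (mobiusSeries_mem_diskSeries ha)
    fun z hz => diskEval_mobiusSeries ha hz).1 hTφ
  have hne (k : ℕ) : (β k : ℂ) ≠ 0 := Complex.ofReal_ne_zero.2 (hβ.pos k).ne'
  have hsingle (k : ℕ) : toSeries β (Y (lp.single 2 k (β k : ℂ))) =
      toSeries β (Y (lp.single 2 0 (β 0 : ℂ))) * mobiusSeries a ^ k := by
    induction k with
    | zero => rw [pow_zero, mul_one]
    | succ k ih =>
      have hshift : (lp.single 2 (k + 1) (β (k + 1) : ℂ) : H2) = Tz (lp.single 2 k (β k : ℂ)) :=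
        toSeries_injective hβ.pos
          (by rw [hX, toSeries_single hβ.pos, toSeries_single hβ.pos, pow_succ'])
      rw [hshift, hY, hφ, ih, pow_succ, mul_left_comm, mul_comm (mobiusSeries a)]
  have hdecomp (k : ℕ) : (lp.single 2 k (u k) : H2) =
      (u k / (β k : ℂ)) • lp.single 2 k (β k : ℂ) := by
    rw [← lp.single_smul, smul_eq_mul, div_mul_cancel₀ _ (hne k)]
  ext j
  let coordinate : H2 →L[ℂ] ℂ := lp.evalCLM ℂ (fun _ : ℕ => ℂ) 2 j
  have hsum : HasSum (fun k => coeff j (toSeries β (Y (lp.single 2 k (u k)))))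
      (coeff j (toSeries β (Y u))) := by
    simp only [coeff_toSeries]
    exact (((coordinate ∘L Y).hasSum (lp.hasSum_single (by norm_num) u)).div_const _)
  refine hsum.unique ?_
  convert hasSum_coeff_mul_mobiusComp ha (toSeries_mem_diskSeries hβ u) _ j using 2 with k
  rw [hdecomp, map_smul, toSeries_smul, hsingle, coeff_C_mul, coeff_toSeries]

theorem exists_isMobiusIntertwiner (hβ : IsRegularWeight β) (ha : ‖a‖ < 1)
    (h : MzSimMphi β (mobius a)) :
    ∃ K G H, IsMobiusIntertwiner a (fun k => β k ^ 2) K G H := by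
  obtain ⟨Tz, Tφ, hTz, hTφ, Y, hY⟩ := h
  have hmem := toSeries_mem_diskSeries hβ
  set e : H2 := lp.single 2 0 (β 0 : ℂ)
  have hfwd : ∀ u, toSeries β (Y u) = toSeries β (Y e) * mobiusComp a (toSeries β u) :=
    toSeries_intertwiner_apply (Y := Y) hβ ha hTz hTφ hY
  set G := toSeries β (Y e)
  set H := mobiusComp a (toSeries β (Y.symm e))
  have hGH : G * H = 1 := by
    rw [← hfwd, Y.apply_symm_apply, toSeries_single hβ.pos, pow_zero]
  have hbwd (u : H2) : mobiusComp a (H * toSeries β u) = toSeries β (Y.symm u) := by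
    have hu := hfwd (Y.symm u)
    rw [Y.apply_symm_apply] at hu
    rw [hu, ← mul_assoc, mul_comm H, hGH, one_mul, mobiusComp_mobiusComp ha (hmem _)]
  have hbound (L : H2 →L[ℂ] H2) (hL : ‖L‖ ≤ ‖(Y : H2 →L[ℂ] H2)‖ + ‖(Y.symm : H2 →L[ℂ] H2)‖ + 1)
      (u : H2) {M : ℝ} (hM : ‖u‖ ^ 2 ≤ M) : WeightedSqBound (fun k => β k ^ 2) (toSeries β (L u))
      ((‖(Y : H2 →L[ℂ] H2)‖ + ‖(Y.symm : H2 →L[ℂ] H2)‖ + 1) ^ 2 * M) := by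
    refine (weightedSqBound_toSeries hβ.pos (L u)).mono ?_
    calc ‖L u‖ ^ 2 ≤ (‖L‖ * ‖u‖) ^ 2 := by gcongr; exact L.le_opNorm u
      _ = ‖L‖ ^ 2 * ‖u‖ ^ 2 := mul_pow _ _ 2
      _ ≤ _ := by gcongr
  have hYnorm := norm_nonneg (Y : H2 →L[ℂ] H2)
  have hYsnorm := norm_nonneg (Y.symm : H2 →L[ℂ] H2)
  refine ⟨(‖(Y : H2 →L[ℂ] H2)‖ + ‖(Y.symm : H2 →L[ℂ] H2)‖ + 1) ^ 2, G, H, hmem _,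
    mobiusComp_mem_diskSeries ha (hmem _), hGH, by positivity, fun F M hF => ?_,
    fun F M hF => ?_⟩ <;>
  obtain ⟨u, rfl, hu⟩ := exists_toSeries_eq hβ.pos hF
  · rw [← hfwd]
    exact hbound Y (by linarith) u hu
  · rw [hbwd]
    exact hbound Y.symm (by linarith) u hu

/-- The reproducing kernel of the space with norm `∑ b k * ‖coeff k F‖ ^ 2` at the diagonal point
`(z, z)`, as a function of `t = ‖z‖ ^ 2`. -/
def kernelSum (b : ℕ → ℝ) (t : ℝ) : ℝ := ∑' k, (b k)⁻¹ * t ^ k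

/-- The reproducing kernel at `z`, as a power series. -/
def kernelSeries (b : ℕ → ℝ) (z : ℂ) : ℂ⟦X⟧ :=
  PowerSeries.mk fun k => ((b k)⁻¹ : ℝ) * starRingEnd ℂ z ^ k

/-- The logarithm of the reproducing kernel in the scale `‖z‖ ^ 2 = exp (-x)`; it is a convex
function of `x`. -/
def logKernel (b : ℕ → ℝ) (x : ℝ) : ℝ := Real.log (kernelSum b (Real.exp (-x)))

/-- The rate `-d/dx logKernel b x` at which `logKernel b` decreases. -/
def kernelSlope (b : ℕ → ℝ) (x : ℝ) : ℝ :=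
  (∑' k : ℕ, k * ((b k)⁻¹ * Real.exp (-x) ^ k)) / kernelSum b (Real.exp (-x))

lemma exp_neg_lt_one (hx : 0 < x) : Real.exp (-x) < 1 :=
  Real.exp_lt_one_iff.2 (neg_lt_zero.2 hx)

namespace IsRegularWeight

variable {t u : ℝ}

lemma summable_natCast_mul_kernel (hb : IsRegularWeight b) (ht₀ : 0 ≤ t) (ht₁ : t < 1) :
    Summable fun k : ℕ => k * ((b k)⁻¹ * t ^ k) := by
  obtain ⟨s, hts, hs₁⟩ := exists_between ht₁
  have hs₀ : 0 < s := ht₀.trans_lt hts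
  obtain ⟨K, hK, hbK⟩ := hb.inv.exists_le_mul_pow ((one_lt_inv₀ hs₀).2 hs₁)
  have hgeom := summable_pow_mul_geometric_of_norm_lt_one 1 (r := s⁻¹ * t)
    (by rw [Real.norm_of_nonneg (by positivity), inv_mul_lt_one₀ hs₀]; exact hts)
  refine .of_nonneg_of_le (fun k => ?_) (fun k => ?_) (hgeom.mul_left K)
  · have := inv_pos.2 (hb.pos k)
    positivity
  · calc k * ((b k)⁻¹ * t ^ k) ≤ k * (K * s⁻¹ ^ k * t ^ k) := by gcongr; exact hbK k
      _ = K * (k ^ 1 * (s⁻¹ * t) ^ k) := by rw [mul_pow]; ring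

lemma summable_kernel (hb : IsRegularWeight b) (ht₀ : 0 ≤ t) (ht₁ : t < 1) :
    Summable fun k => (b k)⁻¹ * t ^ k := by
  rw [← summable_nat_add_iff 1]
  refine .of_nonneg_of_le (fun k => ?_) (fun k => ?_)
    ((summable_nat_add_iff 1).2 (hb.summable_natCast_mul_kernel ht₀ ht₁))
  all_goals have := inv_pos.2 (hb.pos (k + 1))
  · positivity
  · exact le_mul_of_one_le_left (by positivity) (by push_cast; linarith [k.cast_nonneg (α := ℝ)])

lemma kernel_nonneg (hb : IsRegularWeight b) (ht₀ : 0 ≤ t) (k : ℕ) : 0 ≤ (b k)⁻¹ * t ^ k :=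
  mul_nonneg (inv_nonneg.2 (hb.pos k).le) (pow_nonneg ht₀ k)

lemma inv_zero_le_kernelSum (hb : IsRegularWeight b) (ht₀ : 0 ≤ t) (ht₁ : t < 1) :
    (b 0)⁻¹ ≤ kernelSum b t := by
  simpa [kernelSum] using
    (hb.summable_kernel ht₀ ht₁).le_tsum 0 fun k _ => hb.kernel_nonneg ht₀ k

lemma kernelSum_pos (hb : IsRegularWeight b) (ht₀ : 0 ≤ t) (ht₁ : t < 1) : 0 < kernelSum b t :=
  (inv_pos.2 (hb.pos 0)).trans_le (hb.inv_zero_le_kernelSum ht₀ ht₁)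

lemma kernelSum_mono (hb : IsRegularWeight b) (ht₀ : 0 ≤ t) (htu : t ≤ u) (hu₁ : u < 1) :
    kernelSum b t ≤ kernelSum b u :=
  (hb.summable_kernel ht₀ (htu.trans_lt hu₁)).tsum_le_tsum
    (fun k => mul_le_mul_of_nonneg_left (pow_le_pow_left₀ ht₀ htu k) (inv_nonneg.2 (hb.pos k).le))
    (hb.summable_kernel (ht₀.trans htu) hu₁)

lemma sq_norm_diskEval_le (hb : IsRegularWeight b) (hF : WeightedSqBound b F M) (hz : ‖z‖ < 1) :
    ‖diskEval F z‖ ^ 2 ≤ M * kernelSum b (‖z‖ ^ 2) := by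
  have hlim := (hasSum_diskEval (hb.mem_diskSeries_of_weightedSqBound hF) hz).tendsto_sum_nat
  have hz₂ : ‖z‖ ^ 2 < 1 := pow_lt_one₀ (norm_nonneg z) hz two_ne_zero
  refine le_of_tendsto (hlim.norm.pow 2) (Eventually.of_forall fun n => ?_)
  calc ‖∑ k ∈ Finset.range n, coeff k F * z ^ k‖ ^ 2
      ≤ (∑ k ∈ Finset.range n, ‖coeff k F * z ^ k‖) ^ 2 := by gcongr; exact norm_sum_le _ _
    _ ≤ (∑ k ∈ Finset.range n, b k * ‖coeff k F‖ ^ 2) *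
          ∑ k ∈ Finset.range n, (b k)⁻¹ * (‖z‖ ^ 2) ^ k := by
        refine Finset.sum_sq_le_sum_mul_sum_of_sq_le_mul _
          (fun k _ => mul_nonneg (hb.pos k).le (sq_nonneg _))
          (fun k _ => hb.kernel_nonneg (sq_nonneg _) k) fun k _ => le_of_eq ?_
        have := (hb.pos k).ne'
        rw [norm_mul, norm_pow]
        field_simp
        ring
    _ ≤ M * kernelSum b (‖z‖ ^ 2) :=
        mul_le_mul (hF n)
          ((hb.summable_kernel (sq_nonneg _) hz₂).sum_le_tsum _ fun k _ =>
            hb.kernel_nonneg (sq_nonneg _) k)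
          (Finset.sum_nonneg fun k _ => hb.kernel_nonneg (sq_nonneg _) k) hF.nonneg

lemma weightedSqBound_kernelSeries (hb : IsRegularWeight b) (hz : ‖z‖ < 1) :
    WeightedSqBound b (kernelSeries b z) (kernelSum b (‖z‖ ^ 2)) := fun n => by
  have hsum := hb.summable_kernel (sq_nonneg ‖z‖) (pow_lt_one₀ (norm_nonneg z) hz two_ne_zero)
  refine (Finset.sum_congr rfl fun k _ => ?_).trans_le
    (hsum.sum_le_tsum (Finset.range n) fun k _ => hb.kernel_nonneg (sq_nonneg _) k)
  have := hb.pos k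
  rw [kernelSeries, coeff_mk, norm_mul, norm_pow, Complex.norm_conj, Complex.norm_real,
    Real.norm_of_nonneg (inv_nonneg.2 this.le)]
  field_simp
  ring

end IsRegularWeight

lemma diskEval_kernelSeries (b : ℕ → ℝ) (z : ℂ) :
    diskEval (kernelSeries b z) z = (kernelSum b (‖z‖ ^ 2) : ℂ) := by
  rw [diskEval, kernelSum, Complex.ofReal_tsum]
  refine tsum_congr fun k => ?_
  push_cast
  rw [kernelSeries, coeff_mk, ← Complex.conj_mul', mul_pow, Complex.ofReal_inv, mul_assoc]

theorem IsMobiusIntertwiner.sq_norm_left_mul_kernelSum_le (hb : IsRegularWeight b) (ha : ‖a‖ < 1)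
    (hGH : IsMobiusIntertwiner a b K G H) (hz : ‖z‖ < 1) :
    ‖diskEval G z‖ ^ 2 * kernelSum b (‖mobius a z‖ ^ 2) ≤ K * kernelSum b (‖z‖ ^ 2) := by
  have hm := norm_mobius_lt_one ha hz
  have hker := hb.weightedSqBound_kernelSeries hm
  have hmem := hb.mem_diskSeries_of_weightedSqBound hker
  have hpos := hb.kernelSum_pos (sq_nonneg _) (pow_lt_one₀ (norm_nonneg _) hm two_ne_zero)
  have heval := hb.sq_norm_diskEval_le (hGH.mul_mobiusComp _ _ hker) hz
  rw [diskEval_mul hGH.left_mem (mobiusComp_mem_diskSeries ha hmem) hz,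
    diskEval_mobiusComp ha hmem hz, diskEval_kernelSeries, norm_mul, Complex.norm_real, mul_pow,
    Real.norm_of_nonneg hpos.le] at heval
  exact le_of_mul_le_mul_right (by linarith) hpos

theorem IsMobiusIntertwiner.sq_norm_right_mul_kernelSum_le (hb : IsRegularWeight b) (ha : ‖a‖ < 1)
    (hGH : IsMobiusIntertwiner a b K G H) (hz : ‖z‖ < 1) :
    ‖diskEval H z‖ ^ 2 * kernelSum b (‖z‖ ^ 2) ≤ K * kernelSum b (‖mobius a z‖ ^ 2) := by
  have hm := norm_mobius_lt_one ha hz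
  have hker := hb.weightedSqBound_kernelSeries hz
  have hmem := hb.mem_diskSeries_of_weightedSqBound hker
  have hpos := hb.kernelSum_pos (sq_nonneg _) (pow_lt_one₀ (norm_nonneg _) hz two_ne_zero)
  have heval := hb.sq_norm_diskEval_le (hGH.mobiusComp_mul _ _ hker) hm
  rw [diskEval_mobiusComp ha (diskSeries.mul_mem hGH.right_mem hmem) hm, mobius_mobius ha hz,
    diskEval_mul hGH.right_mem hmem hz, diskEval_kernelSeries, norm_mul, Complex.norm_real, mul_pow,
    Real.norm_of_nonneg hpos.le] at heval
  exact le_of_mul_le_mul_right (by linarith) hpos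

section LogConvexity

lemma IsRegularWeight.kernelSum_exp_pos (hb : IsRegularWeight b) (hx : 0 < x) :
    0 < kernelSum b (Real.exp (-x)) :=
  hb.kernelSum_pos (Real.exp_pos _).le (exp_neg_lt_one hx)

lemma IsRegularWeight.kernelSlope_nonneg (hb : IsRegularWeight b) (hx : 0 < x) :
    0 ≤ kernelSlope b x :=
  div_nonneg (tsum_nonneg fun k =>
    mul_nonneg k.cast_nonneg (hb.kernel_nonneg (Real.exp_pos _).le k)) (hb.kernelSum_exp_pos hx).le

-- Jensen's inequality for `exp`: estimate each `exp (-k (y - x))` from below by the tangent of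
-- `exp` at the average exponent `m`.
theorem IsRegularWeight.kernelSlope_mul_sub_le (hb : IsRegularWeight b) (hx : 0 < x) (hy : 0 < y) :
    kernelSlope b x * (x - y) ≤ logKernel b y - logKernel b x := by
  have hposx := hb.kernelSum_exp_pos hx
  set m := kernelSlope b x * (x - y) with hm
  have hmean : (x - y) * ∑' k : ℕ, k * ((b k)⁻¹ * Real.exp (-x) ^ k) =
      m * kernelSum b (Real.exp (-x)) := by
    rw [hm, kernelSlope]
    field_simp
  have hsum := hb.summable_kernel (Real.exp_pos (-x)).le (exp_neg_lt_one hx)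
  have hsum' := hb.summable_natCast_mul_kernel (Real.exp_pos (-x)).le (exp_neg_lt_one hx)
  have htangent := ((hsum.hasSum.mul_left (1 - m)).add (hsum'.hasSum.mul_left (x - y))).mul_left
    (Real.exp m)
  rw [hmean, ← kernelSum, ← add_mul, sub_add_cancel, one_mul] at htangent
  have hle : Real.exp m * kernelSum b (Real.exp (-x)) ≤ kernelSum b (Real.exp (-y)) := by
    refine hasSum_le (fun k => ?_) htangent
      (hb.summable_kernel (Real.exp_pos (-y)).le (exp_neg_lt_one hy)).hasSum
    have hexp : Real.exp (-y) ^ k =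
        Real.exp (-x) ^ k * (Real.exp m * Real.exp (k * (x - y) - m)) := by
      rw [← Real.exp_nat_mul, ← Real.exp_nat_mul, ← Real.exp_add, ← Real.exp_add]
      congr 1
      ring
    have hbk := inv_nonneg.2 (hb.pos k).le
    calc _ = (b k)⁻¹ * (Real.exp (-x) ^ k * (Real.exp m * (k * (x - y) - m + 1))) := by ring
      _ ≤ (b k)⁻¹ * Real.exp (-y) ^ k := by
        rw [hexp]
        gcongr
        exact Real.add_one_le_exp _
  have hlog := Real.log_le_log (by positivity) hle
  rw [Real.log_mul (Real.exp_pos m).ne' hposx.ne', Real.log_exp] at hlog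
  rw [logKernel, logKernel]
  linarith

variable {h κ : ℝ → ℝ} {p x₀ C : ℝ}

lemma sub_le_of_convexity_defect_le (hp₀ : 0 < p)
    (hκ : ∀ x y, 0 < x → 0 < y → κ x * (x - y) ≤ h y - h x) (hx : 0 < x)
    (hC : h (p ^ 2 * x) - h x - κ x * ((1 - p ^ 2) * x) ≤ C) :
    h (p * (p * x)) - h (p * x) ≤ p * (h (p * x) - h x) + C := by
  have hslope : (1 + p) * (κ x * (x - p * x)) ≤ (1 + p) * (h (p * x) - h x) := by
    gcongr
    exact hκ x (p * x) hx (by positivity)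
  rw [← mul_assoc, ← sq]
  linarith

-- Where `v ≤ 0` the support line at `x` gives the bound, and elsewhere the one at `q * x` does.
lemma add_slope_add_defect_mul_le {q v y : ℝ}
    (hκ : ∀ x y, 0 < x → 0 < y → κ x * (x - y) ≤ h y - h x) (hq₀ : 0 < q) (hq₁ : q < 1)
    (hx : 0 < x) (hy : 0 < y) (hv : v ≤ 1) (hyv : 0 < v → y ≤ q * x) :
    h x + κ x * (x - y) + (h (q * x) - h x - κ x * ((1 - q) * x)) * v ≤ h y := by
  have hqx : 0 < q * x := by positivity
  have hdefect : 0 ≤ h (q * x) - h x - κ x * ((1 - q) * x) := by linarith [hκ x (q * x) hx hqx]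
  rcases le_or_gt v 0 with hv₀ | hv₀
  · linarith [hκ x y hx hy, mul_nonpos_of_nonneg_of_nonpos hdefect hv₀]
  · have hslope : κ x ≤ κ (q * x) := by
      refine le_of_mul_le_mul_right (a := x - q * x) ?_ (by nlinarith)
      linarith [hκ x (q * x) hx hqx, hκ (q * x) x hqx hx]
    have := mul_le_mul_of_nonneg_right hslope (sub_nonneg.2 (hyv hv₀))
    linarith [hκ (q * x) y hqx hy, mul_le_of_le_one_right hdefect hv]

-- By `hC` the increments `d n` of `h` along the scale `p ^ n * x₀` satisfy
-- `d (n + 1) ≤ p * d n + C` and hence stay bounded.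
theorem exists_mul_slope_le (hp₀ : 0 < p) (hp₁ : p < 1) (hx₀ : 0 < x₀)
    (hκ : ∀ x y, 0 < x → 0 < y → κ x * (x - y) ≤ h y - h x) (hκ₀ : ∀ x, 0 < x → 0 ≤ κ x)
    (hC : ∀ x, 0 < x → x ≤ x₀ → h (p ^ 2 * x) - h x - κ x * ((1 - p ^ 2) * x) ≤ C) :
    ∃ B, ∀ x, 0 < x → x ≤ x₀ → x * κ x ≤ B := by
  have hanti {x y : ℝ} (hy : 0 < y) (hyx : y ≤ x) : h x ≤ h y := by
    have hx := hy.trans_le hyx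
    linarith [hκ x y hx hy, mul_nonneg (hκ₀ x hx) (sub_nonneg.2 hyx)]
  set B := max (h (p * (p * x₀)) - h x₀) (C / (1 - p))
  have hCB : C ≤ (1 - p) * B := by
    rw [← div_le_iff₀' (sub_pos.2 hp₁)]
    exact le_max_right _ _
  have hstep (n : ℕ) : ∀ x, p ^ n * (p * x₀) ≤ x → x ≤ x₀ → h (p * x) - h x ≤ B := by
    induction n with
    | zero =>
      intro x hpx hx
      rw [pow_zero, one_mul] at hpx
      have hx' : 0 < x := (by positivity : 0 < p * x₀).trans_le hpx
      exact le_max_of_le_left (sub_le_sub (hanti (by positivity) (by gcongr)) (hanti hx' hx))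
    | succ n ih =>
      intro x hpx hx
      rcases le_total (p * x₀) x with hle | hle
      · have hx' : 0 < x := (by positivity : 0 < p * x₀).trans_le hle
        exact le_max_of_le_left (sub_le_sub (hanti (by positivity) (by gcongr)) (hanti hx' hx))
      · obtain ⟨y, rfl⟩ : ∃ y, x = p * y := ⟨x / p, by field_simp⟩
        have hy := le_of_mul_le_mul_left hle hp₀
        rw [pow_succ', mul_assoc] at hpx
        have hpy := le_of_mul_le_mul_left hpx hp₀
        have hy₀ : 0 < y := (by positivity : 0 < p ^ n * (p * x₀)).trans_le hpy
        have hdefect := sub_le_of_convexity_defect_le hp₀ hκ hy₀ (hC y hy₀ hy)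
        have hih : p * (h (p * y) - h y) ≤ p * B := by gcongr; exact ih y hpy hy
        linarith
  refine ⟨B / (1 - p), fun x hx hxx₀ => ?_⟩
  obtain ⟨n, hn⟩ := exists_pow_lt_of_lt_one (show 0 < x / (p * x₀) by positivity) hp₁
  rw [lt_div_iff₀ (by positivity)] at hn
  rw [le_div_iff₀ (sub_pos.2 hp₁)]
  linarith [hstep n x hn.le hxx₀, hκ x (p * x) hx (by positivity)]

end LogConvexity

section CircleAverage

variable {ρ : ℝ}

lemma mobius_ne_zero (ha : ‖a‖ < 1) (hz : ‖z‖ < 1) (haz : ‖a‖ < ‖z‖) : mobius a z ≠ 0 :=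
  div_ne_zero (sub_ne_zero.2 fun h => haz.ne (congrArg norm h))
    (one_sub_conj_mul_ne_zero (norm_mul_norm_lt_one ha hz))

lemma circleAverage_log_norm_one_sub_conj_mul (ha : ‖a‖ < 1) (hρ₀ : 0 ≤ ρ) (hρ₁ : ρ < 1) :
    Real.circleAverage (fun z => Real.log ‖1 - starRingEnd ℂ a * z‖) 0 ρ = 0 := by
  rw [AnalyticOnNhd.circleAverage_log_norm_of_ne_zero (g := fun z => 1 - starRingEnd ℂ a * z)]
  · simp
  · exact fun z _ => by fun_prop
  · intro z hz
    rw [mem_closedBall_zero_iff, abs_of_nonneg hρ₀] at hz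
    exact one_sub_conj_mul_ne_zero (norm_mul_norm_lt_one ha (hz.trans_lt hρ₁))

lemma circleIntegrable_log_norm {f : ℂ → ℂ} (hf : ContinuousOn f (Metric.ball 0 1))
    (hρ₀ : 0 ≤ ρ) (hρ₁ : ρ < 1) (hf₀ : ∀ z, ‖z‖ = ρ → f z ≠ 0) :
    CircleIntegrable (fun z => Real.log ‖f z‖) 0 ρ := by
  refine ContinuousOn.circleIntegrable hρ₀ (ContinuousOn.log ?_ fun z hz => ?_)
  · exact (hf.mono (Metric.sphere_subset_closedBall.trans
      (Metric.closedBall_subset_ball hρ₁))).norm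
  · exact norm_ne_zero_iff.2 (hf₀ z (mem_sphere_zero_iff_norm.1 hz))

lemma circleAverage_log_norm_mobius (ha : ‖a‖ < ρ) (hρ : ρ < 1) :
    Real.circleAverage (fun z => Real.log ‖mobius a z‖) 0 ρ = Real.log ρ := by
  have hρ₀ : 0 ≤ ρ := (norm_nonneg a).trans ha.le
  have hden {z : ℂ} (hz : ‖z‖ = ρ) : 1 - starRingEnd ℂ a * z ≠ 0 :=
    one_sub_conj_mul_ne_zero (norm_mul_norm_lt_one (ha.trans hρ) (hz ▸ hρ))
  have hsplit : Real.circleAverage (fun z => Real.log ‖mobius a z‖) 0 ρ =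
      Real.circleAverage ((fun z => Real.log ‖z - a‖) -
        fun z => Real.log ‖1 - starRingEnd ℂ a * z‖) 0 ρ := by
    refine Real.circleAverage_congr_sphere fun z hz => ?_
    rw [abs_of_nonneg hρ₀, mem_sphere_zero_iff_norm] at hz
    have hza : z - a ≠ 0 := sub_ne_zero.2 fun h => ha.ne (h ▸ hz)
    rw [Pi.sub_apply, mobius, norm_div, norm_sub_rev,
      Real.log_div (norm_ne_zero_iff.2 hza) (norm_ne_zero_iff.2 (hden hz))]
  rw [hsplit, Real.circleAverage_sub (circleIntegrable_log_norm_sub_const ρ)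
    (circleIntegrable_log_norm (by fun_prop) hρ₀ hρ fun z hz => hden hz),
    circleAverage_log_norm_one_sub_conj_mul (ha.trans hρ) hρ₀ hρ, sub_zero,
    circleAverage_log_norm_sub_const_of_mem_closedBall]
  rw [mem_closedBall_zero_iff, abs_of_nonneg hρ₀]
  exact ha.le

lemma circleAverage_log_norm_diskEval (hG : G ∈ diskSeries)
    (hG₀ : ∀ z, ‖z‖ < 1 → diskEval G z ≠ 0) (hρ₀ : 0 ≤ ρ) (hρ₁ : ρ < 1) :
    Real.circleAverage (fun z => Real.log ‖diskEval G z‖) 0 ρ = Real.log ‖diskEval G 0‖ := by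
  have hlt {z : ℂ} (hz : z ∈ Metric.closedBall 0 |ρ|) : ‖z‖ < 1 := by
    rw [mem_closedBall_zero_iff, abs_of_nonneg hρ₀] at hz
    exact hz.trans_lt hρ₁
  refine AnalyticOnNhd.circleAverage_log_norm_of_ne_zero (fun z hz => ?_) fun z hz => hG₀ z (hlt hz)
  exact (differentiableOn_diskEval hG).analyticAt
    (Metric.isOpen_ball.mem_nhds (mem_ball_zero_iff.2 (hlt hz)))

-- With `z = ρ * exp (i θ)` and `a = ‖a‖`, the integrand is `(cos θ ^ 2 - cos θ) / 2`.
lemma circleAverage_re_sq_sub_re (ha : a ≠ 0) (hρ : 0 < ρ) :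
    Real.circleAverage (fun z => (((starRingEnd ℂ a * z).re / (‖a‖ * ρ)) ^ 2 -
      (starRingEnd ℂ a * z).re / (‖a‖ * ρ)) / 2) 0 ρ = 1 / 4 := by
  have ha' : 0 < ‖a‖ := norm_pos_iff.2 ha
  set f : ℂ → ℂ := fun z => 1 / 4 + (starRingEnd ℂ a * z / (‖a‖ * ρ)) ^ 2 / 4 -
    starRingEnd ℂ a * z / (‖a‖ * ρ) / 2 with hf
  have hdiff : Differentiable ℂ f := by fun_prop
  calc _ = Real.circleAverage (Complex.reCLM ∘ f) 0 ρ := by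
        refine Real.circleAverage_congr_sphere fun z hz => ?_
        rw [abs_of_pos hρ, mem_sphere_zero_iff_norm] at hz
        set w := starRingEnd ℂ a * z / (‖a‖ * ρ) with hw
        have hre : (starRingEnd ℂ a * z).re / (‖a‖ * ρ) = w.re := by
          rw [hw, ← Complex.ofReal_mul, Complex.div_ofReal_re]
        have hnorm : w.re ^ 2 + w.im ^ 2 = 1 := by
          rw [sq, sq, ← Complex.normSq_apply, Complex.normSq_eq_norm_sq, hw, norm_div, norm_mul,
            norm_mul, Complex.norm_conj, hz, Complex.norm_real, Complex.norm_real, norm_norm,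
            Real.norm_of_nonneg hρ.le, div_self (by positivity), one_pow]
        have hf_re : (f z).re = 1 / 4 + (w.re ^ 2 - w.im ^ 2) / 4 - w.re / 2 := by
          simp only [hf, ← hw, sq, Complex.sub_re, Complex.add_re, Complex.mul_re,
            Complex.div_ofNat_re, Complex.one_re]
        rw [hre, Function.comp_apply, Complex.reCLM_apply, hf_re]
        linarith
    _ = Complex.reCLM (Real.circleAverage f 0 ρ) :=
        ContinuousLinearMap.circleAverage_comp_comm _
          hdiff.continuous.continuousOn.circleIntegrable'
    _ = 1 / 4 := by
        rw [hdiff.diffContOnCl.circleAverage]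
        simp [hf]

lemma circleIntegrable_re_sq_sub_re (a : ℂ) (hρ : 0 ≤ ρ) :
    CircleIntegrable (fun z => (((starRingEnd ℂ a * z).re / (‖a‖ * ρ)) ^ 2 -
      (starRingEnd ℂ a * z).re / (‖a‖ * ρ)) / 2) 0 ρ :=
  ContinuousOn.circleIntegrable hρ (by fun_prop)

end CircleAverage

lemma neg_log_sq_norm_mobius_le (ha : ‖a‖ < 1) (hx : 0 < x) (hxa : x ≤ ‖a‖ ^ 2 / 2)
    (hz : ‖z‖ ^ 2 = Real.exp (-x)) (hre : (starRingEnd ℂ a * z).re ≤ 0) :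
    -Real.log (‖mobius a z‖ ^ 2) ≤ (1 - ‖a‖ ^ 2 / 2) * x := by
  have hz₁ : ‖z‖ < 1 := by
    rw [← sq_lt_one_iff₀ (norm_nonneg z), hz]
    exact exp_neg_lt_one hx
  have ha₂ := one_sub_sq_norm_pos ha
  have hden : 1 ≤ ‖1 - starRingEnd ℂ a * z‖ ^ 2 := by
    rw [← Complex.normSq_eq_norm_sq, Complex.normSq_apply, Complex.sub_re, Complex.one_re]
    nlinarith [mul_self_nonneg (1 - starRingEnd ℂ a * z).im]
  have hs : 1 - ‖mobius a z‖ ^ 2 ≤ (1 - ‖a‖ ^ 2) * x := by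
    rw [one_sub_sq_norm_mobius ha hz₁, hz, div_le_iff₀ (by positivity)]
    have := Real.add_one_le_exp (-x)
    calc (1 - ‖a‖ ^ 2) * (1 - Real.exp (-x)) ≤ (1 - ‖a‖ ^ 2) * x := by gcongr; linarith
      _ ≤ _ := le_mul_of_one_le_right (by positivity) hden
  generalize ‖a‖ ^ 2 = A at *
  generalize ‖mobius a z‖ ^ 2 = s at *
  have hA : 0 ≤ A := by linarith
  have hs' : 1 - s ≤ (1 - A) * (A / 2) := hs.trans (by gcongr)
  have hs₀ : 0 < s := by nlinarith
  have hinv : s⁻¹ - 1 ≤ (1 - A / 2) * x := by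
    have hratio : 1 - A ≤ (1 - A / 2) * s := by nlinarith [mul_nonneg (sq_nonneg A) ha₂.le]
    rw [inv_eq_one_div, div_sub_one hs₀.ne', div_le_iff₀ hs₀]
    nlinarith
  linarith [Real.one_sub_inv_le_log_of_pos hs₀]

lemma IsMobiusIntertwiner.diskEval_left_ne_zero (hGH : IsMobiusIntertwiner a b K G H)
    (hz : ‖z‖ < 1) : diskEval G z ≠ 0 := by
  refine left_ne_zero_of_mul (b := diskEval H z) ?_
  rw [← diskEval_mul hGH.left_mem hGH.right_mem hz, hGH.mul_eq_one, diskEval_one]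
  exact one_ne_zero

lemma log_norm_diskEval_add_slope_add_defect_le (hb : IsRegularWeight b) (ha : ‖a‖ < 1)
    (hGH : IsMobiusIntertwiner a b K G H) (hx : 0 < x) (hxa : x ≤ ‖a‖ ^ 2 / 2)
    {q ρ u : ℝ} (hq : 1 - ‖a‖ ^ 2 / 2 ≤ q) (hq₁ : q < 1) (hρ : ρ ^ 2 = Real.exp (-x))
    (hz : ‖z‖ = ρ) (haz : ‖a‖ < ρ) (hu : u = (starRingEnd ℂ a * z).re / (‖a‖ * ρ)) :
    2 * Real.log ‖diskEval G z‖ + kernelSlope b x * (x + 2 * Real.log ‖mobius a z‖) +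
      (logKernel b (q * x) - logKernel b x - kernelSlope b x * ((1 - q) * x)) * ((u ^ 2 - u) / 2)
      ≤ Real.log K := by
  have hz₁ : ‖z‖ < 1 := by
    rw [← sq_lt_one_iff₀ (norm_nonneg z), hz, hρ]
    exact exp_neg_lt_one hx
  have hm : 0 < ‖mobius a z‖ := norm_pos_iff.2 (mobius_ne_zero ha hz₁ (hz ▸ haz))
  have hm₁ := pow_lt_one₀ hm.le (norm_mobius_lt_one ha hz₁) two_ne_zero
  have hy : 0 < -Real.log (‖mobius a z‖ ^ 2) := neg_pos.2 (Real.log_neg (by positivity) hm₁)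
  have hρ₀ : 0 < ρ := (norm_nonneg a).trans_lt haz
  have hu₁ : |u| ≤ 1 := by
    rw [hu, abs_div, abs_of_nonneg (by positivity : 0 ≤ ‖a‖ * ρ)]
    refine div_le_one_of_le₀ ((Complex.abs_re_le_norm _).trans ?_) (by positivity)
    rw [norm_mul, Complex.norm_conj, hz]
  obtain ⟨hu₂, hu₃⟩ := abs_le.1 hu₁
  have hsupport := add_slope_add_defect_mul_le (v := (u ^ 2 - u) / 2)
    (fun x y => hb.kernelSlope_mul_sub_le) (by nlinarith [one_sub_sq_norm_pos ha]) hq₁ hx hy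
    (by nlinarith) fun hv => ?_
  · have hker := hGH.sq_norm_left_mul_kernelSum_le hb ha hz₁
    have hG := norm_pos_iff.2 (hGH.diskEval_left_ne_zero hz₁)
    have hS := hb.kernelSum_pos (sq_nonneg ‖mobius a z‖) hm₁
    have hlog := Real.log_le_log (by positivity) hker
    rw [hz, hρ, Real.log_mul (by positivity) hS.ne', Real.log_mul hGH.const_pos.ne'
      (hb.kernelSum_exp_pos hx).ne', Real.log_pow, ← logKernel] at hlog
    rw [logKernel.eq_1 b (-_), neg_neg, Real.exp_log (by positivity), Real.log_pow] at hsupport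
    push_cast at hsupport hlog
    linarith
  · refine (neg_log_sq_norm_mobius_le ha hx hxa (hz ▸ hρ) ?_).trans (by gcongr)
    by_contra! hre
    have : 0 ≤ u := hu ▸ by positivity
    nlinarith

theorem logKernel_convexity_defect_le (hb : IsRegularWeight b) (ha : ‖a‖ < 1) (ha₀ : a ≠ 0)
    (hGH : IsMobiusIntertwiner a b K G H) (hx : 0 < x) (hxa : x ≤ ‖a‖ ^ 2 / 2)
    (hax : ‖a‖ ^ 2 < Real.exp (-x)) {q : ℝ} (hq : 1 - ‖a‖ ^ 2 / 2 ≤ q) (hq₁ : q < 1) :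
    logKernel b (q * x) - logKernel b x - kernelSlope b x * ((1 - q) * x) ≤
      4 * (Real.log K - 2 * Real.log ‖diskEval G 0‖) := by
  set Δ := logKernel b (q * x) - logKernel b x - kernelSlope b x * ((1 - q) * x)
  set ρ := Real.exp (-x / 2) with hρ
  have hρ₂ : ρ ^ 2 = Real.exp (-x) := by rw [hρ, ← Real.exp_nat_mul]; congr 1; push_cast; ring
  have hρ₀ : 0 < ρ := Real.exp_pos _
  have hρ₁ : ρ < 1 := Real.exp_lt_one_iff.2 (by linarith)
  have haρ : ‖a‖ < ρ := lt_of_pow_lt_pow_left₀ 2 hρ₀.le (hρ₂ ▸ hax)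
  have hlogρ : Real.log ρ = -x / 2 := Real.log_exp _
  have hiG := circleIntegrable_log_norm (differentiableOn_diskEval hGH.left_mem).continuousOn
    hρ₀.le hρ₁ fun z hz => hGH.diskEval_left_ne_zero (hz ▸ hρ₁)
  have him := circleIntegrable_log_norm (differentiableOn_mobius ha).continuousOn
    hρ₀.le hρ₁ fun z hz => mobius_ne_zero ha (hz ▸ hρ₁) (hz ▸ haρ)
  have hiu := circleIntegrable_re_sq_sub_re a hρ₀.le
  have hle := Real.circleAverage_mono_on_of_le_circle (a := Real.log K - kernelSlope b x * x)
    (((hiG.const_smul (a := (2 : ℝ))).add (him.const_smul (a := 2 * kernelSlope b x))).add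
      (hiu.const_smul (a := Δ))) fun z hz => by
    rw [abs_of_pos hρ₀, mem_sphere_zero_iff_norm] at hz
    have := log_norm_diskEval_add_slope_add_defect_le hb ha hGH hx hxa hq hq₁ hρ₂ hz haρ rfl
    simp only [Pi.add_apply, Pi.smul_apply, smul_eq_mul]
    linarith
  rw [Real.circleAverage_add ((hiG.const_smul).add him.const_smul) hiu.const_smul,
    Real.circleAverage_add hiG.const_smul him.const_smul, Real.circleAverage_smul,
    Real.circleAverage_smul, Real.circleAverage_smul, circleAverage_log_norm_mobius haρ hρ₁,
    circleAverage_log_norm_diskEval hGH.left_mem (fun z hz => hGH.diskEval_left_ne_zero hz)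
      hρ₀.le hρ₁, circleAverage_re_sq_sub_re ha₀ hρ₀, hlogρ] at hle
  simp only [smul_eq_mul] at hle
  linarith

theorem IsMobiusIntertwiner.exists_mul_kernelSlope_le (hb : IsRegularWeight b) (ha : ‖a‖ < 1)
    (ha₀ : a ≠ 0) (hGH : IsMobiusIntertwiner a b K G H) :
    ∃ B x₀, 0 < x₀ ∧ ∀ x, 0 < x → x ≤ x₀ → x * kernelSlope b x ≤ B := by
  have ha₁ := norm_pos_iff.2 ha₀
  have ha₂ := one_sub_sq_norm_pos ha
  have hlog : Real.log (‖a‖ ^ 2) < 0 := Real.log_neg (by positivity) (by linarith)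
  set x₀ := min (‖a‖ ^ 2 / 2) (-Real.log (‖a‖ ^ 2) / 2)
  have hx₀_pos : 0 < x₀ := lt_min (by positivity) (by linarith)
  obtain ⟨B, hB⟩ := exists_mul_slope_le (p := 1 - ‖a‖ ^ 2 / 4) (by linarith)
    (by linarith [sq_pos_of_pos ha₁]) hx₀_pos (fun x y => hb.kernelSlope_mul_sub_le)
    (fun x => hb.kernelSlope_nonneg) fun x hx hxx₀ =>
      logKernel_convexity_defect_le hb ha ha₀ hGH hx (hxx₀.trans (min_le_left _ _))
        ((Real.log_lt_iff_lt_exp (by positivity)).1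
          (by linarith [hxx₀.trans (min_le_right _ _)])) (by nlinarith) (by nlinarith)
  exact ⟨B, x₀, hx₀_pos, hB⟩

lemma neg_log_le_two_mul_one_sub {t : ℝ} (ht : 1 / 2 ≤ t) (ht₁ : t ≤ 1) :
    -Real.log t ≤ 2 * (1 - t) := by
  have ht₀ : 0 < t := by linarith
  have hinv : t⁻¹ - 1 ≤ 2 * (1 - t) := by
    rw [inv_eq_one_div, div_sub_one ht₀.ne', div_le_iff₀ ht₀]
    nlinarith
  linarith [Real.one_sub_inv_le_log_of_pos ht₀]

lemma IsRegularWeight.kernelSum_le_exp_mul (hb : IsRegularWeight b) {B m y : ℝ} (hx : 0 < x)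
    (hy : 0 < y) (hxy : x ≤ m * y) (hB : y * kernelSlope b y ≤ B) :
    kernelSum b (Real.exp (-y)) ≤ Real.exp (B * m) * kernelSum b (Real.exp (-x)) := by
  have hm : 0 < m := pos_of_mul_pos_left (hx.trans_le hxy) hy.le
  have hslope := hb.kernelSlope_nonneg hy
  have hlog : logKernel b y ≤ B * m + logKernel b x := by
    have h₁ := mul_le_mul_of_nonneg_left hxy hslope
    have h₂ := mul_le_mul_of_nonneg_right hB hm.le
    linarith [hb.kernelSlope_mul_sub_le hy hx, mul_nonneg hslope hy.le]
  rwa [logKernel, logKernel, ← Real.log_exp (B * m),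
    ← Real.log_mul (Real.exp_pos _).ne' (hb.kernelSum_exp_pos hx).ne',
    Real.log_le_log_iff (hb.kernelSum_exp_pos hy)
      (mul_pos (Real.exp_pos _) (hb.kernelSum_exp_pos hx))] at hlog

theorem IsRegularWeight.exists_kernelSum_le (hb : IsRegularWeight b) {B x₀ Γ : ℝ} (hx₀ : 0 < x₀)
    (hB : ∀ x, 0 < x → x ≤ x₀ → x * kernelSlope b x ≤ B) (hΓ : 0 < Γ) :
    ∃ C, 0 ≤ C ∧ ∀ t τ, 0 ≤ t → t < 1 → 0 ≤ τ → τ < 1 → 1 - t ≤ Γ * (1 - τ) →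
      kernelSum b τ ≤ C * kernelSum b t := by
  set x₁ := min x₀ (1 / (2 * Γ))
  have hx₁_pos : 0 < x₁ := lt_min hx₀ (by positivity)
  have hb₀ := hb.pos 0
  refine ⟨max (kernelSum b (Real.exp (-x₁)) * b 0) (Real.exp (B * (2 * Γ))),
    le_max_of_le_right (Real.exp_pos _).le, fun t τ ht₀ ht₁ hτ₀ hτ₁ hle => ?_⟩
  have ht := hb.kernelSum_pos ht₀ ht₁
  rcases le_or_gt τ (Real.exp (-x₁)) with hτ | hτ
  · calc kernelSum b τ ≤ kernelSum b (Real.exp (-x₁)) :=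
          hb.kernelSum_mono hτ₀ hτ (exp_neg_lt_one hx₁_pos)
      _ = kernelSum b (Real.exp (-x₁)) * b 0 * (b 0)⁻¹ := by field_simp
      _ ≤ _ := mul_le_mul (le_max_left _ _) (hb.inv_zero_le_kernelSum ht₀ ht₁)
          (inv_pos.2 hb₀).le (le_max_of_le_right (Real.exp_pos _).le)
  · have hτ_pos : 0 < τ := (Real.exp_pos _).trans hτ
    set y := -Real.log τ with hy
    have hy₀ : 0 < y := neg_pos.2 (Real.log_neg hτ_pos hτ₁)
    have hyx : y ≤ x₁ := by
      rw [hy, neg_le]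
      exact (Real.lt_log_iff_exp_lt hτ_pos).2 hτ |>.le
    have hΓy : Γ * y ≤ 1 / 2 := by
      calc Γ * y ≤ Γ * (1 / (2 * Γ)) := by gcongr; exact hyx.trans (min_le_right _ _)
        _ = 1 / 2 := by field_simp
    have hty : 1 - t ≤ Γ * y := hle.trans (by gcongr; linarith [Real.log_le_sub_one_of_pos hτ_pos])
    have ht_pos : 0 < t := by linarith
    set x := -Real.log t with hx
    have hx₀ : 0 < x := neg_pos.2 (Real.log_neg ht_pos ht₁)
    have hxy : x ≤ 2 * Γ * y := by linarith [neg_log_le_two_mul_one_sub (by linarith) ht₁.le]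
    have hcomp := hb.kernelSum_le_exp_mul hx₀ hy₀ hxy (hB y hy₀ (hyx.trans (min_le_left _ _)))
    rw [hx, hy, neg_neg, neg_neg, Real.exp_log ht_pos, Real.exp_log hτ_pos] at hcomp
    exact hcomp.trans (mul_le_mul_of_nonneg_right (le_max_right _ _) ht.le)

lemma one_sub_sq_norm_mobius_le (ha : ‖a‖ < 1) (hz : ‖z‖ < 1) :
    1 - ‖mobius a z‖ ^ 2 ≤ ((1 - ‖a‖) ^ 2)⁻¹ * (1 - ‖z‖ ^ 2) := by
  have ha' : 0 < 1 - ‖a‖ := by linarith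
  have hden : 1 - ‖a‖ ≤ ‖1 - starRingEnd ℂ a * z‖ := by
    have := norm_sub_norm_le (1 : ℂ) (starRingEnd ℂ a * z)
    rw [norm_one, norm_mul, Complex.norm_conj] at this
    nlinarith [norm_nonneg a]
  have hz' : 0 ≤ 1 - ‖z‖ ^ 2 := by nlinarith [norm_nonneg z]
  rw [one_sub_sq_norm_mobius ha hz, div_eq_inv_mul]
  have ha₂ := one_sub_sq_norm_pos ha
  gcongr
  exact mul_le_of_le_one_left hz' (sub_le_self 1 (sq_nonneg _))

theorem IsMobiusIntertwiner.exists_norm_diskEval_le (hb : IsRegularWeight b) (ha : ‖a‖ < 1)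
    (ha₀ : a ≠ 0) (hGH : IsMobiusIntertwiner a b K G H) :
    ∃ M, (∀ z, ‖z‖ < 1 → ‖diskEval G z‖ ≤ M) ∧ ∀ z, ‖z‖ < 1 → ‖diskEval H z‖ ≤ M := by
  obtain ⟨B, x₀, hx₀, hB⟩ := hGH.exists_mul_kernelSlope_le hb ha ha₀
  have ha' : 0 < 1 - ‖a‖ := by linarith
  obtain ⟨C, hC, hcomp⟩ := hb.exists_kernelSum_le hx₀ hB (Γ := ((1 - ‖a‖) ^ 2)⁻¹) (by positivity)
  have hle {z w : ℂ} (hz : ‖z‖ < 1) (hw : mobius a z = w) :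
      kernelSum b (‖z‖ ^ 2) ≤ C * kernelSum b (‖w‖ ^ 2) := by
    subst hw
    exact hcomp _ _ (sq_nonneg _)
      (pow_lt_one₀ (norm_nonneg _) (norm_mobius_lt_one ha hz) two_ne_zero) (sq_nonneg _)
      (pow_lt_one₀ (norm_nonneg _) hz two_ne_zero) (one_sub_sq_norm_mobius_le ha hz)
  have hpos {z : ℂ} (hz : ‖z‖ < 1) : 0 < kernelSum b (‖z‖ ^ 2) :=
    hb.kernelSum_pos (sq_nonneg _) (pow_lt_one₀ (norm_nonneg _) hz two_ne_zero)
  have hK := hGH.const_pos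
  refine ⟨√(K * C), fun z hz => ?_, fun z hz => ?_⟩
  all_goals
    have hm := norm_mobius_lt_one ha hz
    apply Real.le_sqrt_of_sq_le
  · refine le_of_mul_le_mul_right ((hGH.sq_norm_left_mul_kernelSum_le hb ha hz).trans ?_) (hpos hm)
    rw [mul_assoc]
    gcongr
    exact hle hz rfl
  · refine le_of_mul_le_mul_right ((hGH.sq_norm_right_mul_kernelSum_le hb ha hz).trans ?_) (hpos hz)
    rw [mul_assoc]
    gcongr
    exact hle hm (mobius_mobius ha hz)

lemma derivative_szegoSeries (a : ℂ) :
    derivative ℂ (szegoSeries a) = C (starRingEnd ℂ a) * szegoSeries a ^ 2 := by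
  have h := congrArg (derivative ℂ) (one_sub_mul_szegoSeries a)
  simp only [Derivation.leibniz, map_sub, smul_eq_mul, derivative_C, derivative_X,
    Derivation.map_one_eq_zero] at h
  linear_combination szegoSeries a * h - derivative ℂ (szegoSeries a) * one_sub_mul_szegoSeries a

lemma derivative_mobiusSeries (a : ℂ) :
    derivative ℂ (mobiusSeries a) = -C ((1 - ‖a‖ ^ 2 : ℝ) : ℂ) * szegoSeries a ^ 2 := by
  rw [ofReal_one_sub_sq_norm, mobiusSeries]
  simp only [Derivation.leibniz, map_sub, smul_eq_mul, derivative_C, derivative_X,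
    derivative_szegoSeries, map_mul, map_one]
  linear_combination szegoSeries a * one_sub_mul_szegoSeries a

lemma coeff_X_mul_derivative (F : ℂ⟦X⟧) (m : ℕ) :
    coeff m (X * derivative ℂ F) = m * coeff m F := by
  cases m with
  | zero => simp
  | succ m =>
    rw [coeff_succ_X_mul, coeff_derivative]
    push_cast
    ring

lemma X_mul_derivative_szegoSeries_mul_pow (a : ℂ) (k : ℕ) :
    C (1 - a * starRingEnd ℂ a) *
        (X * derivative ℂ (szegoSeries a * mobiusSeries a ^ (k + 1))) =
      C ((1 + a * starRingEnd ℂ a) * (k + 1) + a * starRingEnd ℂ a) *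
          (szegoSeries a * mobiusSeries a ^ (k + 1)) -
        C (starRingEnd ℂ a * (k + 2)) * (szegoSeries a * mobiusSeries a ^ (k + 2)) -
        C (a * (k + 1)) * (szegoSeries a * mobiusSeries a ^ k) := by
  have hK := one_sub_mul_szegoSeries a
  rw [Derivation.leibniz, Derivation.leibniz_pow, derivative_szegoSeries, derivative_mobiusSeries,
    ofReal_one_sub_sq_norm]
  simp only [smul_eq_mul, nsmul_eq_mul, Nat.add_sub_cancel, map_mul, map_add, map_sub, map_one,
    map_natCast, map_ofNat, Nat.cast_add, Nat.cast_one]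
  set A : ℂ⟦X⟧ := C a * C (starRingEnd ℂ a) with hA
  have hsq : -(1 - A) ^ 2 * X * szegoSeries a ^ 2 =
      (1 + A) * mobiusSeries a - C (starRingEnd ℂ a) * mobiusSeries a ^ 2 - C a := by
    rw [mobiusSeries, hA]
    linear_combination ((1 + C a * C (starRingEnd ℂ a)) * (C a - X) * szegoSeries a -
      C a * ((1 - C (starRingEnd ℂ a) * X) * szegoSeries a + 1)) * hK
  have hlin : (1 - A) * X * C (starRingEnd ℂ a) * szegoSeries a =
      A - C (starRingEnd ℂ a) * mobiusSeries a := by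
    rw [mobiusSeries, hA]
    linear_combination C a * C (starRingEnd ℂ a) * hK
  linear_combination mobiusSeries a ^ k * ((k : ℂ⟦X⟧) + 1) * szegoSeries a * hsq +
    mobiusSeries a ^ k * szegoSeries a * mobiusSeries a * hlin

theorem compMatrix_recurrence (a : ℂ) (m k : ℕ) :
    starRingEnd ℂ a * (k + 2) * compMatrix a m (k + 2) =
      ((1 + a * starRingEnd ℂ a) * (k + 1) + a * starRingEnd ℂ a -
        m * (1 - a * starRingEnd ℂ a)) * compMatrix a m (k + 1) -
        a * (k + 1) * compMatrix a m k := by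
  have h := congrArg (coeff m) (X_mul_derivative_szegoSeries_mul_pow a k)
  simp only [LinearMap.map_sub, coeff_C_mul, coeff_X_mul_derivative] at h
  simp only [compMatrix]
  linear_combination h

/-- A quadratic expression in three consecutive entries of a row of `compMatrix` which varies slowly
with the column, while its sum over the rows grows linearly. It serves to bound overlaps of
neighbouring columns from below. -/
def rowEnergy (a : ℂ) (m l : ℕ) : ℝ :=
  (l + 2) * ‖compMatrix a m (l + 1)‖ ^ 2 - (l + 1) *
    ((starRingEnd ℂ a / ‖a‖) ^ 2 * compMatrix a m (l + 2) * starRingEnd ℂ (compMatrix a m l)).re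

/-- The squared norm of three consecutive entries of a row of `compMatrix`. -/
def rowMass (a : ℂ) (m l : ℕ) : ℝ := ∑ s ∈ Finset.range 3, ‖compMatrix a m (l + s)‖ ^ 2

lemma rowMass_eq (a : ℂ) (m l : ℕ) : rowMass a m l = ‖compMatrix a m l‖ ^ 2 +
    ‖compMatrix a m (l + 1)‖ ^ 2 + ‖compMatrix a m (l + 2)‖ ^ 2 := by
  simp [rowMass, Finset.sum_range_succ]

lemma rowMass_nonneg (a : ℂ) (m l : ℕ) : 0 ≤ rowMass a m l :=
  Finset.sum_nonneg fun _ _ => sq_nonneg _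

lemma norm_conj_div_norm (ha₀ : a ≠ 0) : ‖starRingEnd ℂ a / (‖a‖ : ℂ)‖ = 1 := by
  simp [norm_ne_zero_iff.2 ha₀]

lemma abs_re_mul_conj_le {u v w : ℂ} (hu : ‖u‖ = 1) :
    |(u * v * starRingEnd ℂ w).re| ≤ (‖v‖ ^ 2 + ‖w‖ ^ 2) / 2 := by
  refine (Complex.abs_re_le_norm _).trans ?_
  rw [norm_mul, norm_mul, hu, one_mul, Complex.norm_conj]
  linarith [two_mul_le_add_sq ‖v‖ ‖w‖]

lemma abs_rowEnergy_le (ha₀ : a ≠ 0) (m l : ℕ) : |rowEnergy a m l| ≤ (l + 2) * rowMass a m l := by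
  have hu : ‖(starRingEnd ℂ a / (‖a‖ : ℂ)) ^ 2‖ = 1 := by
    rw [norm_pow, norm_conj_div_norm ha₀, one_pow]
  have hre := abs_re_mul_conj_le (v := compMatrix a m (l + 2)) (w := compMatrix a m l) hu
  rw [rowEnergy, rowMass_eq]
  refine (abs_sub _ _).trans ?_
  rw [abs_mul, abs_mul, abs_of_nonneg (by positivity : (0 : ℝ) ≤ l + 2),
    abs_of_nonneg (by positivity : (0 : ℝ) ≤ l + 1), abs_of_nonneg (sq_nonneg _)]
  nlinarith [sq_nonneg ‖compMatrix a m l‖, sq_nonneg ‖compMatrix a m (l + 2)‖,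
    Nat.cast_nonneg (α := ℝ) l]

/- The two recurrences at `l` and `l + 1`, multiplied by the conjugates of suitable entries, contain
the same multiple of `m`; eliminating it leaves an identity which no longer involves the row. -/
lemma compMatrix_mul_conj_identity (ha₀ : a ≠ 0) (m l : ℕ) :
    (l + 1 : ℂ) * ((starRingEnd ℂ a / ‖a‖) ^ 2 * compMatrix a m (l + 2) *
        starRingEnd ℂ (compMatrix a m l)) =
      (l + 3) * ((starRingEnd ℂ a / ‖a‖) ^ 2 * compMatrix a m (l + 3) *
          starRingEnd ℂ (compMatrix a m (l + 1))) +
        (l + 2) * (compMatrix a m (l + 1) * starRingEnd ℂ (compMatrix a m (l + 1))) -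
        (1 + ‖a‖ ^ 2) / ‖a‖ * (starRingEnd ℂ a / ‖a‖ * compMatrix a m (l + 2) *
          starRingEnd ℂ (compMatrix a m (l + 1))) -
        (l + 2) * (compMatrix a m (l + 2) * starRingEnd ℂ (compMatrix a m (l + 2))) := by
  have hn : (‖a‖ : ℂ) ≠ 0 := by exact_mod_cast norm_ne_zero_iff.2 ha₀
  have hn₂ : (‖a‖ : ℂ) ^ 2 = a * starRingEnd ℂ a := by
    rw [Complex.mul_conj, Complex.normSq_eq_norm_sq]
    push_cast
    rfl
  have hrec := congrArg (starRingEnd ℂ) (compMatrix_recurrence a m l)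
  have hrec' := compMatrix_recurrence a m (l + 1)
  simp only [map_mul, map_sub, map_add, Complex.conj_conj, map_natCast, map_ofNat, map_one] at hrec
  push_cast [show l + 1 + 1 = l + 2 from rfl, show l + 1 + 2 = l + 3 from rfl] at hrec'
  field_simp
  rw [hn₂]
  linear_combination starRingEnd ℂ a * compMatrix a m (l + 2) * hrec -
    starRingEnd ℂ a * starRingEnd ℂ (compMatrix a m (l + 1)) * hrec'

lemma rowEnergy_succ_sub (ha₀ : a ≠ 0) (m l : ℕ) :
    rowEnergy a m (l + 1) - rowEnergy a m l = ‖compMatrix a m (l + 2)‖ ^ 2 +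
      ((starRingEnd ℂ a / ‖a‖) ^ 2 * compMatrix a m (l + 3) *
        starRingEnd ℂ (compMatrix a m (l + 1))).re -
      (1 + ‖a‖ ^ 2) / ‖a‖ * (starRingEnd ℂ a / ‖a‖ * compMatrix a m (l + 2) *
        starRingEnd ℂ (compMatrix a m (l + 1))).re := by
  have h := compMatrix_mul_conj_identity ha₀ m l
  simp only [Complex.mul_conj (compMatrix a m _), Complex.normSq_eq_norm_sq] at h
  have hre := congrArg Complex.re h
  rw [show (l + 1 : ℂ) = ((l + 1 : ℝ) : ℂ) by push_cast; rfl,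
    show (l + 2 : ℂ) = ((l + 2 : ℝ) : ℂ) by push_cast; rfl,
    show (l + 3 : ℂ) = ((l + 3 : ℝ) : ℂ) by push_cast; rfl,
    show (1 + (‖a‖ : ℂ) ^ 2) / ‖a‖ = (((1 + ‖a‖ ^ 2) / ‖a‖ : ℝ) : ℂ) by push_cast; rfl] at hre
  simp only [Complex.add_re, Complex.sub_re, Complex.re_ofReal_mul, Complex.ofReal_re] at hre
  simp only [rowEnergy, show l + 1 + 1 = l + 2 from rfl, show l + 1 + 2 = l + 3 from rfl]
  push_cast
  linarith

lemma abs_rowEnergy_succ_sub_le (ha₀ : a ≠ 0) (m l : ℕ) :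
    |rowEnergy a m (l + 1) - rowEnergy a m l| ≤
      (2 + (1 + ‖a‖ ^ 2) / ‖a‖) * rowMass a m (l + 1) := by
  have hu := norm_conj_div_norm ha₀
  have hu₂ : ‖(starRingEnd ℂ a / (‖a‖ : ℂ)) ^ 2‖ = 1 := by rw [norm_pow, hu, one_pow]
  have hp : 0 ≤ (1 + ‖a‖ ^ 2) / ‖a‖ := by positivity
  have h₁ := abs_re_mul_conj_le (v := compMatrix a m (l + 3)) (w := compMatrix a m (l + 1)) hu₂
  have h₂ := mul_le_mul_of_nonneg_left (abs_re_mul_conj_le (v := compMatrix a m (l + 2))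
    (w := compMatrix a m (l + 1)) hu) hp
  rw [rowEnergy_succ_sub ha₀, rowMass_eq, show l + 1 + 1 = l + 2 from rfl,
    show l + 1 + 2 = l + 3 from rfl]
  refine (abs_sub _ _).trans ((add_le_add_left (abs_add_le _ _) _).trans ?_)
  rw [abs_mul, abs_of_nonneg hp, abs_of_nonneg (sq_nonneg _)]
  nlinarith [mul_nonneg hp (sq_nonneg ‖compMatrix a m (l + 1)‖), mul_nonneg hp
    (sq_nonneg ‖compMatrix a m (l + 2)‖), mul_nonneg hp (sq_nonneg ‖compMatrix a m (l + 3)‖),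
    sq_nonneg ‖compMatrix a m (l + 1)‖, sq_nonneg ‖compMatrix a m (l + 2)‖,
    sq_nonneg ‖compMatrix a m (l + 3)‖]

lemma hasSum_rowMass (ha : ‖a‖ < 1) (l : ℕ) :
    HasSum (fun m => rowMass a m l) (3 * (1 - ‖a‖ ^ 2)⁻¹) := by
  simpa [rowMass] using hasSum_sum fun s (_ : s ∈ Finset.range 3) =>
    hasSum_sq_norm_compMatrix ha (l + s)

lemma hasSum_rowEnergy (ha : ‖a‖ < 1) (l : ℕ) :
    HasSum (fun m => rowEnergy a m l) ((l + 2) * (1 - ‖a‖ ^ 2)⁻¹) := by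
  have hcross := Complex.hasSum_re
    ((hasSum_compMatrix_mul_conj ha l (l + 2)).mul_left ((starRingEnd ℂ a / ‖a‖) ^ 2))
  rw [if_neg (by lia), mul_zero, Complex.zero_re] at hcross
  simpa only [rowEnergy, mul_assoc, mul_zero, sub_zero] using
    ((hasSum_sq_norm_compMatrix ha (l + 1)).mul_left (l + 2 : ℝ)).sub
      (hcross.mul_left (l + 1 : ℝ))

lemma sum_abs_rowEnergy_add_sub_le (ha : ‖a‖ < 1) (ha₀ : a ≠ 0) (l d n : ℕ) :
    ∑ m ∈ Finset.range n, |rowEnergy a m (l + d) - rowEnergy a m l| ≤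
      d * ((2 + (1 + ‖a‖ ^ 2) / ‖a‖) * (3 * (1 - ‖a‖ ^ 2)⁻¹)) := by
  induction d with
  | zero => simp
  | succ d ih =>
    have hstep : ∑ m ∈ Finset.range n, |rowEnergy a m (l + d + 1) - rowEnergy a m (l + d)| ≤
        (2 + (1 + ‖a‖ ^ 2) / ‖a‖) * (3 * (1 - ‖a‖ ^ 2)⁻¹) := by
      refine (Finset.sum_le_sum fun m _ => abs_rowEnergy_succ_sub_le ha₀ m (l + d)).trans ?_
      rw [← Finset.mul_sum]
      gcongr
      exact sum_le_hasSum _ (fun m _ => rowMass_nonneg a m _) (hasSum_rowMass ha _)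
    have htri : ∑ m ∈ Finset.range n, |rowEnergy a m (l + (d + 1)) - rowEnergy a m l| ≤
        ∑ m ∈ Finset.range n, (|rowEnergy a m (l + d + 1) - rowEnergy a m (l + d)| +
          |rowEnergy a m (l + d) - rowEnergy a m l|) :=
      Finset.sum_le_sum fun m _ => abs_sub_le _ _ _
    rw [Finset.sum_add_distrib] at htri
    push_cast
    linarith

lemma sum_abs_rowEnergy_sub_le (ha : ‖a‖ < 1) (ha₀ : a ≠ 0) (l l' n : ℕ) :
    ∑ m ∈ Finset.range n, |rowEnergy a m l' - rowEnergy a m l| ≤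
      |(l : ℝ) - l'| * ((2 + (1 + ‖a‖ ^ 2) / ‖a‖) * (3 * (1 - ‖a‖ ^ 2)⁻¹)) := by
  rcases le_total l l' with h | h
  · obtain ⟨d, rfl⟩ := Nat.exists_eq_add_of_le h
    simpa using sum_abs_rowEnergy_add_sub_le ha ha₀ l d n
  · obtain ⟨d, rfl⟩ := Nat.exists_eq_add_of_le h
    simpa [abs_sub_comm] using sum_abs_rowEnergy_add_sub_le ha ha₀ l' d n

lemma rowEnergy_sub_abs_sub_le (ha₀ : a ≠ 0) {l l' : ℕ} (hl : |(l : ℝ) - l'| ≤ l + 1) (m : ℕ) :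
    rowEnergy a m l - |rowEnergy a m l' - rowEnergy a m l| ≤ 2 * (l + 2) *
      ((∑ s ∈ Finset.range 3, ‖compMatrix a m (l' + s)‖) *
        ∑ s ∈ Finset.range 3, ‖compMatrix a m (l + s)‖) := by
  have hmass (l : ℕ) : rowMass a m l ≤ (∑ s ∈ Finset.range 3, ‖compMatrix a m (l + s)‖) ^ 2 :=
    Finset.sum_sq_le_sq_sum_of_nonneg fun _ _ => norm_nonneg _
  set S := ∑ s ∈ Finset.range 3, ‖compMatrix a m (l + s)‖
  set S' := ∑ s ∈ Finset.range 3, ‖compMatrix a m (l' + s)‖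
  have hS : 0 ≤ S := Finset.sum_nonneg fun _ _ => norm_nonneg _
  have hS' : 0 ≤ S' := Finset.sum_nonneg fun _ _ => norm_nonneg _
  have hle : rowEnergy a m l - |rowEnergy a m l' - rowEnergy a m l| ≤ 2 * (l + 2) * S ^ 2 := by
    calc _ ≤ |rowEnergy a m l| := (sub_le_self _ (abs_nonneg _)).trans (le_abs_self _)
      _ ≤ (l + 2) * rowMass a m l := abs_rowEnergy_le ha₀ m l
      _ ≤ 2 * (l + 2) * S ^ 2 :=
        mul_le_mul (by linarith [Nat.cast_nonneg (α := ℝ) l]) (hmass l) (rowMass_nonneg a m l)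
          (by positivity)
  have hle' : rowEnergy a m l - |rowEnergy a m l' - rowEnergy a m l| ≤ 2 * (l + 2) * S' ^ 2 := by
    calc _ ≤ |rowEnergy a m l'| := by
          linarith [le_abs_self (rowEnergy a m l'), neg_abs_le (rowEnergy a m l' - rowEnergy a m l)]
      _ ≤ (l' + 2) * rowMass a m l' := abs_rowEnergy_le ha₀ m l'
      _ ≤ 2 * (l + 2) * S' ^ 2 :=
        mul_le_mul (by linarith [neg_abs_le ((l : ℝ) - l')]) (hmass l') (rowMass_nonneg a m l')
          (by positivity)
  rcases le_total S S' with h | h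
  · exact hle.trans (by gcongr; nlinarith)
  · exact hle'.trans (by gcongr; nlinarith)

lemma sum_mul_sum_norm_compMatrix_le {l l' n : ℕ} {τ : ℝ}
    (hτ : ∀ s < 3, ∀ s' < 3, ∑ m ∈ Finset.range n,
      ‖compMatrix a m (l' + s)‖ * ‖compMatrix a m (l + s')‖ ≤ τ) :
    ∑ m ∈ Finset.range n, (∑ s ∈ Finset.range 3, ‖compMatrix a m (l' + s)‖) *
      ∑ s ∈ Finset.range 3, ‖compMatrix a m (l + s)‖ ≤ 9 * τ := by
  simp only [Finset.sum_mul_sum]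
  rw [Finset.sum_comm]
  calc _ = ∑ s ∈ Finset.range 3, ∑ s' ∈ Finset.range 3, ∑ m ∈ Finset.range n,
        ‖compMatrix a m (l' + s)‖ * ‖compMatrix a m (l + s')‖ :=
      Finset.sum_congr rfl fun s _ => Finset.sum_comm
    _ ≤ ∑ _ ∈ Finset.range 3, ∑ _ ∈ Finset.range 3, τ :=
      Finset.sum_le_sum fun s hs => Finset.sum_le_sum fun s' hs' =>
        hτ s (Finset.mem_range.1 hs) s' (Finset.mem_range.1 hs')
    _ = 9 * τ := by
      simp only [Finset.sum_const, Finset.card_range, nsmul_eq_mul]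
      push_cast
      ring

theorem exists_compMatrix_overlap_ge (ha : ‖a‖ < 1) (ha₀ : a ≠ 0) :
    ∃ δ c : ℝ, 0 < δ ∧ 0 < c ∧ ∀ (l l' : ℕ) (τ : ℝ), |(l : ℝ) - l'| ≤ δ * (l + 1) →
      (∀ s < 3, ∀ s' < 3, ∀ n, ∑ m ∈ Finset.range n,
        ‖compMatrix a m (l' + s)‖ * ‖compMatrix a m (l + s')‖ ≤ τ) → c ≤ τ := by
  have hA := one_sub_sq_norm_pos ha
  set A := (1 - ‖a‖ ^ 2)⁻¹
  have hA₀ : 0 < A := inv_pos.2 hA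
  set p := 2 + (1 + ‖a‖ ^ 2) / ‖a‖
  have hp : 2 ≤ p := le_add_of_nonneg_right (by positivity)
  refine ⟨1 / (6 * p), A / 36, by positivity, by positivity, fun l l' τ hl hτ => ?_⟩
  have hδ : 1 / (6 * p) ≤ 1 := by
    rw [div_le_one (by positivity)]
    linarith
  have hl₁ : |(l : ℝ) - l'| ≤ l + 1 := hl.trans (mul_le_of_le_one_left (by positivity) hδ)
  have hpartial (n : ℕ) : ∑ m ∈ Finset.range n, rowEnergy a m l ≤
      |(l : ℝ) - l'| * (p * (3 * A)) + 2 * (l + 2) * (9 * τ) := by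
    have hpoint := Finset.sum_le_sum fun m (_ : m ∈ Finset.range n) =>
      rowEnergy_sub_abs_sub_le ha₀ hl₁ m
    rw [Finset.sum_sub_distrib, ← Finset.mul_sum] at hpoint
    have hτn := mul_le_mul_of_nonneg_left (sum_mul_sum_norm_compMatrix_le
      fun s hs s' hs' => hτ s hs s' hs' n) (by positivity : (0 : ℝ) ≤ 2 * (l + 2))
    linarith [sum_abs_rowEnergy_sub_le ha ha₀ l l' n]
  have hlim := le_of_tendsto' (hasSum_rowEnergy ha l).tendsto_sum_nat hpartial
  have hvar : |(l : ℝ) - l'| * (p * (3 * A)) ≤ (l + 1) * A / 2 := by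
    calc _ ≤ 1 / (6 * p) * (l + 1) * (p * (3 * A)) := by gcongr
      _ = _ := by
        field_simp
        ring
  have hmul : ((l : ℝ) + 2) * (A / 36) ≤ (l + 2) * τ := by nlinarith
  exact le_of_mul_le_mul_left hmul (by positivity)

lemma IsRegularWeight.exists_weightedSqBound_coe_mul (hb : IsRegularWeight b) (p : Polynomial ℂ) :
    ∃ K, 0 ≤ K ∧ ∀ F M, WeightedSqBound b F M → WeightedSqBound b (p * F) (K * M) := by
  have hb₀ (k : ℕ) : 0 ≤ b k := (hb.pos k).le
  induction p using Polynomial.induction_on with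
  | C c =>
    refine ⟨‖c‖ ^ 2, sq_nonneg _, fun F M hF => ?_⟩
    rw [Polynomial.coe_C]
    exact hF.C_mul c
  | add p q hp hq =>
    obtain ⟨K, hK, hp⟩ := hp
    obtain ⟨K', hK', hq⟩ := hq
    refine ⟨2 * K + 2 * K', by positivity, fun F M hF => ?_⟩
    rw [Polynomial.coe_add, add_mul]
    exact ((hp F M hF).add hb₀ (hq F M hF)).mono (le_of_eq (by ring))
  | monomial n c h =>
    obtain ⟨K, hK, h⟩ := h
    obtain ⟨K', hK', hsucc⟩ := hb.exists_succ_le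
    refine ⟨K * K', by positivity, fun F M hF => ?_⟩
    rw [pow_succ, ← mul_assoc, Polynomial.coe_mul, Polynomial.coe_X, mul_assoc, mul_assoc]
    exact h _ _ (hF.X_mul hsucc hK'.le)

lemma weightedSqBound_X_pow (hb : ∀ k, 0 ≤ b k) (k : ℕ) : WeightedSqBound b (X ^ k) (b k) := by
  intro n
  have hterm (j : ℕ) : b j * ‖coeff j (X ^ k : ℂ⟦X⟧)‖ ^ 2 = if j = k then b k else 0 := by
    rw [coeff_X_pow]
    split_ifs with h <;> simp [h]
  simp only [hterm, Finset.sum_ite_eq']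
  split_ifs
  exacts [le_rfl, hb k]

section WeightedComposition

variable {L : ℂ⟦X⟧}

-- Test `hL` on the polynomial with coefficients `conj (coeff j (L * mobiusSeries a ^ m)) / b m`,
-- `m < n`.
lemma sum_sq_norm_coeff_div_le (hb : IsRegularWeight b) (ha : ‖a‖ < 1) (hK : 0 ≤ K)
    (hL : ∀ F M, WeightedSqBound b F M → WeightedSqBound b (L * mobiusComp a F) (K * M))
    (j n : ℕ) :
    ∑ m ∈ Finset.range n, ‖coeff j (L * mobiusSeries a ^ m)‖ ^ 2 / b m ≤ K / b j := by
  set x : ℕ → ℂ := fun m => coeff j (L * mobiusSeries a ^ m)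
  set S := ∑ m ∈ Finset.range n, ‖x m‖ ^ 2 / b m
  set T : ℂ⟦X⟧ := .mk fun m => if m < n then starRingEnd ℂ (x m) / b m else 0
  have hterm (m : ℕ) : b m * ‖coeff m T‖ ^ 2 = if m < n then ‖x m‖ ^ 2 / b m else 0 := by
    have := (hb.pos m).ne'
    rw [coeff_mk]
    split_ifs
    · rw [norm_div, RCLike.norm_conj, Complex.norm_real, Real.norm_of_nonneg (hb.pos m).le]
      field_simp
    · simp
  have hT : WeightedSqBound b T S := fun N => by
    simp only [hterm]
    rw [← Finset.sum_filter]
    exact Finset.sum_le_sum_of_subset_of_nonneg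
      (fun m hm => Finset.mem_range.2 (Finset.mem_filter.1 hm).2)
      fun m _ _ => div_nonneg (sq_nonneg _) (hb.pos m).le
  have hcoeff : coeff j (L * mobiusComp a T) = (S : ℂ) := by
    refine (hasSum_coeff_mul_mobiusComp ha (hb.mem_diskSeries_of_weightedSqBound hT) L j).unique ?_
    have hzero : ∀ m ∉ Finset.range n, coeff m T * coeff j (L * mobiusSeries a ^ m) = 0 :=
      fun m hm => by rw [coeff_mk, if_neg (by simpa using hm), zero_mul]
    have hS : ∑ m ∈ Finset.range n, coeff m T * coeff j (L * mobiusSeries a ^ m) = (S : ℂ) := by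
      rw [Complex.ofReal_sum]
      refine Finset.sum_congr rfl fun m hm => ?_
      rw [coeff_mk, if_pos (Finset.mem_range.1 hm), div_mul_eq_mul_div, Complex.conj_mul']
      push_cast
      rfl
    exact hS ▸ hasSum_sum_of_ne_finset_zero hzero
  have hle := (hL T S hT).coeff_le (fun k => (hb.pos k).le) j
  rw [hcoeff, Complex.norm_real, Real.norm_eq_abs, sq_abs] at hle
  rw [le_div_iff₀ (hb.pos j)]
  rcases hT.nonneg.eq_or_lt with h | h
  · rw [← h, zero_mul]
    exact hK
  · exact le_of_mul_le_mul_right (by linarith) h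

theorem sum_norm_coeff_mul_norm_coeff_le (hb : IsRegularWeight b) (ha : ‖a‖ < 1) (hK : 0 ≤ K)
    (hL : ∀ F M, WeightedSqBound b F M → WeightedSqBound b (L * mobiusComp a F) (K * M))
    (j k n : ℕ) :
    ∑ m ∈ Finset.range n, ‖coeff j (L * mobiusSeries a ^ m)‖ * ‖coeff m (L * mobiusSeries a ^ k)‖ ≤
      K * √(b k / b j) := by
  have hrow := sum_sq_norm_coeff_div_le hb ha hK hL j n
  have hcol := hL _ _ (weightedSqBound_X_pow (fun k => (hb.pos k).le) k) n
  rw [mobiusComp_pow ha X_mem_diskSeries, mobiusComp_X ha] at hcol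
  have hsq := Finset.sum_sq_le_sum_mul_sum_of_sq_le_mul (Finset.range n)
    (r := fun m => ‖coeff j (L * mobiusSeries a ^ m)‖ * ‖coeff m (L * mobiusSeries a ^ k)‖)
    (f := fun m => ‖coeff j (L * mobiusSeries a ^ m)‖ ^ 2 / b m)
    (g := fun m => b m * ‖coeff m (L * mobiusSeries a ^ k)‖ ^ 2)
    (fun m _ => div_nonneg (sq_nonneg _) (hb.pos m).le)
    (fun m _ => mul_nonneg (hb.pos m).le (sq_nonneg _))
    (fun m _ => le_of_eq (by have := (hb.pos m).ne'; field_simp))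
  rw [← Real.sqrt_sq hK, ← Real.sqrt_mul (sq_nonneg K)]
  refine Real.le_sqrt_of_sq_le (hsq.trans ?_)
  calc _ ≤ K / b j * (K * b k) :=
        mul_le_mul hrow hcol (Finset.sum_nonneg fun m _ =>
          mul_nonneg (hb.pos m).le (sq_nonneg _)) (div_nonneg hK (hb.pos j).le)
    _ = K ^ 2 * (b k / b j) := by ring

end WeightedComposition

lemma exists_weightedSqBound_sub_coe_le (hM : WeightedSqBound 1 H M) {ε : ℝ} (hε : 0 < ε) :
    ∃ p : Polynomial ℂ, WeightedSqBound 1 (H - p) ε := by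
  have hM' (n : ℕ) : ∑ k ∈ Finset.range n, ‖coeff k H‖ ^ 2 ≤ M := by simpa using hM n
  have hsum := summable_of_sum_range_le (fun _ => sq_nonneg _) hM'
  obtain ⟨i, hi⟩ := ((tendsto_sum_nat_add fun k => ‖coeff k H‖ ^ 2).eventually
    (gt_mem_nhds hε)).exists
  refine ⟨trunc i H, fun n => ?_⟩
  have hcoeff (k : ℕ) : ‖coeff k (H - (trunc i H : ℂ⟦X⟧))‖ ^ 2 =
      if k < i then 0 else ‖coeff k H‖ ^ 2 := by
    rw [map_sub, Polynomial.coeff_coe, coeff_trunc]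
    split_ifs <;> simp
  simp only [Pi.one_apply, one_mul, hcoeff]
  calc _ ≤ ∑ k ∈ Finset.range (i + n), if k < i then 0 else ‖coeff k H‖ ^ 2 :=
        Finset.sum_le_sum_of_subset_of_nonneg (Finset.range_mono (Nat.le_add_left n i))
          fun _ _ _ => by split_ifs <;> positivity
    _ = ∑ k ∈ Finset.range n, ‖coeff (k + i) H‖ ^ 2 := by
      rw [Finset.sum_range_add, Finset.sum_eq_zero fun k hk => if_pos (Finset.mem_range.1 hk),
        zero_add]
      exact Finset.sum_congr rfl fun k _ => by rw [if_neg (by lia), add_comm]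
    _ ≤ ε := (((summable_nat_add_iff i).2 hsum).sum_le_tsum _ fun _ _ => sq_nonneg _).trans hi.le

lemma sum_sq_norm_coeff_mul_szegoSeries_mul_pow_le (ha : ‖a‖ < 1) (hM : WeightedSqBound 1 F M)
    (j n : ℕ) :
    ∑ m ∈ Finset.range n, ‖coeff j (F * (szegoSeries a * mobiusSeries a ^ m))‖ ^ 2 ≤
      (1 - ‖a‖ ^ 2)⁻¹ * M := by
  have hA := one_sub_sq_norm_pos ha
  have hcoeff (m : ℕ) : ‖coeff j (F * (szegoSeries a * mobiusSeries a ^ m))‖ =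
      ‖∑ k ∈ Finset.range (j + 1), starRingEnd ℂ (coeff (j - k) F) * compMatrix a m k‖ := by
    rw [mul_comm F, coeff_mul, Finset.Nat.sum_antidiagonal_eq_sum_range_succ_mk,
      ← Complex.norm_conj, map_sum]
    congr 1
    refine Finset.sum_congr rfl fun k _ => ?_
    rw [map_mul, mul_comm, ← conj_compMatrix a m k, compMatrix]
  have hF : ∑ k ∈ Finset.range (j + 1), ‖starRingEnd ℂ (coeff (j - k) F)‖ ^ 2 ≤ M := by
    have h := hM (j + 1)
    rw [← Finset.sum_range_reflect] at h
    simpa using h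
  simp only [hcoeff]
  exact (sum_le_hasSum _ (fun m _ => sq_nonneg _) (hasSum_sq_norm_sum_compMatrix ha _ _)).trans
    (by gcongr)

lemma sum_mul_le_of_sum_sq_le {s : Finset ℕ} {f g : ℕ → ℝ} {B C : ℝ} (hB : 0 ≤ B) (hC : 0 ≤ C)
    (hf : ∑ m ∈ s, f m ^ 2 ≤ B ^ 2) (hg : ∑ m ∈ s, g m ^ 2 ≤ C ^ 2) :
    ∑ m ∈ s, f m * g m ≤ B * C := by
  refine (le_abs_self _).trans (abs_le_of_sq_le_sq ?_ (by positivity))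
  rw [mul_pow]
  exact (Finset.sum_mul_sq_le_sq_mul_sq s f g).trans
    (mul_le_mul hf hg (Finset.sum_nonneg fun _ _ => sq_nonneg _) (sq_nonneg B))

lemma sum_norm_mul_norm_le_of_sub {s : Finset ℕ} {v w v' w' : ℕ → ℂ} {B ε : ℝ} (hB : 0 ≤ B)
    (hε : 0 ≤ ε) (hv : ∑ m ∈ s, ‖v m‖ ^ 2 ≤ B ^ 2) (hw : ∑ m ∈ s, ‖w m‖ ^ 2 ≤ B ^ 2)
    (hv' : ∑ m ∈ s, ‖v m - v' m‖ ^ 2 ≤ ε ^ 2) (hw' : ∑ m ∈ s, ‖w m - w' m‖ ^ 2 ≤ ε ^ 2) :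
    ∑ m ∈ s, ‖v m‖ * ‖w m‖ ≤ ∑ m ∈ s, ‖v' m‖ * ‖w' m‖ + (2 * B + ε) * ε := by
  have hterm (m : ℕ) : ‖v m‖ * ‖w m‖ ≤ ‖v' m‖ * ‖w' m‖ + ‖w m‖ * ‖v m - v' m‖ +
      ‖v m‖ * ‖w m - w' m‖ + ‖v m - v' m‖ * ‖w m - w' m‖ := by
    have hsplit : v m * w m = v' m * w' m + w m * (v m - v' m) + v m * (w m - w' m) -
        (v m - v' m) * (w m - w' m) := by ring
    rw [← norm_mul, hsplit, ← norm_mul, ← norm_mul, ← norm_mul, ← norm_mul]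
    exact (norm_sub_le _ _).trans (add_le_add_left norm_add₃_le _)
  have h₁ := sum_mul_le_of_sum_sq_le hB hε hw hv'
  have h₂ := sum_mul_le_of_sum_sq_le hB hε hv hw'
  have h₃ := sum_mul_le_of_sum_sq_le hε hε hv' hw'
  have hsum := Finset.sum_le_sum fun m (_ : m ∈ s) => hterm m
  simp only [Finset.sum_add_distrib] at hsum
  linarith

lemma norm_one_sub_conj_mul_le (ha : ‖a‖ < 1) (hz : ‖z‖ < 1) : ‖1 - starRingEnd ℂ a * z‖ ≤ 2 := by
  refine (norm_sub_le _ _).trans ?_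
  rw [norm_one, norm_mul, RCLike.norm_conj]
  linarith [norm_mul_norm_lt_one ha hz]

lemma WeightedSqBound.mul_mul_mobiusSeries_pow (ha : ‖a‖ < 1) (hG : G ∈ diskSeries)
    (hM : ∀ z, ‖z‖ < 1 → ‖diskEval G z‖ ≤ M) (hF : WeightedSqBound 1 F N) (k : ℕ) :
    WeightedSqBound 1 (F * (G * mobiusSeries a ^ k)) (M ^ 2 * N) := by
  have hφ := mobiusSeries_mem_diskSeries ha
  rw [mul_comm]
  refine hF.mul_of_norm_le (mul_mem hG (pow_mem hφ k)) fun z hz => ?_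
  rw [diskEval_mul hG (pow_mem hφ k) hz, diskEval_pow hφ hz, diskEval_mobiusSeries ha hz, norm_mul,
    norm_pow]
  exact (mul_le_of_le_one_right (norm_nonneg _)
    (pow_le_one₀ (norm_nonneg _) (norm_mobius_lt_one ha hz).le)).trans (hM z hz)

lemma sum_sq_norm_coeff_mul_mul_mobiusSeries_pow_le (ha : ‖a‖ < 1) (hG : G ∈ diskSeries)
    (hM : ∀ z, ‖z‖ < 1 → ‖diskEval G z‖ ≤ M) (hF : WeightedSqBound 1 F N) (j n : ℕ) :
    ∑ m ∈ Finset.range n, ‖coeff j (F * (G * mobiusSeries a ^ m))‖ ^ 2 ≤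
      (1 - ‖a‖ ^ 2)⁻¹ * ((M * 2) ^ 2 * N) := by
  have hmem := one_sub_C_mul_X_mem_diskSeries (starRingEnd ℂ a)
  have hprod : WeightedSqBound 1 (G * (1 - C (starRingEnd ℂ a) * X) * F) ((M * 2) ^ 2 * N) := by
    refine hF.mul_of_norm_le (mul_mem hG hmem) fun z hz => ?_
    rw [diskEval_mul hG hmem hz, diskEval_sub (one_mem _)
      (mul_mem (C_mem_diskSeries _) X_mem_diskSeries) hz, diskEval_mul (C_mem_diskSeries _)
      X_mem_diskSeries hz, diskEval_one, diskEval_C, diskEval_X, norm_mul]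
    exact mul_le_mul (hM z hz) (norm_one_sub_conj_mul_le ha hz) (norm_nonneg _)
      ((norm_nonneg _).trans (hM z hz))
  refine le_trans (le_of_eq (Finset.sum_congr rfl fun m _ => ?_))
    (sum_sq_norm_coeff_mul_szegoSeries_mul_pow_le ha hprod j n)
  congr 3
  linear_combination -(F * G * mobiusSeries a ^ m) * one_sub_mul_szegoSeries a

lemma IsMobiusIntertwiner.exists_weightedSqBound_one_right_mul_szegoSeries (ha : ‖a‖ < 1)
    (hGH : IsMobiusIntertwiner a b K G H) (hM : ∀ z, ‖z‖ < 1 → ‖diskEval H z‖ ≤ M) :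
    ∃ N, WeightedSqBound 1 (H * szegoSeries a) N := by
  refine ⟨_, WeightedSqBound.mul_of_norm_le hGH.right_mem hM (N := (1 - ‖a‖ ^ 2)⁻¹) fun n => ?_⟩
  simpa [compMatrix] using
    sum_le_hasSum (Finset.range n) (fun m _ => sq_nonneg _) (hasSum_sq_norm_compMatrix ha 0)

lemma sum_norm_compMatrix_le_of_weightedSqBound_sub (ha : ‖a‖ < 1) (hG : G ∈ diskSeries)
    (hGH : G * H = 1) (hM : ∀ z, ‖z‖ < 1 → ‖diskEval G z‖ ≤ M) {P : ℂ⟦X⟧}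
    (hP : WeightedSqBound 1 (H * szegoSeries a - P) N) {ε : ℝ} (hε : 0 ≤ ε)
    (hrow : (1 - ‖a‖ ^ 2)⁻¹ * ((M * 2) ^ 2 * N) ≤ ε ^ 2) (hcol : M ^ 2 * N ≤ ε ^ 2) (j k n : ℕ) :
    ∑ m ∈ Finset.range n, ‖compMatrix a m j‖ * ‖compMatrix a m k‖ ≤
      ∑ m ∈ Finset.range n, ‖coeff j (P * G * mobiusSeries a ^ m)‖ *
        ‖coeff m (P * G * mobiusSeries a ^ k)‖ + (2 * √(1 - ‖a‖ ^ 2)⁻¹ + ε) * ε := by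
  have hA := inv_pos.2 (one_sub_sq_norm_pos ha)
  have hdiff (m k : ℕ) : compMatrix a m k - coeff m (P * G * mobiusSeries a ^ k) =
      coeff m ((H * szegoSeries a - P) * (G * mobiusSeries a ^ k)) := by
    rw [compMatrix, ← map_sub]
    congr 1
    linear_combination -(szegoSeries a * mobiusSeries a ^ k) * hGH
  have hv (k : ℕ) : ∑ m ∈ Finset.range n, ‖compMatrix a m k‖ ^ 2 ≤ √(1 - ‖a‖ ^ 2)⁻¹ ^ 2 := by
    rw [Real.sq_sqrt hA.le]
    exact sum_le_hasSum _ (fun m _ => sq_nonneg _) (hasSum_sq_norm_compMatrix ha k)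
  have hvj := hv j
  simp only [norm_compMatrix_comm a j] at hvj ⊢
  refine sum_norm_mul_norm_le_of_sub (Real.sqrt_nonneg _) hε hvj (hv k) ?_ ?_
  · simp only [hdiff]
    exact (sum_sq_norm_coeff_mul_mul_mobiusSeries_pow_le ha hG hM hP j n).trans hrow
  · simp only [hdiff]
    simpa only [Pi.one_apply, one_mul] using
      (hP.mul_mul_mobiusSeries_pow ha hG hM k n).trans hcol

/- Approximate `H * szegoSeries a` by a polynomial `p`. Then `compMatrix a` is a small perturbation
of the matrix of `F ↦ p * G * mobiusComp a F`, which is bounded for the weight `b`. -/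
theorem IsMobiusIntertwiner.exists_sum_compMatrix_le (hb : IsRegularWeight b) (ha : ‖a‖ < 1)
    (hGH : IsMobiusIntertwiner a b K G H) (hM : ∀ z, ‖z‖ < 1 → ‖diskEval G z‖ ≤ M)
    (hM' : ∀ z, ‖z‖ < 1 → ‖diskEval H z‖ ≤ M) {τ : ℝ} (hτ : 0 < τ) :
    ∃ Q, 0 ≤ Q ∧ ∀ j k n, ∑ m ∈ Finset.range n, ‖compMatrix a m j‖ * ‖compMatrix a m k‖ ≤
      Q * √(b k / b j) + τ := by
  have hA := inv_pos.2 (one_sub_sq_norm_pos ha)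
  set B := √(1 - ‖a‖ ^ 2)⁻¹
  set ε := min 1 (τ / (2 * B + 1))
  have hε : 0 < ε := lt_min one_pos (by positivity)
  have hετ : (2 * B + ε) * ε ≤ τ := by
    calc _ ≤ (2 * B + 1) * (τ / (2 * B + 1)) := by
          gcongr
          exacts [min_le_left _ _, min_le_right _ _]
      _ = τ := mul_div_cancel₀ _ (by positivity)
  set D := (1 - ‖a‖ ^ 2)⁻¹ * (M * 2) ^ 2 + M ^ 2 + 1
  have hD : 0 < D := by positivity
  have hDε : D * (ε ^ 2 / D) = ε ^ 2 := mul_div_cancel₀ _ hD.ne'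
  obtain ⟨N, hN⟩ := hGH.exists_weightedSqBound_one_right_mul_szegoSeries ha hM'
  obtain ⟨p, hp⟩ := exists_weightedSqBound_sub_coe_le hN (by positivity : 0 < ε ^ 2 / D)
  obtain ⟨K', hK', hpK⟩ := hb.exists_weightedSqBound_coe_mul p
  have hrow : (1 - ‖a‖ ^ 2)⁻¹ * ((M * 2) ^ 2 * (ε ^ 2 / D)) ≤ ε ^ 2 := by
    rw [← mul_assoc]
    exact (mul_le_mul_of_nonneg_right (by linarith [sq_nonneg M]) hp.nonneg).trans_eq hDε
  have hcol : M ^ 2 * (ε ^ 2 / D) ≤ ε ^ 2 :=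
    (mul_le_mul_of_nonneg_right (by linarith [mul_nonneg hA.le (sq_nonneg (M * 2))])
      hp.nonneg).trans_eq hDε
  refine ⟨K' * K, mul_nonneg hK' hGH.const_pos.le, fun j k n => ?_⟩
  refine (sum_norm_compMatrix_le_of_weightedSqBound_sub ha hGH.left_mem hGH.mul_eq_one hM hp hε.le
    hrow hcol j k n).trans (add_le_add ?_ hετ)
  refine sum_norm_coeff_mul_norm_coeff_le hb ha (mul_nonneg hK' hGH.const_pos.le)
    (fun F M hF => ?_) j k n
  rw [mul_assoc, mul_assoc]
  exact hpK _ _ (hGH.mul_mobiusComp F M hF)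

lemma IsRegularWeight.exists_add_le (hb : IsRegularWeight b) (n : ℕ) :
    ∃ K, 0 < K ∧ ∀ k, ∀ s < n, b (k + s) ≤ K * b k := by
  induction n with
  | zero => exact ⟨1, one_pos, fun k s hs => absurd hs (by lia)⟩
  | succ n ih =>
    obtain ⟨K, hK, h⟩ := ih
    obtain ⟨K', hK', hsucc⟩ := hb.exists_succ_le
    refine ⟨max 1 (K' * K), by positivity, fun k s hs => ?_⟩
    have hbk := (hb.pos k).le
    rcases s with _ | s
    · exact le_mul_of_one_le_left hbk (le_max_left _ _)
    · calc b (k + (s + 1)) ≤ K' * b (k + s) := hsucc (k + s)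
        _ ≤ K' * (K * b k) := by
          gcongr
          exact h k s (by lia)
        _ ≤ max 1 (K' * K) * b k := by
          rw [← mul_assoc]
          gcongr
          exact le_max_right _ _

theorem IsMobiusIntertwiner.exists_le_mul_of_abs_sub_le (hb : IsRegularWeight b) (ha : ‖a‖ < 1)
    (ha₀ : a ≠ 0) (hGH : IsMobiusIntertwiner a b K G H)
    (hM : ∀ z, ‖z‖ < 1 → ‖diskEval G z‖ ≤ M) (hM' : ∀ z, ‖z‖ < 1 → ‖diskEval H z‖ ≤ M) :
    ∃ δ C : ℝ, 0 < δ ∧ 0 < C ∧ ∀ l l' : ℕ, |(l : ℝ) - l'| ≤ δ * (l + 1) → b l' ≤ C * b l := by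
  obtain ⟨δ, c, hδ, hc, hoverlap⟩ := exists_compMatrix_overlap_ge ha ha₀
  obtain ⟨Q, hQ, hle⟩ := hGH.exists_sum_compMatrix_le hb ha hM hM' (half_pos hc)
  obtain ⟨K₁, hK₁, h₁⟩ := hb.exists_add_le 3
  obtain ⟨K₂, hK₂, h₂⟩ := hb.inv.exists_add_le 3
  refine ⟨δ, (2 * Q / c) ^ 2 * (K₁ * K₂) + 1, hδ, by positivity, fun l l' hl => ?_⟩
  have hbl := hb.pos l
  have hbl' := hb.pos l'
  have hc' : c ≤ Q * √(K₁ * K₂ * (b l / b l')) + c / 2 := by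
    refine hoverlap l l' _ hl fun s hs s' hs' n => (hle (l' + s) (l + s') n).trans ?_
    gcongr
    calc b (l + s') / b (l' + s) = b (l + s') * (b (l' + s))⁻¹ := div_eq_mul_inv _ _
      _ ≤ K₁ * b l * (K₂ * (b l')⁻¹) :=
        mul_le_mul (h₁ l s' hs') (h₂ l' s hs) (inv_pos.2 (hb.pos _)).le (by positivity)
      _ = K₁ * K₂ * (b l / b l') := by
        rw [div_eq_mul_inv]
        ring
  have hsq : 1 ≤ (2 * Q / c) ^ 2 * (K₁ * K₂ * (b l / b l')) := by
    rw [← Real.sq_sqrt (by positivity : 0 ≤ K₁ * K₂ * (b l / b l')), ← mul_pow]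
    refine one_le_pow₀ ?_
    rw [div_mul_eq_mul_div, one_le_div hc]
    linarith
  calc b l' ≤ (2 * Q / c) ^ 2 * (K₁ * K₂ * (b l / b l')) * b l' :=
        le_mul_of_one_le_left hbl'.le hsq
    _ = (2 * Q / c) ^ 2 * (K₁ * K₂) * b l := by field_simp
    _ ≤ _ := by
      gcongr
      linarith

/-- The values of `b` at comparable indices are comparable. -/
def IsDoubling (b : ℕ → ℝ) : Prop :=
  ∃ C, 1 ≤ C ∧ ∀ j k, k ≤ j → j ≤ 2 * k + 1 → b j ≤ C * b k ∧ b k ≤ C * b j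

lemma IsDoubling.inv (hb : ∀ k, 0 < b k) (h : IsDoubling b) : IsDoubling fun k => (b k)⁻¹ := by
  have hinv {C x y : ℝ} (hx : 0 < x) (hy : 0 < y) (hxy : x ≤ C * y) : y⁻¹ ≤ C * x⁻¹ := by
    rwa [← div_eq_mul_inv, le_div_iff₀ hx, inv_mul_le_iff₀ hy, mul_comm y]
  obtain ⟨C, hC, h⟩ := h
  exact ⟨C, hC, fun j k hkj hjk =>
    ⟨hinv (hb k) (hb j) (h j k hkj hjk).2, hinv (hb j) (hb k) (h j k hkj hjk).1⟩⟩

lemma comparable_of_forall_add_le {s k : ℕ} {D : ℝ} (hD : 1 ≤ D)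
    (h : ∀ i, k ≤ i → ∀ t ≤ s, b (i + t) ≤ D * b i ∧ b i ≤ D * b (i + t)) (n : ℕ) :
    ∀ j, k ≤ j → j ≤ k + n * s → b j ≤ D ^ n * b k ∧ b k ≤ D ^ n * b j := by
  induction n with
  | zero =>
    intro j hkj hjk
    obtain rfl : j = k := by lia
    simp
  | succ n ih =>
    intro j hkj hjk
    obtain ⟨i, t, hi, hin, ht, rfl⟩ : ∃ i t, k ≤ i ∧ i ≤ k + n * s ∧ t ≤ s ∧ j = i + t := by
      rw [Nat.succ_mul] at hjk
      exact ⟨max k (j - s), j - max k (j - s), by lia, by lia, by lia, by lia⟩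
    obtain ⟨hle, hge⟩ := ih i hi hin
    obtain ⟨hle', hge'⟩ := h i hi t ht
    constructor
    · calc b (i + t) ≤ D * (D ^ n * b k) := hle'.trans (by gcongr)
        _ = D ^ (n + 1) * b k := by ring
    · calc b k ≤ D ^ n * (D * b (i + t)) := hge.trans (by gcongr)
        _ = D ^ (n + 1) * b (i + t) := by ring

lemma IsRegularWeight.exists_succ_comparable (hb : IsRegularWeight b) :
    ∃ K, 0 < K ∧ ∀ k, b (k + 1) ≤ K * b k ∧ b k ≤ K * b (k + 1) := by
  obtain ⟨K₁, hK₁, h₁⟩ := hb.exists_succ_le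
  obtain ⟨K₂, hK₂, h₂⟩ := hb.inv.exists_succ_le
  refine ⟨max K₁ K₂, by positivity, fun k => ?_⟩
  have hk := hb.pos k
  have hk' := hb.pos (k + 1)
  have h₂k := h₂ k
  rw [← div_eq_mul_inv, le_div_iff₀ hk, inv_mul_le_iff₀ hk', mul_comm] at h₂k
  exact ⟨(h₁ k).trans (by gcongr; exact le_max_left _ _),
    h₂k.trans (by gcongr; exact le_max_right _ _)⟩

lemma IsRegularWeight.exists_add_comparable (hb : IsRegularWeight b) {δ C : ℝ} (hδ : 0 < δ)
    (h : ∀ l l' : ℕ, |(l : ℝ) - l'| ≤ δ * (l + 1) → b l' ≤ C * b l) :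
    ∃ D, 1 ≤ D ∧ ∀ k i : ℕ, k ≤ i → ∀ t ≤ max 1 ⌊δ * (k + 1)⌋₊,
      b (i + t) ≤ D * b i ∧ b i ≤ D * b (i + t) := by
  obtain ⟨K, hK, hsucc⟩ := hb.exists_succ_comparable
  set D := max 1 (max C K)
  have hCD : C ≤ D := (le_max_left _ _).trans (le_max_right _ _)
  have hKD : K ≤ D := (le_max_right _ _).trans (le_max_right _ _)
  refine ⟨D, le_max_left _ _, fun k i hi t ht => ?_⟩
  have hbi := (hb.pos i).le
  have hbt := (hb.pos (i + t)).le
  rcases le_max_iff.1 ht with h₁ | h₁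
  · obtain rfl | rfl : t = 0 ∨ t = 1 := by lia
    · exact ⟨le_mul_of_one_le_left hbi (le_max_left _ _),
        le_mul_of_one_le_left hbi (le_max_left _ _)⟩
    · exact ⟨(hsucc i).1.trans (by gcongr), (hsucc i).2.trans (by gcongr)⟩
  · have htk : (t : ℝ) ≤ δ * (k + 1) := (Nat.le_floor_iff (by positivity)).1 h₁
    have hki : δ * ((k : ℝ) + 1) ≤ δ * (i + 1) := by gcongr
    have hit : δ * ((i : ℝ) + 1) ≤ δ * ((i + t : ℕ) + 1) := by gcongr; lia
    constructor
    · refine (h i (i + t) ?_).trans (by gcongr)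
      rw [abs_sub_comm, Nat.cast_add, add_sub_cancel_left, Nat.abs_cast]
      linarith
    · refine (h (i + t) i ?_).trans (by gcongr)
      rw [Nat.cast_add, add_sub_cancel_left, Nat.abs_cast, ← Nat.cast_add]
      linarith

lemma add_one_le_ceil_mul_max_floor {δ : ℝ} (hδ : 0 < δ) (k : ℕ) :
    k + 1 ≤ ⌈2 / δ⌉₊ * max 1 ⌊δ * (k + 1)⌋₊ := by
  set s := max 1 ⌊δ * (k + 1)⌋₊
  have hs : δ * (k + 1) / 2 ≤ s := by
    have h₁ : (1 : ℝ) ≤ s := by exact_mod_cast le_max_left _ _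
    have h₂ : (⌊δ * (k + 1 : ℝ)⌋₊ : ℝ) ≤ s := Nat.cast_le.2 (le_max_right _ _)
    linarith [Nat.lt_floor_add_one (δ * ((k : ℝ) + 1))]
  have hle : (k + 1 : ℝ) ≤ ⌈2 / δ⌉₊ * s := by
    calc (k + 1 : ℝ) = 2 / δ * (δ * (k + 1) / 2) := by field_simp
      _ ≤ ⌈2 / δ⌉₊ * s := by
        gcongr
        exact Nat.le_ceil _
  exact_mod_cast hle

theorem IsRegularWeight.isDoubling (hb : IsRegularWeight b) {δ C : ℝ} (hδ : 0 < δ)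
    (h : ∀ l l' : ℕ, |(l : ℝ) - l'| ≤ δ * (l + 1) → b l' ≤ C * b l) : IsDoubling b := by
  obtain ⟨D, hD, hadd⟩ := hb.exists_add_comparable hδ h
  refine ⟨D ^ ⌈2 / δ⌉₊, one_le_pow₀ hD, fun j k hkj hjk => ?_⟩
  have hk := add_one_le_ceil_mul_max_floor hδ k
  exact comparable_of_forall_add_le hD (hadd k) _ j hkj (by lia)

lemma isRegularWeight_natCast_add_one : IsRegularWeight fun k => (k + 1 : ℝ) where
  pos k := by positivity
  tendsto_ratio := by
    refine (add_zero (1 : ℝ) ▸ tendsto_one_div_add_atTop_nhds_zero_nat.const_add 1).congr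
      fun k => ?_
    rw [Nat.cast_add_one]
    field_simp

lemma derivative_mem_diskSeries (hF : F ∈ diskSeries) : derivative ℂ F ∈ diskSeries :=
  fun r hr₀ hr₁ => by
  obtain ⟨s, hrs, hs₁⟩ := exists_between hr₁
  obtain ⟨t, hst, ht₁⟩ := exists_between hs₁
  have hs₀ : 0 < s := hr₀.trans_lt hrs
  have ht₀ : 0 < t := hs₀.trans hst
  obtain ⟨K, hK, hle⟩ := isRegularWeight_natCast_add_one.exists_le_mul_pow ((one_lt_div hs₀).2 hst)
  refine Summable.of_nonneg_of_le (fun k => by positivity) (fun k => ?_)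
    (((summable_nat_add_iff 1).2 (hF t ht₀.le ht₁)).mul_left (K / t))
  calc ‖coeff k (derivative ℂ F)‖ * r ^ k = ‖coeff (k + 1) F‖ * ((k + 1) * r ^ k) := by
        rw [coeff_derivative, norm_mul, mul_assoc]
        norm_cast
    _ ≤ ‖coeff (k + 1) F‖ * (K * (t / s) ^ k * s ^ k) := by
        gcongr
        exact hle k
    _ = K / t * (‖coeff (k + 1) F‖ * t ^ (k + 1)) := by
        rw [div_pow, pow_succ]
        field_simp

lemma derivative_mobiusComp (ha : ‖a‖ < 1) (hF : F ∈ diskSeries) :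
    derivative ℂ (mobiusComp a F) =
      derivative ℂ (mobiusSeries a) * mobiusComp a (derivative ℂ F) := by
  ext j
  have hsum := (hasSum_nat_add_iff' 1).2
    ((hasSum_coeff_mobiusComp ha hF (j + 1)).mul_right ((j : ℂ) + 1))
  rw [Finset.sum_range_one, pow_zero, coeff_one, if_neg j.succ_ne_zero, mul_zero, zero_mul,
    sub_zero] at hsum
  rw [coeff_derivative]
  refine hsum.unique ((hasSum_coeff_mul_mobiusComp ha (derivative_mem_diskSeries hF)
    (derivative ℂ (mobiusSeries a)) j).congr_fun fun k => ?_)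
  have hpow := coeff_derivative (mobiusSeries a ^ (k + 1)) j
  rw [Derivation.leibniz_pow, Nat.add_sub_cancel, nsmul_eq_mul, smul_eq_mul,
    ← map_natCast (C (R := ℂ)), coeff_C_mul, mul_comm (mobiusSeries a ^ k)] at hpow
  rw [coeff_derivative, mul_assoc (coeff (k + 1) F), mul_assoc, ← hpow]
  push_cast
  rfl

lemma C_mul_derivative_mobiusComp (ha : ‖a‖ < 1) (hF : F ∈ diskSeries) :
    C ((1 - ‖a‖ ^ 2 : ℝ) : ℂ) * derivative ℂ (mobiusComp a F) =
      -mobiusComp a ((1 - C (starRingEnd ℂ a) * X) ^ 2 * derivative ℂ F) := by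
  have hlin := one_sub_C_mul_X_mem_diskSeries (starRingEnd ℂ a)
  rw [mobiusComp_mul ha (pow_mem hlin 2) (derivative_mem_diskSeries hF), mobiusComp_pow ha hlin,
    mobiusComp_one_sub_C_mul_X ha, derivative_mobiusComp ha hF, derivative_mobiusSeries]
  ring

lemma sq_mul_derivative_mobiusComp (ha : ‖a‖ < 1) (hF : F ∈ diskSeries) :
    (1 - C (starRingEnd ℂ a) * X) ^ 2 * derivative ℂ (mobiusComp a F) =
      -(C ((1 - ‖a‖ ^ 2 : ℝ) : ℂ) * mobiusComp a (derivative ℂ F)) := by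
  rw [derivative_mobiusComp ha hF, derivative_mobiusSeries]
  linear_combination -(C ((1 - ‖a‖ ^ 2 : ℝ) : ℂ) * mobiusComp a (derivative ℂ F)) *
    ((1 - C (starRingEnd ℂ a) * X) * szegoSeries a + 1) * one_sub_mul_szegoSeries a

lemma norm_sq_coeff_derivative (F : ℂ⟦X⟧) (k : ℕ) :
    ‖coeff k (derivative ℂ F)‖ ^ 2 = (k + 1) ^ 2 * ‖coeff (k + 1) F‖ ^ 2 := by
  rw [coeff_derivative, norm_mul, mul_pow, mul_comm]
  norm_cast

lemma weightedSqBound_derivative (hb : ∀ k, 0 ≤ b k) (hr : ∀ k, b k ≤ r * b (k + 1))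
    (hr₀ : 0 ≤ r) (h : WeightedSqBound (fun k => (k + 1) ^ 2 * b k) F M) :
    WeightedSqBound b (derivative ℂ F) (r * M) := fun n => by
  have hterm (k : ℕ) : b k * ‖coeff k (derivative ℂ F)‖ ^ 2 ≤
      r * (((k + 1 : ℕ) + 1) ^ 2 * b (k + 1) * ‖coeff (k + 1) F‖ ^ 2) := by
    have hb' := hb (k + 1)
    have hsq : ((k : ℝ) + 1) ^ 2 ≤ ((k + 1 : ℕ) + 1) ^ 2 := by
      gcongr
      exact k.le_succ
    calc b k * ‖coeff k (derivative ℂ F)‖ ^ 2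
        = b k * ((k + 1) ^ 2 * ‖coeff (k + 1) F‖ ^ 2) := by
          rw [norm_sq_coeff_derivative]
      _ ≤ r * b (k + 1) * (((k + 1 : ℕ) + 1) ^ 2 * ‖coeff (k + 1) F‖ ^ 2) := by
          gcongr
          exact hr k
      _ = _ := by ring
  refine (Finset.sum_le_sum fun k _ => hterm k).trans ?_
  rw [← Finset.mul_sum]
  refine mul_le_mul_of_nonneg_left (le_trans ?_ (h (n + 1))) hr₀
  rw [Finset.sum_range_succ']
  exact le_add_of_nonneg_right (mul_nonneg (mul_nonneg (sq_nonneg _) (hb 0)) (sq_nonneg _))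

lemma weightedSqBound_of_derivative (hb : ∀ k, 0 ≤ b k) (hr : ∀ k, b (k + 1) ≤ r * b k)
    (hr₀ : 0 ≤ r) (h : WeightedSqBound b (derivative ℂ F) M) :
    WeightedSqBound (fun k => (k + 1) ^ 2 * b k) F (4 * r * M + b 0 * ‖coeff 0 F‖ ^ 2) := by
  have hterm (k : ℕ) : ((k + 1 : ℕ) + 1) ^ 2 * b (k + 1) * ‖coeff (k + 1) F‖ ^ 2 ≤
      4 * r * (b k * ‖coeff k (derivative ℂ F)‖ ^ 2) := by
    have hb' := hb (k + 1)
    have hsq : (((k + 1 : ℕ) : ℝ) + 1) ^ 2 ≤ 4 * (k + 1) ^ 2 := by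
      push_cast
      nlinarith [k.cast_nonneg (α := ℝ)]
    calc ((k + 1 : ℕ) + 1) ^ 2 * b (k + 1) * ‖coeff (k + 1) F‖ ^ 2
        ≤ 4 * (k + 1) ^ 2 * (r * b k) * ‖coeff (k + 1) F‖ ^ 2 := by
          gcongr
          exact hr k
      _ = _ := by
          rw [norm_sq_coeff_derivative]
          ring
  rintro (_ | n)
  · simpa using add_nonneg (mul_nonneg (by positivity) h.nonneg)
      (mul_nonneg (hb 0) (sq_nonneg ‖coeff 0 F‖))
  · rw [Finset.sum_range_succ']
    refine add_le_add ((Finset.sum_le_sum fun k _ => hterm k).trans ?_) (by simp)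
    rw [← Finset.mul_sum]
    exact mul_le_mul_of_nonneg_left (h n) (by positivity)

lemma WeightedSqBound.sq_one_sub_C_mul_X_mul (hb₀ : ∀ k, 0 ≤ b k) (hb : ∀ k, b (k + 1) ≤ r * b k)
    (hr : 0 ≤ r) (hF : WeightedSqBound b F M) (c : ℂ) :
    WeightedSqBound b ((1 - C c * X) ^ 2 * F) ((2 + 2 * ‖c‖ ^ 2 * r) ^ 2 * M) := by
  rw [sq, sq, mul_assoc, mul_assoc]
  exact (hF.one_sub_C_mul_X_mul hb₀ hb hr c).one_sub_C_mul_X_mul hb₀ hb hr c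

lemma C_inv_mul_C_one_sub_sq_norm (ha : ‖a‖ < 1) :
    C ((1 - ‖a‖ ^ 2 : ℝ) : ℂ)⁻¹ * C ((1 - ‖a‖ ^ 2 : ℝ) : ℂ) = 1 := by
  rw [← map_mul, inv_mul_cancel₀ (Complex.ofReal_ne_zero.2 (one_sub_sq_norm_pos ha).ne'), map_one]

lemma WeightedSqBound.of_succ_sq_mul (hb : ∀ k, 0 ≤ b k)
    (h : WeightedSqBound (fun k => (k + 1) ^ 2 * b k) F M) : WeightedSqBound b F M :=
  h.anti fun k =>
    le_mul_of_one_le_left (hb k) (one_le_pow₀ (by linarith [k.cast_nonneg (α := ℝ)]))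

theorem MobiusCompBound.exists_succ_sq_mul (hb : IsRegularWeight b) (ha : ‖a‖ < 1)
    (hK : 0 ≤ K) (h : MobiusCompBound a b K) :
    ∃ K', 0 ≤ K' ∧ MobiusCompBound a (fun k => (k + 1) ^ 2 * b k) K' := by
  obtain ⟨r, hr, hcomp⟩ := hb.exists_succ_comparable
  have hb₀ (k : ℕ) : 0 ≤ b k := (hb.pos k).le
  have hA := one_sub_sq_norm_pos ha
  set c := (starRingEnd ℂ) a
  set Q := (2 + 2 * ‖c‖ ^ 2 * r) ^ 2
  refine ⟨4 * r * ((1 - ‖a‖ ^ 2)⁻¹ ^ 2 * (K * (Q * r))) + K, by positivity, fun F M hF hM => ?_⟩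
  have hF' := ((weightedSqBound_derivative hb₀ (fun k => (hcomp k).2) hr.le
    hM).sq_one_sub_C_mul_X_mul hb₀ (fun k => (hcomp k).1) hr.le c)
  have hmem := mul_mem (pow_mem (one_sub_C_mul_X_mem_diskSeries c) 2) (derivative_mem_diskSeries hF)
  have heq : derivative ℂ (mobiusComp a F) =
      C (-((1 - ‖a‖ ^ 2 : ℝ) : ℂ)⁻¹) * mobiusComp a ((1 - C c * X) ^ 2 * derivative ℂ F) := by
    rw [map_neg]
    linear_combination -(derivative ℂ (mobiusComp a F)) * C_inv_mul_C_one_sub_sq_norm ha +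
      C ((1 - ‖a‖ ^ 2 : ℝ) : ℂ)⁻¹ * C_mul_derivative_mobiusComp ha hF
  have hder := heq ▸ (h _ _ hmem hF').C_mul (-((1 - ‖a‖ ^ 2 : ℝ) : ℂ)⁻¹)
  refine (weightedSqBound_of_derivative hb₀ (fun k => (hcomp k).1) hr.le hder).mono ?_
  rw [norm_neg, norm_inv, Complex.norm_real, Real.norm_of_nonneg hA.le, add_mul]
  refine add_le_add (le_of_eq (by ring)) ((h F M hF (hM.of_succ_sq_mul hb₀)).coeff_le hb₀ 0)

lemma exists_derivative_eq (F : ℂ⟦X⟧) : ∃ G, derivative ℂ G = F ∧ coeff 0 G = 0 := by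
  refine ⟨X * PowerSeries.mk fun k => coeff k F / (k + 1), ?_, by simp⟩
  ext k
  rw [coeff_derivative, coeff_succ_X_mul, coeff_mk, div_mul_cancel₀ _ (Nat.cast_add_one_ne_zero k)]

theorem MobiusCompBound.exists_of_succ_sq_mul (hb : IsRegularWeight b) (ha : ‖a‖ < 1)
    (hK : 0 ≤ K) (h : MobiusCompBound a (fun k => (k + 1) ^ 2 * b k) K) :
    ∃ K', 0 ≤ K' ∧ MobiusCompBound a b K' := by
  obtain ⟨r, hr, hcomp⟩ := hb.exists_succ_comparable
  have hb₀ (k : ℕ) : 0 ≤ b k := (hb.pos k).le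
  set c := (starRingEnd ℂ) a
  set Q := (2 + 2 * ‖c‖ ^ 2 * r) ^ 2
  refine ⟨‖-((1 - ‖a‖ ^ 2 : ℝ) : ℂ)⁻¹‖ ^ 2 * (Q * (r * (K * (4 * r)))), by positivity,
    fun F M hF hM => ?_⟩
  obtain ⟨G, rfl, hG₀⟩ := exists_derivative_eq F
  have hG : WeightedSqBound (fun k => (k + 1) ^ 2 * b k) G (4 * r * M) :=
    (weightedSqBound_of_derivative hb₀ (fun k => (hcomp k).1) hr.le hM).mono (by simp [hG₀])
  have hmem := hb.mem_diskSeries_of_weightedSqBound (hG.of_succ_sq_mul hb₀)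
  have heq : mobiusComp a (derivative ℂ G) =
      C (-((1 - ‖a‖ ^ 2 : ℝ) : ℂ)⁻¹) * ((1 - C c * X) ^ 2 * derivative ℂ (mobiusComp a G)) := by
    rw [map_neg]
    linear_combination -(mobiusComp a (derivative ℂ G)) * C_inv_mul_C_one_sub_sq_norm ha +
      C ((1 - ‖a‖ ^ 2 : ℝ) : ℂ)⁻¹ * sq_mul_derivative_mobiusComp ha hmem
  rw [heq]
  refine (((weightedSqBound_derivative hb₀ (fun k => (hcomp k).2) hr.le
    (h _ _ hmem hG)).sq_one_sub_C_mul_X_mul hb₀ (fun k => (hcomp k).1) hr.le c).C_mul _).mono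
    (le_of_eq ?_)
  ring

theorem exists_mobiusCompBound_pow (ha : ‖a‖ < 1) (p : ℕ) :
    ∃ K, 0 ≤ K ∧ MobiusCompBound a (fun k => ((k : ℝ) + 1) ^ (2 * p)) K := by
  induction p with
  | zero =>
    obtain ⟨K, hK, h⟩ := exists_mobiusCompBound_one ha
    exact ⟨K, hK.le, by simpa [← Pi.one_def] using h⟩
  | succ p ih =>
    obtain ⟨K, hK, h⟩ := ih
    simpa only [← pow_add, Nat.mul_succ, add_comm 2] using
      h.exists_succ_sq_mul (isRegularWeight_natCast_add_one.pow _) ha hK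

theorem exists_mobiusCompBound_inv_pow (ha : ‖a‖ < 1) (p : ℕ) :
    ∃ K, 0 ≤ K ∧ MobiusCompBound a (fun k => (((k : ℝ) + 1) ^ (2 * p))⁻¹) K := by
  induction p with
  | zero =>
    obtain ⟨K, hK, h⟩ := exists_mobiusCompBound_one ha
    exact ⟨K, hK.le, by simpa [← Pi.one_def] using h⟩
  | succ p ih =>
    obtain ⟨K, hK, h⟩ := ih
    refine MobiusCompBound.exists_of_succ_sq_mul (isRegularWeight_natCast_add_one.pow _).inv
      ha hK ?_
    convert h using 2 with k
    have : (k : ℝ) + 1 ≠ 0 := Nat.cast_add_one_ne_zero k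
    field_simp
    ring

lemma MobiusCompBound.const_mul (h : MobiusCompBound a b K) {c : ℝ} (hc : 0 < c) :
    MobiusCompBound a (fun k => c * b k) K := fun F M hF hM => by
  have hiff {G : ℂ⟦X⟧} {N : ℝ} :
      WeightedSqBound (fun k => c * b k) G N ↔ WeightedSqBound b G (N / c) :=
    forall_congr' fun n => by
      simp only [mul_assoc, ← Finset.mul_sum, le_div_iff₀' hc]
  rw [hiff, mul_div_assoc]
  exact h F _ hF (hiff.1 hM)

/-- The part of a power series consisting of the terms whose exponents lie in `s`. -/
def restrict (s : Set ℕ) (F : ℂ⟦X⟧) : ℂ⟦X⟧ := PowerSeries.mk (s.indicator fun k => coeff k F)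

lemma restrict_add_restrict_compl (s : Set ℕ) (F : ℂ⟦X⟧) : restrict s F + restrict sᶜ F = F := by
  ext k
  rw [map_add, restrict, restrict, coeff_mk, coeff_mk, Set.indicator_self_add_compl_apply]

lemma norm_coeff_restrict (s : Set ℕ) (F : ℂ⟦X⟧) (k : ℕ) :
    ‖coeff k (restrict s F)‖ = s.indicator (fun k => ‖coeff k F‖) k := by
  rw [restrict, coeff_mk, norm_indicator_eq_indicator_norm]

lemma restrict_mem_diskSeries (hF : F ∈ diskSeries) (s : Set ℕ) : restrict s F ∈ diskSeries :=
  fun r hr₀ hr₁ => Summable.of_nonneg_of_le (fun k => by positivity)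
    (fun k => mul_le_mul_of_nonneg_right
      ((norm_coeff_restrict s F k).trans_le (Set.indicator_le_self' (fun _ _ => norm_nonneg _) k))
      (pow_nonneg hr₀ k)) (hF r hr₀ hr₁)

lemma WeightedSqBound.restrict {b' : ℕ → ℝ} {s : Set ℕ} (hb : ∀ k, 0 ≤ b k)
    (h : WeightedSqBound b F M) (hle : ∀ k ∈ s, b' k ≤ b k) :
    WeightedSqBound b' (restrict s F) M := fun n => by
  refine (Finset.sum_le_sum fun k _ => ?_).trans (h n)
  rw [norm_coeff_restrict]
  by_cases hk : k ∈ s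
  · rw [Set.indicator_of_mem hk]
    exact mul_le_mul_of_nonneg_right (hle k hk) (sq_nonneg _)
  · rw [Set.indicator_of_notMem hk]
    simpa using mul_nonneg (hb k) (sq_nonneg ‖coeff k F‖)

lemma MobiusCompBound.min_weight {α : ℕ → ℝ} {L : ℝ} (ha : ‖a‖ < 1) (hα₀ : ∀ k, 0 ≤ α k)
    (hβ₀ : ∀ k, 0 ≤ β k) (hα : MobiusCompBound a α K) (hβ : MobiusCompBound a β L) :
    MobiusCompBound a (fun k => min (α k) (β k)) (2 * K + 2 * L) := fun F M hF hM => by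
  have hmin (k : ℕ) : 0 ≤ min (α k) (β k) := le_min (hα₀ k) (hβ₀ k)
  set s := {k | α k ≤ β k}
  have hα' := hα _ _ (restrict_mem_diskSeries hF s)
    (hM.restrict hmin fun k hk => (min_eq_left hk).ge)
  have hβ' := hβ _ _ (restrict_mem_diskSeries hF sᶜ)
    (hM.restrict hmin fun k hk => (min_eq_right (not_le.1 fun h => hk h).le).ge)
  rw [← restrict_add_restrict_compl s F, mobiusComp_add ha (restrict_mem_diskSeries hF _)
    (restrict_mem_diskSeries hF _), add_mul, mul_assoc, mul_assoc]
  exact (hα'.anti fun k => min_le_left _ _).add hmin (hβ'.anti fun k => min_le_right _ _)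

/- Only the weights `ω i` with `i < n` matter for the first `n` coefficients, so the superposition
`∑ i, ω i` may be replaced by its partial sums. -/
theorem MobiusCompBound.of_sum_le {ω : ℕ → ℕ → ℝ} {L : ℝ} (hω : ∀ i k, 0 ≤ ω i k)
    (hb : ∀ k, 0 ≤ b k) (hK : 0 ≤ K) (hL : 0 ≤ L) (h : ∀ i, MobiusCompBound a (ω i) K)
    (hle : ∀ n k, ∑ i ∈ Finset.range n, ω i k ≤ L * b k)
    (hge : ∀ k, b k ≤ L * ∑ i ∈ Finset.range (k + 1), ω i k) :
    MobiusCompBound a b (L ^ 2 * K) := fun F M hF hM n => by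
  have hωF (i k : ℕ) : 0 ≤ ω i k * ‖coeff k F‖ ^ 2 := mul_nonneg (hω i k) (sq_nonneg _)
  have hsum (i : ℕ) : Summable fun k => ω i k * ‖coeff k F‖ ^ 2 := by
    refine Summable.of_nonneg_of_le (hωF i) (fun k => ?_) ((summable_of_sum_range_le
      (fun k => mul_nonneg (hb k) (sq_nonneg ‖coeff k F‖)) hM).mul_left L)
    rw [← mul_assoc]
    exact mul_le_mul_of_nonneg_right ((Finset.single_le_sum (f := fun i => ω i k)
      (fun i _ => hω i k) (Finset.self_mem_range_succ i)).trans (hle (i + 1) k)) (sq_nonneg _)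
  have htsum : ∑' k, (∑ i ∈ Finset.range n, ω i k) * ‖coeff k F‖ ^ 2 ≤ L * M := by
    refine Real.tsum_le_of_sum_range_le
      (fun k => mul_nonneg (Finset.sum_nonneg fun i _ => hω i k) (sq_nonneg _)) fun m => ?_
    refine (Finset.sum_le_sum fun k _ =>
      mul_le_mul_of_nonneg_right (hle n k) (sq_nonneg ‖coeff k F‖)).trans ?_
    simp only [mul_assoc, ← Finset.mul_sum]
    exact mul_le_mul_of_nonneg_left (hM m) hL
  calc ∑ k ∈ Finset.range n, b k * ‖coeff k (mobiusComp a F)‖ ^ 2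
      ≤ ∑ k ∈ Finset.range n, L * ∑ i ∈ Finset.range n, ω i k * ‖coeff k (mobiusComp a F)‖ ^ 2 := by
        refine Finset.sum_le_sum fun k hk => ?_
        rw [← Finset.sum_mul, ← mul_assoc]
        refine mul_le_mul_of_nonneg_right ((hge k).trans ?_) (sq_nonneg _)
        gcongr
        exacts [fun i _ _ => hω i k, Finset.mem_range.1 hk]
    _ = L * ∑ i ∈ Finset.range n, ∑ k ∈ Finset.range n,
          ω i k * ‖coeff k (mobiusComp a F)‖ ^ 2 := by
        rw [← Finset.mul_sum, Finset.sum_comm]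
    _ ≤ L * ∑ i ∈ Finset.range n, K * ∑' k, ω i k * ‖coeff k F‖ ^ 2 := by
        gcongr with i
        exact h i F _ hF (fun m => (hsum i).sum_le_tsum _ fun k _ => hωF i k) n
    _ = L * (K * ∑' k, (∑ i ∈ Finset.range n, ω i k) * ‖coeff k F‖ ^ 2) := by
        simp only [Finset.sum_mul]
        rw [← Finset.mul_sum, Summable.tsum_finsetSum fun i _ => hsum i]
    _ ≤ L * (K * (L * M)) := by gcongr
    _ = L ^ 2 * K * M := by ring

lemma sum_half_pow_dist_le (m n : ℕ) :
    ∑ i ∈ Finset.range n, (1 / 2 : ℝ) ^ (i - m + (m - i)) ≤ 3 := by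
  have hstrong : ∑ i ∈ Finset.range n, (1 / 2 : ℝ) ^ (i - m + (m - i)) ≤
      (1 / 2 : ℝ) ^ (m - n) + 2 - 2 * (1 / 2 : ℝ) ^ (n - m) := by
    induction n with
    | zero =>
      simp
    | succ n ih =>
      rw [Finset.sum_range_succ]
      refine (add_le_add_left ih _).trans (le_of_eq ?_)
      rcases lt_or_ge n m with hnm | hmn
      · obtain ⟨d, rfl⟩ := Nat.exists_eq_add_of_lt hnm
        have h₁ : n + d + 1 - n = d + 1 := by lia
        have h₂ : n + d + 1 - (n + 1) = d := by lia
        have h₃ : n - (n + d + 1) = 0 := by lia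
        have h₄ : n + 1 - (n + d + 1) = 0 := by lia
        rw [h₁, h₂, h₃, h₄]
        ring
      · obtain ⟨d, rfl⟩ := Nat.exists_eq_add_of_le hmn
        have h₁ : m + d - m = d := by lia
        have h₂ : m + d + 1 - m = d + 1 := by lia
        have h₃ : m - (m + d) = 0 := by lia
        have h₄ : m - (m + d + 1) = 0 := by lia
        rw [h₁, h₂, h₃, h₄]
        ring
  have h₁ : (1 / 2 : ℝ) ^ (m - n) ≤ 1 := pow_le_one₀ (by norm_num) (by norm_num)
  have h₂ : 0 ≤ (1 / 2 : ℝ) ^ (n - m) := by positivity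
  linarith

lemma min_div_pow_le {q Q : ℝ} {m : ℕ} (hQ : 1 ≤ Q) (hm : Q ^ m ≤ q) (hm' : q ≤ Q ^ (m + 1))
    (n : ℕ) : min (q / Q ^ n) (Q ^ n / q) ≤ Q * Q⁻¹ ^ (n - m + (m - n)) := by
  have hQ₀ : 0 < Q := one_pos.trans_le hQ
  rcases le_total m n with h | h
  · obtain ⟨d, rfl⟩ := Nat.exists_eq_add_of_le h
    rw [Nat.add_sub_cancel_left, Nat.sub_eq_zero_of_le h, add_zero]
    calc _ ≤ q / Q ^ (m + d) := min_le_left _ _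
      _ ≤ Q ^ (m + 1) / Q ^ (m + d) := by gcongr
      _ = Q * Q⁻¹ ^ d := by
        rw [inv_pow, pow_succ, pow_add Q m d]
        field_simp
  · obtain ⟨d, rfl⟩ := Nat.exists_eq_add_of_le h
    rw [Nat.add_sub_cancel_left, Nat.sub_eq_zero_of_le h, zero_add]
    calc _ ≤ Q ^ n / q := min_le_right _ _
      _ ≤ Q ^ n / Q ^ (n + d) := by gcongr
      _ = Q⁻¹ ^ d := by
        rw [inv_pow, pow_add]
        field_simp
      _ ≤ Q * Q⁻¹ ^ d := le_mul_of_one_le_left (by positivity) hQ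

lemma le_pow_dist_mul {c : ℕ → ℝ} {C : ℝ} (hC : 0 ≤ C)
    (h : ∀ n, c (n + 1) ≤ C * c n ∧ c n ≤ C * c (n + 1)) (m n : ℕ) :
    c n ≤ C ^ (n - m + (m - n)) * c m := by
  have hup (m d : ℕ) : c (m + d) ≤ C ^ d * c m ∧ c m ≤ C ^ d * c (m + d) := by
    induction d with
    | zero => simp
    | succ d ih =>
      rw [pow_succ']
      constructor
      · calc c (m + d + 1) ≤ C * (C ^ d * c m) := (h _).1.trans (by gcongr; exact ih.1)
          _ = C * C ^ d * c m := (mul_assoc _ _ _).symm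
      · calc c m ≤ C ^ d * (C * c (m + d + 1)) := ih.2.trans (by gcongr; exact (h _).2)
          _ = C * C ^ d * c (m + d + 1) := by ring
  rcases le_total m n with hmn | hmn
  · obtain ⟨d, rfl⟩ := Nat.exists_eq_add_of_le hmn
    simpa using (hup m d).1
  · obtain ⟨d, rfl⟩ := Nat.exists_eq_add_of_le hmn
    simpa using (hup n d).2

lemma sum_mul_min_div_pow_le {c : ℕ → ℝ} {C q Q : ℝ} {m : ℕ} (hc : ∀ n, 0 ≤ c n) (hC : 1 ≤ C)
    (h : ∀ n, c (n + 1) ≤ C * c n ∧ c n ≤ C * c (n + 1)) (hCQ : 2 * C ≤ Q) (hm : Q ^ m ≤ q)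
    (hm' : q ≤ Q ^ (m + 1)) (n : ℕ) :
    ∑ i ∈ Finset.range n, c i * min (q / Q ^ i) (Q ^ i / q) ≤ 3 * Q * c m := by
  have hQ : 1 ≤ Q := by linarith
  have hQ₀ : 0 < Q := by linarith
  have hq : 0 < q := (pow_pos hQ₀ m).trans_le hm
  have hterm (i : ℕ) : c i * min (q / Q ^ i) (Q ^ i / q) ≤
      Q * c m * (1 / 2) ^ (i - m + (m - i)) := by
    set e := i - m + (m - i)
    have hcm := hc m
    calc c i * min (q / Q ^ i) (Q ^ i / q) ≤ C ^ e * c m * (Q * Q⁻¹ ^ e) :=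
          mul_le_mul (le_pow_dist_mul (by linarith) h m i) (min_div_pow_le hQ hm hm' i)
            (by positivity) (by positivity)
      _ = Q * c m * (C * Q⁻¹) ^ e := by
          rw [mul_pow]
          ring
      _ ≤ Q * c m * (1 / 2) ^ e := by
          gcongr
          rw [← div_eq_mul_inv, div_le_iff₀ hQ₀]
          linarith
  calc _ ≤ ∑ i ∈ Finset.range n, Q * c m * (1 / 2) ^ (i - m + (m - i)) :=
        Finset.sum_le_sum fun i _ => hterm i
    _ ≤ Q * c m * 3 := by
        rw [← Finset.mul_sum]
        exact mul_le_mul_of_nonneg_left (sum_half_pow_dist_le m n) (mul_nonneg hQ₀.le (hc m))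
    _ = 3 * Q * c m := by ring

lemma one_le_mul_min_div_pow {q Q : ℝ} {m : ℕ} (hQ : 1 ≤ Q) (hm : Q ^ m ≤ q)
    (hm' : q ≤ Q ^ (m + 1)) : 1 ≤ Q * min (q / Q ^ m) (Q ^ m / q) := by
  have hQm : 0 < Q ^ m := pow_pos (one_pos.trans_le hQ) m
  rw [mul_min_of_nonneg _ _ (zero_le_one.trans hQ), le_min_iff]
  constructor
  · exact one_le_mul_of_one_le_of_one_le hQ ((one_le_div hQm).2 hm)
  · rwa [mul_div_assoc', one_le_div (hQm.trans_le hm), ← pow_succ']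

/-- The weight `k ↦ min (y ^ s) (y⁻¹ ^ s)` with `y = (k + 1) / 2 ^ i`, which is concentrated at the
indices `k` close to `2 ^ i` and, for even `s`, admits composition bounds independent of `i`. -/
def scaleWeight (s i k : ℕ) : ℝ :=
  min (((k : ℝ) + 1) ^ s / (2 ^ s) ^ i) ((2 ^ s) ^ i / ((k : ℝ) + 1) ^ s)

lemma scaleWeight_nonneg (s i k : ℕ) : 0 ≤ scaleWeight s i k := by
  unfold scaleWeight
  positivity

theorem exists_mobiusCompBound_scaleWeight (ha : ‖a‖ < 1) (p : ℕ) :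
    ∃ K, 0 ≤ K ∧ ∀ i, MobiusCompBound a (scaleWeight (2 * p) i) K := by
  obtain ⟨K₁, hK₁, h₁⟩ := exists_mobiusCompBound_pow ha p
  obtain ⟨K₂, hK₂, h₂⟩ := exists_mobiusCompBound_inv_pow ha p
  refine ⟨2 * K₁ + 2 * K₂, by positivity, fun i => ?_⟩
  have hQ : (0 : ℝ) < (2 ^ (2 * p)) ^ i := by positivity
  have h := (h₁.const_mul (inv_pos.2 hQ)).min_weight ha (fun k => by positivity)
    (fun k => by positivity) (h₂.const_mul hQ)
  simp only [← div_eq_mul_inv, ← div_eq_inv_mul] at h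
  exact h

lemma exists_two_pow_le_succ (s k : ℕ) :
    ∃ m ≤ k, (2 ^ m ≤ k + 1 ∧ k + 1 ≤ 2 ^ (m + 1)) ∧
      ((2 : ℝ) ^ s) ^ m ≤ ((k : ℝ) + 1) ^ s ∧ ((k : ℝ) + 1) ^ s ≤ ((2 : ℝ) ^ s) ^ (m + 1) := by
  have hle := Nat.pow_log_le_self 2 k.succ_ne_zero
  have hlt := (Nat.lt_pow_succ_log_self one_lt_two (k + 1)).le
  refine ⟨Nat.log 2 (k + 1), Nat.lt_succ_iff.1 (Nat.log_lt_self 2 k.succ_ne_zero), ⟨hle, hlt⟩, ?_⟩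
  rw [pow_right_comm 2 s, pow_right_comm 2 s (_ + 1)]
  constructor
  · gcongr
    exact_mod_cast hle
  · gcongr
    exact_mod_cast hlt

theorem IsDoubling.exists_sum_scaleWeight (hb : ∀ k, 0 < b k) (h : IsDoubling b) :
    ∃ p L, 0 ≤ L ∧ ∀ k,
      (∀ n, ∑ i ∈ Finset.range n, b (2 ^ i - 1) * scaleWeight (2 * p) i k ≤ L * b k) ∧
      b k ≤ L * ∑ i ∈ Finset.range (k + 1), b (2 ^ i - 1) * scaleWeight (2 * p) i k := by
  obtain ⟨C, hC, hbC⟩ := h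
  obtain ⟨p, hp⟩ := pow_unbounded_of_one_lt (2 * C) (by norm_num : (1 : ℝ) < 2 ^ 2)
  rw [← pow_mul] at hp
  have hQ : (1 : ℝ) ≤ 2 ^ (2 * p) := by linarith
  have hc (n : ℕ) : b (2 ^ (n + 1) - 1) ≤ C * b (2 ^ n - 1) ∧
      b (2 ^ n - 1) ≤ C * b (2 ^ (n + 1) - 1) := by
    have := Nat.one_le_two_pow (n := n)
    exact hbC _ _ (by lia) (by lia)
  refine ⟨p, 3 * 2 ^ (2 * p) * C, by positivity, fun k => ?_⟩
  obtain ⟨m, hmk, ⟨hm, hm'⟩, hq, hq'⟩ := exists_two_pow_le_succ (2 * p) k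
  have hbm := (hb (2 ^ m - 1)).le
  obtain ⟨hbk, hbk'⟩ := hbC k (2 ^ m - 1) (by lia) (by lia)
  constructor
  · intro n
    refine (sum_mul_min_div_pow_le (fun n => (hb _).le) hC hc hp.le hq hq' n).trans ?_
    rw [mul_assoc _ C]
    gcongr
  · have hnonneg (i : ℕ) := mul_nonneg (hb (2 ^ i - 1)).le (scaleWeight_nonneg (2 * p) i k)
    calc b k ≤ C * (b (2 ^ m - 1) * (2 ^ (2 * p) * scaleWeight (2 * p) m k)) :=
          hbk.trans (by gcongr; exact le_mul_of_one_le_right hbm (one_le_mul_min_div_pow hQ hq hq'))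
      _ = 1 * 2 ^ (2 * p) * C * (b (2 ^ m - 1) * scaleWeight (2 * p) m k) := by ring
      _ ≤ _ := by
          gcongr
          · exact hnonneg m
          · norm_num
          · exact Finset.single_le_sum (fun i _ => hnonneg i) (Finset.mem_range_succ_iff.2 hmk)

theorem IsDoubling.exists_mobiusCompBound (hb : ∀ k, 0 < b k) (h : IsDoubling b) (ha : ‖a‖ < 1) :
    ∃ K, 0 ≤ K ∧ MobiusCompBound a b K := by
  obtain ⟨p, L, hL, hbL⟩ := h.exists_sum_scaleWeight hb
  obtain ⟨K, hK, hscale⟩ := exists_mobiusCompBound_scaleWeight ha p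
  exact ⟨L ^ 2 * K, by positivity, .of_sum_le
    (ω := fun i k => b (2 ^ i - 1) * scaleWeight (2 * p) i k)
    (fun i k => mul_nonneg (hb _).le (scaleWeight_nonneg _ i k)) (fun k => (hb k).le) hK hL
    (fun i => (hscale i).const_mul (hb _)) (fun n k => (hbL k).1 n) fun k => (hbL k).2⟩

lemma mobiusSeries_zero : mobiusSeries 0 = -X := by
  have h := one_sub_mul_szegoSeries 0
  rw [map_zero, map_zero, zero_mul, sub_zero, one_mul] at h
  rw [mobiusSeries, h, map_zero, zero_sub, mul_one]

lemma coeff_mobiusComp_zero (hF : F ∈ diskSeries) (j : ℕ) :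
    coeff j (mobiusComp 0 F) = coeff j F * (-1) ^ j := by
  have hcoeff (k : ℕ) : coeff j ((-X : ℂ⟦X⟧) ^ k) = if j = k then (-1) ^ k else 0 := by
    rw [← neg_one_mul, ← map_one C, ← map_neg, mul_pow, ← map_pow, coeff_C_mul, coeff_X_pow,
      mul_ite, mul_one, mul_zero]
  have hsum := hasSum_coeff_mobiusComp (norm_zero.trans_lt one_pos) hF j
  simp only [mobiusSeries_zero, hcoeff, mul_ite, mul_zero] at hsum
  have hsingle := hasSum_ite_eq j (coeff j F * (-1) ^ j)
  refine hsum.unique (hsingle.congr_fun fun k => ?_)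
  rcases eq_or_ne k j with rfl | hkj
  · rw [if_pos rfl]
  · rw [if_neg hkj, if_neg hkj.symm]

lemma mobiusCompBound_zero (b : ℕ → ℝ) : MobiusCompBound 0 b 1 := fun F M hF hM => by
  rw [one_mul]
  intro n
  simp only [coeff_mobiusComp_zero hF, norm_mul, norm_pow, norm_neg, norm_one, one_pow, mul_one]
  exact hM n

lemma isRegularWeight_betaSeq {w : ℕ → ℝ} (hpos : ∀ k, 1 ≤ k → 0 < w k)
    (hlim : Tendsto w atTop (𝓝 1)) : IsRegularWeight (betaSeq w) := by
  have hβ (k : ℕ) : 0 < betaSeq w k := Finset.prod_pos fun j hj => hpos j (Finset.mem_Icc.1 hj).1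
  refine ⟨hβ, ((tendsto_add_atTop_iff_nat 1).2 hlim).congr fun k => ?_⟩
  rw [eq_div_iff (hβ k).ne', betaSeq, betaSeq, Finset.prod_Icc_succ_top k.succ_pos, mul_comm]

theorem isDoubling_of_mzSimMphi (hβ : IsRegularWeight β) (ha : ‖a‖ < 1) (ha₀ : a ≠ 0)
    (h : MzSimMphi β (mobius a)) : IsDoubling fun k => β k ^ 2 := by
  have hb := hβ.pow 2
  obtain ⟨K, G, H, hGH⟩ := exists_isMobiusIntertwiner hβ ha h
  obtain ⟨M, hG, hH⟩ := hGH.exists_norm_diskEval_le hb ha ha₀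
  obtain ⟨δ, C, hδ, -, hcomp⟩ := hGH.exists_le_mul_of_abs_sub_le hb ha ha₀ hG hH
  exact hb.isDoubling hδ hcomp

theorem mzSimMphi_inv (hβ : IsRegularWeight β) (ha : ‖a‖ < 1)
    (h : MzSimMphi β (mobius a)) : MzSimMphi (fun k => (β k)⁻¹) (mobius a) := by
  have hpos (k : ℕ) : 0 < (β k ^ 2)⁻¹ := inv_pos.2 (pow_pos (hβ.pos k) 2)
  suffices hbound : ∃ K, 0 ≤ K ∧ MobiusCompBound a (fun k => (β k ^ 2)⁻¹) K by
    obtain ⟨K, hK, hbound⟩ := hbound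
    exact mzSimMphi_of_mobiusCompBound hβ.inv ha hK (by simpa only [inv_pow] using hbound)
  rcases eq_or_ne a 0 with rfl | ha₀
  · exact ⟨1, zero_le_one, mobiusCompBound_zero _⟩
  · exact ((isDoubling_of_mzSimMphi hβ ha ha₀ h).inv (hβ.pow 2).pos).exists_mobiusCompBound hpos ha

end WeightedHardy

/-- Let `H²_β` come from a weight sequence `w_k → 1` and let
`φ_{z₀}` be a Möbius transformation, `z₀ ∈ 𝔻`.  Then `M_z ∼ M_{φ_{z₀}}` on `H²_β`
if and only if `M_z ∼ M_{φ_{z₀}}` on `H²_{β⁻¹}`. -/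
theorem statement12 (w : ℕ → ℝ) (hpos : ∀ k, 1 ≤ k → 0 < w k)
    (hlim : Tendsto w atTop (nhds 1))
    (z₀ : ℂ) (hz₀ : z₀ ∈ unitDisk) :
    MzSimMphi (betaSeq w) (mobius z₀) ↔
      MzSimMphi (fun k => (betaSeq w k)⁻¹) (mobius z₀) := by
  have hβ := WeightedHardy.isRegularWeight_betaSeq hpos hlim
  have ha : ‖z₀‖ < 1 := mem_ball_zero_iff.1 hz₀
  refine ⟨WeightedHardy.mzSimMphi_inv hβ ha, fun h => ?_⟩
  simpa only [inv_inv] using WeightedHardy.mzSimMphi_inv hβ.inv ha h
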